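/- Let M be a triangulated Möbius strip with no interior vertices (every vertex lies on the boundary). If xy is an interior edge of M that separates M into two pieces (a cut edge), then exactly one of the two pieces is a disc and the other is again a Möbius strip. -/

import Mathlib

open Finset

/-- An abstract simplicial complex on vertex type `V`, given by its finite set of
(nonempty) faces, closed under taking nonempty subsets. -/
structure SComplex (V : Type) [DecidableEq V] where
  faces : Finset (Finset V)
  nonempty_of_mem : ∀ σ ∈ faces, σ.Nonempty
  down_closed : ∀ σ ∈ faces, ∀ τ ⊆ σ, τ.Nonempty → τ ∈ faces

namespace SComplex

variable {V : Type} [DecidableEq V]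

/-- the number `f_k` of `k`-dimensional faces -/
def fNum (K : SComplex V) (k : ℕ) : ℕ := (K.faces.filter fun σ => σ.card = k + 1).card

/-- `g₂` of a `d`-dimensional complex: `f₁ - (d+1) f₀ + C(d+2,2)` -/
def g2 (K : SComplex V) (d : ℕ) : ℤ :=
  (K.fNum 1 : ℤ) - (d + 1) * (K.fNum 0 : ℤ) + (Nat.choose (d + 2) 2 : ℤ)

/-- the vertex set of a complex -/
def vertices (K : SComplex V) : Finset V := K.faces.sup id

/-- the link of a face `σ` -/
def link (K : SComplex V) (σ : Finset V) : SComplex V where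
  faces := K.faces.filter fun τ => σ ∩ τ = ∅ ∧ σ ∪ τ ∈ K.faces
  nonempty_of_mem τ hτ := K.nonempty_of_mem τ (mem_filter.mp hτ).1
  down_closed := by
    intro τ hτ ρ hρ hne
    rw [mem_filter] at hτ ⊢
    obtain ⟨h1, h2, h3⟩ := hτ
    refine ⟨K.down_closed τ h1 ρ hρ hne, subset_empty.mp ?_, 
      K.down_closed _ h3 _ (union_subset_union Subset.rfl hρ) ?_⟩
    · exact h2 ▸ inter_subset_inter Subset.rfl hρ
    · obtain ⟨w, hw⟩ := hne
      exact ⟨w, mem_union_right _ hw⟩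

/-- the (closed) star of a vertex `t` -/
def star (K : SComplex V) (t : V) : SComplex V where
  faces := K.faces.filter fun τ => insert t τ ∈ K.faces
  nonempty_of_mem τ hτ := K.nonempty_of_mem τ (mem_filter.mp hτ).1
  down_closed := by
    intro τ hτ ρ hρ hne
    rw [mem_filter] at hτ ⊢
    exact ⟨K.down_closed τ hτ.1 ρ hρ hne,
      K.down_closed _ hτ.2 _ (insert_subset_insert _ hρ) (insert_nonempty _ _)⟩

/-- connectivity of a complex (through edges) -/
def Connected (K : SComplex V) : Prop :=
  ∀ u ∈ K.vertices, ∀ w ∈ K.vertices,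
    Relation.ReflTransGen (fun a b => ({a, b} : Finset V) ∈ K.faces) u w

/-- purity: every face is contained in a `d`-dimensional face -/
def Pure (K : SComplex V) (d : ℕ) : Prop :=
  ∀ σ ∈ K.faces, ∃ τ ∈ K.faces, σ ⊆ τ ∧ τ.card = d + 1

/-- strong connectivity through facets sharing `(d-1)`-faces -/
def StronglyConnected (K : SComplex V) (d : ℕ) : Prop :=
  ∀ σ ∈ K.faces, ∀ τ ∈ K.faces, σ.card = d + 1 → τ.card = d + 1 →
    Relation.ReflTransGen
      (fun a b => a ∈ K.faces ∧ b ∈ K.faces ∧ a.card = d + 1 ∧ b.card = d + 1 ∧ (a ∩ b).card = d)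
      σ τ

/-- `K` is a `d`-dimensional pseudomanifold -/
def IsPseudomanifold (K : SComplex V) (d : ℕ) : Prop :=
  K.Pure d ∧
  (∀ σ ∈ K.faces, σ.card = d →
    (K.faces.filter fun τ => σ ⊆ τ ∧ τ.card = d + 1).card = 2) ∧
  K.StronglyConnected d

/-- `K` is a `d`-dimensional normal pseudomanifold: a pseudomanifold all of whose
faces of codimension at least two have connected links -/
def IsNormal (K : SComplex V) (d : ℕ) : Prop :=
  K.IsPseudomanifold d ∧ ∀ σ ∈ K.faces, σ.card + 1 ≤ d → (K.link σ).Connected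

/-- the geometric realization of `K`, inside `V → ℝ` -/
def realization (K : SComplex V) [Fintype V] : Set (V → ℝ) :=
  {f | ∃ σ ∈ K.faces, (∀ v, v ∉ σ → f v = 0) ∧ (∀ v, 0 ≤ f v) ∧ (∑ v, f v) = 1}

end SComplex

/-- the standard 2-sphere -/
noncomputable def Sphere2 : Set (EuclideanSpace ℝ (Fin 3)) := Metric.sphere 0 1

/-- the real projective plane, as the quotient of the 2-sphere by the antipodal map -/
def RealProjPlane : Type :=
  Quot fun a b : Sphere2 => (a : EuclideanSpace ℝ (Fin 3)) = -(b : EuclideanSpace ℝ (Fin 3))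

noncomputable instance : TopologicalSpace RealProjPlane := by unfold RealProjPlane; infer_instance

noncomputable def UnitSquare : Set (ℝ × ℝ) := Set.Icc 0 1 ×ˢ Set.Icc 0 1

/-- the Möbius band, as a quotient of the unit square -/
def MobiusBand : Type :=
  Quot fun a b : UnitSquare =>
    (a : ℝ × ℝ).1 = 0 ∧ (b : ℝ × ℝ).1 = 1 ∧ (b : ℝ × ℝ).2 = 1 - (a : ℝ × ℝ).2

noncomputable instance : TopologicalSpace MobiusBand := by unfold MobiusBand; infer_instance

noncomputable def ClosedDisc : Set (ℝ × ℝ) := Metric.closedBall 0 1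

namespace SComplex

variable {V : Type} [DecidableEq V] [Fintype V]

/-- the carrier of `K` is a 2-sphere -/
def IsSphere2 (K : SComplex V) : Prop := Nonempty (K.realization ≃ₜ Sphere2)

/-- the carrier of `K` is a real projective plane -/
def IsRP2 (K : SComplex V) : Prop := Nonempty (K.realization ≃ₜ RealProjPlane)

/-- `K` is a triangulated Möbius strip -/
def IsMobius (K : SComplex V) : Prop := Nonempty (K.realization ≃ₜ MobiusBand)

/-- `K` is a triangulated disc -/
def IsDisc (K : SComplex V) : Prop := Nonempty (K.realization ≃ₜ ClosedDisc)

end SComplex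

namespace SComplex

variable {V : Type} [DecidableEq V]

/-- `K` is the boundary complex of a `(d+1)`-simplex: all proper nonempty subsets
of a set of `d+2` vertices. -/
def IsBoundarySimplex (K : SComplex V) (d : ℕ) : Prop :=
  ∃ W : Finset V, W.card = d + 2 ∧ K.faces = (W.powerset.erase W).erase ∅

/-- `Δ'` is obtained from the `d`-dimensional complex `Δ` by a single facet
subdivision: remove a facet `σ`, add a new vertex `w`, and add all faces
`w ⋆ τ` for proper faces `τ` of `σ`. -/
def FacetSubdivision (Δ Δ' : SComplex V) (d : ℕ) : Prop :=
  ∃ σ ∈ Δ.faces, ∃ w : V, σ.card = d + 1 ∧ (∀ τ ∈ Δ.faces, w ∉ τ) ∧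
    Δ'.faces = (Δ.faces.erase σ) ∪ (σ.powerset.erase σ).image (insert w)

/-- a stacked `d`-sphere: obtained from the boundary complex of a `(d+1)`-simplex
by a finite sequence of facet subdivisions. -/
def IsStackedSphere (K : SComplex V) (d : ℕ) : Prop :=
  ∃ K₀ : SComplex V, K₀.IsBoundarySimplex d ∧
    Relation.ReflTransGen (fun A B => FacetSubdivision A B d) K₀ K

end SComplex

namespace SComplex

variable {V : Type} [DecidableEq V]

/-- an interior edge of a 2-complex: an edge contained in exactly two triangles -/
def InteriorEdge (M : SComplex V) (e : Finset V) : Prop :=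
  e ∈ M.faces ∧ e.card = 2 ∧ (M.faces.filter fun τ => τ.card = 3 ∧ e ⊆ τ).card = 2

/-- every vertex of `M` lies on the boundary, i.e. on an edge contained in exactly
one triangle -/
def NoInteriorVertices (M : SComplex V) : Prop :=
  ∀ v ∈ M.vertices, ∃ e ∈ M.faces, v ∈ e ∧ e.card = 2 ∧
    (M.faces.filter fun τ => τ.card = 3 ∧ e ⊆ τ).card = 1

/-- `M₁, M₂` are the two pieces obtained by cutting `M` along the separating
interior edge `e`: two subcomplexes meeting exactly along `e`, whose union is `M`,
each containing a triangle -/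
def SeparationAlong (M M₁ M₂ : SComplex V) (e : Finset V) : Prop :=
  M₁.faces ∪ M₂.faces = M.faces ∧
  M₁.faces ∩ M₂.faces = e.powerset.filter (· ≠ ∅) ∧
  (∃ τ ∈ M₁.faces, τ.card = 3) ∧ (∃ τ ∈ M₂.faces, τ.card = 3)

/-- the interior edge `e` separates `M` into two pieces -/
def Separates (M : SComplex V) (e : Finset V) : Prop :=
  ∃ M₁ M₂ : SComplex V, M.SeparationAlong M₁ M₂ e

end SComplex

/-!
Call a space log-acyclic if every nowhere vanishing continuous complex function on it is an
exponential. The Möbius band is not log-acyclic, but any two such functions on it are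
multiplicatively dependent modulo exponentials. Functions on the two pieces extend to `M` through
the retractions onto the edge `xy`, so two functions without logarithms, one on each piece, would be
independent on `M`; hence one of the pieces is log-acyclic.

Connectedness and logarithms on small punctured neighbourhoods are local invariants of the Möbius
band. They force the links of the vertices of `M` to be connected and every edge to lie in at most
two triangles. As each vertex lies on the boundary, a cycle in the dual graph of a piece would run
around a hole and produce a function without logarithm. The dual graph of the log-acyclic piece is
therefore a tree, and a leaf different from the triangle at `xy` is an ear of `M`, which can be
squeezed into the neighbouring triangle without changing the homeomorphism type. Repeating this
reduces the piece to a single triangle and finally `M` to the other piece.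
-/

/-! ### Continuous logarithms -/

open scoped Real

section ContinuousLogarithms

variable {X Y : Type*} [TopologicalSpace X] [TopologicalSpace Y]

/-- `f` is a unit of the ring of continuous functions `S → ℂ`. -/
def UnitOn (f : X → ℂ) (S : Set X) : Prop := ContinuousOn f S ∧ ∀ x ∈ S, f x ≠ 0

/-- `f` has a continuous logarithm on `S`. -/
def HasLogOn (f : X → ℂ) (S : Set X) : Prop :=
  ∃ h : X → ℂ, ContinuousOn h S ∧ ∀ x ∈ S, f x = Complex.exp (h x)

/-- Every unit on `S` has a continuous logarithm. Units modulo exponentials form the first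
integral cohomology group of a nice space, so this is a working form of `H¹(S; ℤ) = 0`. -/
def LogAcyclic (S : Set X) : Prop := ∀ f : X → ℂ, UnitOn f S → HasLogOn f S

/-- Any two units on `S` are multiplicatively dependent modulo exponentials: a working form of
`rank H¹(S; ℤ) ≤ 1`. -/
def LogRankLEOne (S : Set X) : Prop :=
  ∀ f g : X → ℂ, UnitOn f S → UnitOn g S →
    ∃ a b : ℤ, (a ≠ 0 ∨ b ≠ 0) ∧ HasLogOn (fun x => f x ^ a * g x ^ b) S

lemma UnitOn.mono {f : X → ℂ} {S T : Set X} (hf : UnitOn f S) (h : T ⊆ S) : UnitOn f T :=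
  ⟨hf.1.mono h, fun _ hx => hf.2 _ (h hx)⟩

lemma UnitOn.comp {f : Y → ℂ} {F : X → Y} {S : Set X} {T : Set Y} (hf : UnitOn f T)
    (hF : ContinuousOn F S) (hST : Set.MapsTo F S T) : UnitOn (f ∘ F) S :=
  ⟨hf.1.comp hF hST, fun _ hx => hf.2 _ (hST hx)⟩

lemma HasLogOn.mono {f : X → ℂ} {S T : Set X} (hf : HasLogOn f S) (h : T ⊆ S) : HasLogOn f T :=
  let ⟨k, hk, hk'⟩ := hf
  ⟨k, hk.mono h, fun x hx => hk' x (h hx)⟩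

lemma HasLogOn.congr {f g : X → ℂ} {S : Set X} (hf : HasLogOn f S) (h : Set.EqOn g f S) :
    HasLogOn g S :=
  let ⟨k, hk, hk'⟩ := hf
  ⟨k, hk, fun x hx => (h hx).trans (hk' x hx)⟩

lemma HasLogOn.comp {f : Y → ℂ} {F : X → Y} {S : Set X} {T : Set Y} (hf : HasLogOn f T)
    (hF : ContinuousOn F S) (hST : Set.MapsTo F S T) : HasLogOn (f ∘ F) S :=
  let ⟨k, hk, hk'⟩ := hf
  ⟨k ∘ F, hk.comp hF hST, fun _ hx => hk' _ (hST hx)⟩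

lemma HasLogOn.mul {f g : X → ℂ} {S : Set X} (hf : HasLogOn f S) (hg : HasLogOn g S) :
    HasLogOn (fun x => f x * g x) S :=
  let ⟨h, hh, hh'⟩ := hf
  let ⟨k, hk, hk'⟩ := hg
  ⟨fun x => h x + k x, hh.add hk, fun x hx => by simp only [hh' x hx, hk' x hx, Complex.exp_add]⟩

lemma HasLogOn.zpow {f : X → ℂ} {S : Set X} (hf : HasLogOn f S) (a : ℤ) :
    HasLogOn (fun x => f x ^ a) S :=
  let ⟨h, hh, hh'⟩ := hf
  ⟨fun x => a * h x, hh.const_mul _, fun x hx => by simp only [hh' x hx, Complex.exp_int_mul]⟩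

lemma LogAcyclic.of_leftInvOn {S : Set X} {T : Set Y} (h : LogAcyclic S) {F : X → Y} {G : Y → X}
    (hF : ContinuousOn F S) (hG : ContinuousOn G T) (hST : Set.MapsTo F S T)
    (hTS : Set.MapsTo G T S) (hFG : Set.LeftInvOn F G T) : LogAcyclic T := fun f hf =>
  ((h _ (hf.comp hF hST)).comp hG hTS).congr fun y hy => by simp [hFG hy]

lemma LogRankLEOne.of_leftInvOn {S : Set X} {T : Set Y} (h : LogRankLEOne S) {F : X → Y}
    {G : Y → X} (hF : ContinuousOn F S) (hG : ContinuousOn G T) (hST : Set.MapsTo F S T)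
    (hTS : Set.MapsTo G T S) (hFG : Set.LeftInvOn F G T) : LogRankLEOne T := by
  intro f g hf hg
  obtain ⟨a, b, hab, hlog⟩ := h _ _ (hf.comp hF hST) (hg.comp hF hST)
  exact ⟨a, b, hab, (hlog.comp hG hTS).congr fun y hy => by simp [hFG hy]⟩

lemma exists_int_sub_eq_of_exp_eq {S : Set X} (hS : IsPreconnected S) {h k : X → ℂ}
    (hh : ContinuousOn h S) (hk : ContinuousOn k S)
    (he : ∀ x ∈ S, Complex.exp (h x) = Complex.exp (k x)) :
    ∃ n : ℤ, ∀ x ∈ S, h x = k x + n * (2 * π * Complex.I) := by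
  rcases S.eq_empty_or_nonempty with rfl | ⟨x₀, hx₀⟩
  · exact ⟨0, by simp⟩
  obtain ⟨n, hn⟩ := Complex.exp_eq_exp_iff_exists_int.1 (he x₀ hx₀)
  refine ⟨n, Complex.isCoveringMap_exp.eqOn_of_comp_eqOn hS hh (hk.add continuousOn_const)
    (fun x hx => Subtype.ext ?_) hx₀ hn⟩
  simpa [Complex.exp_add, Complex.exp_int_mul_two_pi_mul_I] using he x hx

lemma not_hasLogOn_of_loop {f : X → ℂ} {S : Set X} {T : Set Y} (hT : IsPreconnected T) {γ : Y → X}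
    (hγ : ContinuousOn γ T) (hγS : Set.MapsTo γ T S) {ℓ : Y → ℂ} (hℓ : ContinuousOn ℓ T)
    (hfℓ : ∀ y ∈ T, f (γ y) = Complex.exp (ℓ y)) {a b : Y} (ha : a ∈ T) (hb : b ∈ T)
    (hab : γ a = γ b) (hne : ℓ a ≠ ℓ b) : ¬ HasLogOn f S := by
  rintro ⟨h, hh, hfh⟩
  obtain ⟨n, hn⟩ := exists_int_sub_eq_of_exp_eq hT hℓ (hh.comp hγ hγS) fun y hy => by
    rw [← hfℓ y hy, Function.comp, hfh _ (hγS hy)]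
  exact hne (by rw [hn a ha, hn b hb, Function.comp, Function.comp, hab])

lemma exists_continuousOn_eqOn_eqOn {S A B : Set X} (hA : IsClosed A) (hB : IsClosed B)
    (hS : S ⊆ A ∪ B) {u v : X → Y} (hu : ContinuousOn u (S ∩ A)) (hv : ContinuousOn v (S ∩ B))
    (huv : Set.EqOn u v (S ∩ A ∩ B)) :
    ∃ w : X → Y, ContinuousOn w S ∧ Set.EqOn w u (S ∩ A) ∧ Set.EqOn w v (S ∩ B) := by
  classical
  have hwA : Set.EqOn (A.piecewise u v) u (S ∩ A) := fun x hx => A.piecewise_eq_of_mem _ _ hx.2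
  have hwB : Set.EqOn (A.piecewise u v) v (S ∩ B) := fun x hx => by
    by_cases hxA : x ∈ A
    · rw [A.piecewise_eq_of_mem _ _ hxA, huv ⟨⟨hx.1, hxA⟩, hx.2⟩]
    · exact A.piecewise_eq_of_notMem _ _ hxA
  have within : ∀ C, IsClosed C → ContinuousOn (A.piecewise u v) (S ∩ C) → ∀ x,
      x ∈ S → ContinuousWithinAt (A.piecewise u v) (S ∩ C) x := fun C hC hcont x hx => by
    by_cases hxC : x ∈ C
    · exact hcont x ⟨hx, hxC⟩
    · exact continuousWithinAt_of_notMem_closure fun h =>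
        hxC (hC.closure_subset_iff.2 Set.inter_subset_right h)
  refine ⟨_, fun x hx => ?_, hwA, hwB⟩
  have hunion := (within A hA (hu.congr hwA) x hx).union (within B hB (hv.congr hwB) x hx)
  rwa [← Set.inter_union_distrib_left, Set.inter_eq_left.2 hS] at hunion

lemma hasLogOn_of_exp_eqOn_closed_union {S A B : Set X} (hA : IsClosed A) (hB : IsClosed B)
    (hS : S ⊆ A ∪ B) {f u v : X → ℂ} (hu : ContinuousOn u (S ∩ A)) (hv : ContinuousOn v (S ∩ B))
    (hfu : ∀ x ∈ S ∩ A, f x = Complex.exp (u x)) (hfv : ∀ x ∈ S ∩ B, f x = Complex.exp (v x))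
    (n : ℤ) (huv : ∀ x ∈ S ∩ A ∩ B, u x = v x + n * (2 * π * Complex.I)) : HasLogOn f S := by
  obtain ⟨w, hw, hwA, hwB⟩ := exists_continuousOn_eqOn_eqOn hA hB hS hu
    (hv.add (continuousOn_const (c := n * (2 * π * Complex.I)))) huv
  refine ⟨w, hw, fun x hx => ?_⟩
  rcases hS hx with h | h
  · rw [hwA ⟨hx, h⟩, hfu x ⟨hx, h⟩]
  · rw [hwB ⟨hx, h⟩, hfv x ⟨hx, h⟩, Pi.add_apply, Complex.exp_add,
      Complex.exp_int_mul_two_pi_mul_I, mul_one]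

lemma LogAcyclic.closed_union {S A B : Set X} (hA : IsClosed A) (hB : IsClosed B) (hS : S ⊆ A ∪ B)
    (hSA : LogAcyclic (S ∩ A)) (hSB : LogAcyclic (S ∩ B)) (hconn : IsPreconnected (S ∩ A ∩ B)) :
    LogAcyclic S := by
  intro f hf
  obtain ⟨u, hu, hfu⟩ := hSA f (hf.mono Set.inter_subset_left)
  obtain ⟨v, hv, hfv⟩ := hSB f (hf.mono Set.inter_subset_left)
  have hsub : S ∩ A ∩ B ⊆ S ∩ B := fun x hx => ⟨hx.1.1, hx.2⟩
  obtain ⟨n, hn⟩ := exists_int_sub_eq_of_exp_eq hconn (hu.mono Set.inter_subset_left)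
    (hv.mono hsub) fun x hx => by rw [← hfu x hx.1, ← hfv x (hsub hx)]
  exact hasLogOn_of_exp_eqOn_closed_union hA hB hS hu hv hfu hfv n hn

lemma exists_logs_of_closed_union {S A B C₁ C₂ : Set X} (hSA : LogAcyclic (S ∩ A))
    (hSB : LogAcyclic (S ∩ B)) (hC : S ∩ A ∩ B = C₁ ∪ C₂) (hC₁ : IsPreconnected C₁)
    (hC₂ : IsPreconnected C₂) {f : X → ℂ} (hf : UnitOn f S) :
    ∃ u v : X → ℂ, ∃ n m : ℤ, ContinuousOn u (S ∩ A) ∧ ContinuousOn v (S ∩ B) ∧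
      (∀ x ∈ S ∩ A, f x = Complex.exp (u x)) ∧ (∀ x ∈ S ∩ B, f x = Complex.exp (v x)) ∧
      (∀ x ∈ C₁, u x = v x + n * (2 * π * Complex.I)) ∧
      ∀ x ∈ C₂, u x = v x + m * (2 * π * Complex.I) := by
  obtain ⟨u, hu, hfu⟩ := hSA f (hf.mono Set.inter_subset_left)
  obtain ⟨v, hv, hfv⟩ := hSB f (hf.mono Set.inter_subset_left)
  have differ : ∀ C ⊆ S ∩ A ∩ B, IsPreconnected C →
      ∃ n : ℤ, ∀ x ∈ C, u x = v x + n * (2 * π * Complex.I) := fun C hCS hconn => by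
    have hCA : C ⊆ S ∩ A := hCS.trans Set.inter_subset_left
    have hCB : C ⊆ S ∩ B := fun x hx => ⟨(hCA hx).1, (hCS hx).2⟩
    exact exists_int_sub_eq_of_exp_eq hconn (hu.mono hCA) (hv.mono hCB) fun x hx => by
      rw [← hfu x (hCA hx), ← hfv x (hCB hx)]
  obtain ⟨n, hn⟩ := differ C₁ (hC ▸ Set.subset_union_left) hC₁
  obtain ⟨m, hm⟩ := differ C₂ (hC ▸ Set.subset_union_right) hC₂
  exact ⟨u, v, n, m, hu, hv, hfu, hfv, hn, hm⟩

lemma exists_int_relation (p q : ℤ) : ∃ a b : ℤ, (a ≠ 0 ∨ b ≠ 0) ∧ a * p + b * q = 0 := by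
  by_cases h : p = 0
  · exact ⟨1, 0, by simp, by simp [h]⟩
  · exact ⟨q, -p, by simp [h], by ring⟩

/-- Only the difference of the two jumps of a logarithm matters, so two units are always
dependent. -/
lemma LogRankLEOne.closed_union {S A B C₁ C₂ : Set X} (hA : IsClosed A) (hB : IsClosed B)
    (hS : S ⊆ A ∪ B) (hSA : LogAcyclic (S ∩ A)) (hSB : LogAcyclic (S ∩ B))
    (hC : S ∩ A ∩ B = C₁ ∪ C₂) (hC₁ : IsPreconnected C₁) (hC₂ : IsPreconnected C₂) :
    LogRankLEOne S := by
  intro f g hf hg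
  obtain ⟨u, v, n, m, hu, hv, hfu, hfv, hn, hm⟩ :=
    exists_logs_of_closed_union hSA hSB hC hC₁ hC₂ hf
  obtain ⟨u', v', n', m', hu', hv', hgu', hgv', hn', hm'⟩ :=
    exists_logs_of_closed_union hSA hSB hC hC₁ hC₂ hg
  obtain ⟨a, b, hab, hrel⟩ := exists_int_relation (n - m) (n' - m')
  have hrelC : (a : ℂ) * (n - m) + b * (n' - m') = 0 := mod_cast hrel
  refine ⟨a, b, hab, hasLogOn_of_exp_eqOn_closed_union hA hB hS
    (u := fun x => a * u x + b * u' x) (v := fun x => a * v x + b * v' x)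
    ((hu.const_mul _).add (hu'.const_mul _)) ((hv.const_mul _).add (hv'.const_mul _))
    (fun x hx => ?_) (fun x hx => ?_) (a * n + b * n') fun x hx => ?_⟩
  · rw [hfu x hx, hgu' x hx, Complex.exp_add, Complex.exp_int_mul, Complex.exp_int_mul]
  · rw [hfv x hx, hgv' x hx, Complex.exp_add, Complex.exp_int_mul, Complex.exp_int_mul]
  · push_cast
    rcases hC ▸ hx with h | h
    · rw [hn x h, hn' x h]
      ring
    · rw [hm x h, hm' x h]
      linear_combination -(2 * π * Complex.I) * hrelC

lemma isTotallyDisconnected_setOf_zpow_eq_one {a : ℤ} (ha : a ≠ 0) :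
    IsTotallyDisconnected {z : ℂ | z ^ a = 1} := by
  refine Set.Countable.isTotallyDisconnected ((Set.countable_range fun n : ℤ =>
    Complex.exp (n * (2 * π * Complex.I) / a)).mono fun z (hz : z ^ a = 1) => ?_)
  have hz₀ : z ≠ 0 := by
    rintro rfl
    exact zero_ne_one (α := ℂ) ((zero_zpow a ha).symm.trans hz)
  rw [← Complex.exp_log hz₀, ← Complex.exp_int_mul, Complex.exp_eq_one_iff] at hz
  obtain ⟨n, hn⟩ := hz
  exact ⟨n, by simp only [← hn, mul_div_cancel_left₀ _ (Int.cast_ne_zero.2 ha : (a : ℂ) ≠ 0),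
    Complex.exp_log hz₀]⟩

lemma HasLogOn.of_zpow {S : Set X} (hS : IsPreconnected S) {f : X → ℂ} (hf : ContinuousOn f S)
    {a : ℤ} (ha : a ≠ 0) (hfa : HasLogOn (fun x => f x ^ a) S) : HasLogOn f S := by
  rcases S.eq_empty_or_nonempty with rfl | ⟨x₀, hx₀⟩
  · exact ⟨0, continuousOn_empty _, by simp⟩
  obtain ⟨h, hh, hfh⟩ := hfa
  have hk : ContinuousOn (fun x => h x / a) S := hh.div_const _
  have hroot : ∀ x ∈ S, (f x * Complex.exp (-(h x / a))) ^ a = 1 := fun x hx => by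
    have hfx : f x ^ a = Complex.exp (h x) := hfh x hx
    rw [mul_zpow, hfx, ← Complex.exp_int_mul, ← Complex.exp_add, mul_neg,
      mul_div_cancel₀ _ (Int.cast_ne_zero.2 ha), add_neg_cancel, Complex.exp_zero]
  have hconst : ∀ x ∈ S,
      f x * Complex.exp (-(h x / a)) = f x₀ * Complex.exp (-(h x₀ / a)) := fun x hx =>
    isTotallyDisconnected_setOf_zpow_eq_one ha _ (Set.image_subset_iff.2 hroot)
      (hS.image _ (hf.mul hk.neg.cexp)) ⟨x, hx, rfl⟩ ⟨x₀, hx₀, rfl⟩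
  have hne : f x₀ * Complex.exp (-(h x₀ / a)) ≠ 0 := fun h0 =>
    zero_ne_one (α := ℂ) ((zero_zpow a ha).symm.trans (h0 ▸ hroot x₀ hx₀))
  refine ⟨fun x => Complex.log (f x₀ * Complex.exp (-(h x₀ / a))) + h x / a,
    continuousOn_const.add hk, fun x hx => ?_⟩
  rw [Complex.exp_add, Complex.exp_log hne, ← hconst x hx, mul_assoc, ← Complex.exp_add,
    neg_add_cancel, Complex.exp_zero, mul_one]

variable {E : Type*} [AddCommGroup E] [Module ℝ E] [TopologicalSpace E] [IsTopologicalAddGroup E]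
  [ContinuousSMul ℝ E]

/-- Lift the radial contraction of `f` through the covering `exp`. -/
lemma LogAcyclic.of_starConvex {S : Set E} {q : E} (hS : StarConvex ℝ q S) (hq : q ∈ S) :
    LogAcyclic S := by
  classical
  intro f hf
  have hmem : ∀ (t : unitInterval) (x : S), q + (t : ℝ) • ((x : E) - q) ∈ S := fun t x =>
    hS.add_smul_sub_mem x.2 t.2.1 t.2.2
  let H : C(unitInterval × S, {z : ℂ // z ≠ 0}) :=
    ⟨fun p => ⟨f (q + (p.1 : ℝ) • ((p.2 : E) - q)), hf.2 _ (hmem _ _)⟩,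
      (hf.1.comp_continuous (f := fun p : unitInterval × S => q + (p.1 : ℝ) • ((p.2 : E) - q))
        (by fun_prop) fun p => hmem p.1 p.2).subtype_mk _⟩
  have H_zero : ∀ x, H (0, x) = ⟨Complex.exp (Complex.log (f q)), Complex.exp_ne_zero _⟩ :=
    fun x => Subtype.ext (by simp [H, Complex.exp_log (hf.2 q hq)])
  let K := Complex.isCoveringMap_exp.liftHomotopy H (.const S (Complex.log (f q))) H_zero
  have hK : ∀ x : S, f x = Complex.exp (K (1, x)) := fun x => by
    simpa [H] using (congrArg Subtype.val (congrFun
      (Complex.isCoveringMap_exp.liftHomotopy_lifts H _ H_zero) (1, x))).symm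
  refine ⟨fun x => if hx : x ∈ S then K (1, ⟨x, hx⟩) else 0, ?_, fun x hx => ?_⟩
  · rw [continuousOn_iff_continuous_domRestrict]
    exact (K.continuous.comp (by fun_prop : Continuous fun x : S => ((1 : unitInterval), x))).congr
      fun x => by simp [Set.domRestrict]
  · simpa [hx] using hK ⟨x, hx⟩

lemma LogAcyclic.of_convex {S : Set E} (hS : Convex ℝ S) : LogAcyclic S := by
  rcases S.eq_empty_or_nonempty with rfl | ⟨q, hq⟩
  · exact fun f _ => ⟨0, continuousOn_empty _, by simp⟩
  · exact .of_starConvex (hS.starConvex hq) hq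

end ContinuousLogarithms

/-! ### Punctured neighbourhoods -/

section PuncturedNeighbourhoods

variable {X Y : Type*} [TopologicalSpace X] [TopologicalSpace Y]

/-- `P` holds for arbitrarily small punctured neighbourhoods of `p` in `S`. Together with
`IsPreconnected`, `LogAcyclic` and `LogRankLEOne` this gives local topological invariants of the
point `p`. -/
def PuncturedLocally (P : Set X → Prop) (S : Set X) (p : X) : Prop :=
  ∀ U ∈ nhdsWithin p S, ∃ W ∈ nhdsWithin p S, W ⊆ U ∧ P (W \ {p})

lemma PuncturedLocally.congr_nhdsWithin {P : Set X → Prop} {S T : Set X} {p : X}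
    (hST : nhdsWithin p S = nhdsWithin p T) (h : PuncturedLocally P S p) :
    PuncturedLocally P T p := by
  unfold PuncturedLocally at h ⊢
  rwa [← hST]

/-- Invariance of a property of sets under topological embeddings of the ambient space. -/
def EmbeddingInvariant (P : ∀ ⦃X : Type⦄ [TopologicalSpace X], Set X → Prop) : Prop :=
  ∀ ⦃X Y : Type⦄ [TopologicalSpace X] [TopologicalSpace Y] [Nonempty Y] ⦃j : Y → X⦄,
    Topology.IsEmbedding j → ∀ W, P (j '' W) ↔ P W

lemma puncturedLocally_image_iff {X Y : Type} [TopologicalSpace X] [TopologicalSpace Y]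
    {P : ∀ ⦃X : Type⦄ [TopologicalSpace X], Set X → Prop} (hP : EmbeddingInvariant P)
    {j : Y → X} (hj : Topology.IsEmbedding j) {S : Set Y} {y : Y} :
    PuncturedLocally (@P X _) (j '' S) (j y) ↔ PuncturedLocally (@P Y _) S y := by
  have : Nonempty Y := ⟨y⟩
  have image_diff : ∀ W, j '' W \ {j y} = j '' (W \ {y}) := fun W => by
    rw [Set.image_sdiff hj.injective, Set.image_singleton]
  simp only [PuncturedLocally, ← hj.isInducing.map_nhdsWithin_eq]
  refine ⟨fun h U hU => ?_, fun h U hU => ?_⟩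
  · obtain ⟨W, hW, hWU, hQ⟩ := h _ (Filter.image_mem_map hU)
    have hWj : j '' (j ⁻¹' W) = W :=
      Set.image_preimage_eq_of_subset (hWU.trans (Set.image_subset_range _ _))
    refine ⟨j ⁻¹' W, hW, ?_, (hP hj _).1 ?_⟩
    · rwa [← Set.image_subset_image_iff hj.injective, hWj]
    · rwa [← image_diff, hWj]
  · obtain ⟨W, hW, hWU, hPW⟩ := h _ hU
    exact ⟨j '' W, Filter.image_mem_map hW, Set.image_subset_iff.2 hWU,
      image_diff W ▸ (hP hj _).2 hPW⟩

lemma continuousOn_invFun_range [Nonempty Y] {j : Y → X} (hj : Topology.IsEmbedding j) :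
    ContinuousOn (Function.invFun j) (Set.range j) :=
  hj.isInducing.continuousOn_iff.2 (continuousOn_id.congr fun _ hx => Function.invFun_eq hx)

lemma embeddingInvariant_isPreconnected : EmbeddingInvariant fun _ _ => IsPreconnected :=
  fun _ _ _ _ _ _ hj _ => hj.isInducing.isPreconnected_image

lemma EmbeddingInvariant.of_leftInvOn {P : ∀ ⦃X : Type⦄ [TopologicalSpace X], Set X → Prop}
    (hP : ∀ ⦃X Y : Type⦄ [TopologicalSpace X] [TopologicalSpace Y] {S : Set X} {T : Set Y}, P S →
      ∀ {F : X → Y} {G : Y → X}, ContinuousOn F S → ContinuousOn G T → Set.MapsTo F S T →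
        Set.MapsTo G T S → Set.LeftInvOn F G T → P T) : EmbeddingInvariant P := by
  intro X Y _ _ _ j hj S
  have hinv := Function.leftInverse_invFun hj.injective
  have hcont := (continuousOn_invFun_range hj).mono (Set.image_subset_range j S)
  have hmaps : Set.MapsTo (Function.invFun j) (j '' S) S := by
    rintro _ ⟨y, hy, rfl⟩
    rwa [hinv y]
  exact ⟨fun h => hP h hcont hj.continuous.continuousOn hmaps (Set.mapsTo_image j S)
      (hinv.leftInvOn S), fun h => hP h hj.continuous.continuousOn hcont (Set.mapsTo_image j S)
      hmaps (hinv.leftInvOn S).rightInvOn_image⟩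

lemma embeddingInvariant_logAcyclic : EmbeddingInvariant fun _ _ => LogAcyclic :=
  .of_leftInvOn fun _ _ _ _ _ _ h _ _ => h.of_leftInvOn

lemma embeddingInvariant_logRankLEOne : EmbeddingInvariant fun _ _ => LogRankLEOne :=
  .of_leftInvOn fun _ _ _ _ _ _ h _ _ => h.of_leftInvOn

lemma EmbeddingInvariant.of_homeomorph {P : ∀ ⦃X : Type⦄ [TopologicalSpace X], Set X → Prop}
    (hP : EmbeddingInvariant P) {X Y : Type} [TopologicalSpace X] [TopologicalSpace Y] {S : Set X}
    {T : Set Y} [Nonempty S] (e : S ≃ₜ T) (h : P S) : P T := by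
  have h_univ : P (Set.univ : Set S) := by
    rwa [← hP .subtypeVal, Set.image_univ, Subtype.range_coe]
  rwa [← hP (Topology.IsEmbedding.subtypeVal.comp e.isEmbedding), Set.image_univ,
    e.surjective.range_comp, Subtype.range_coe] at h_univ

end PuncturedNeighbourhoods

section PuncturedConvex

variable {E : Type*} [AddCommGroup E] [Module ℝ E]

lemma starConvex_diff_singleton_inter_le {W : Set E} (hW : Convex ℝ W) {p q : E}
    (l : E →ₗ[ℝ] ℝ) (hq : q ∈ W) (hpq : l p < l q) :
    StarConvex ℝ q ((W \ {p}) ∩ {x | l p ≤ l x}) := by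
  rintro y ⟨⟨hyW, hyp⟩, hly : l p ≤ l y⟩ a b ha hb hab
  have hl : l (a • q + b • y) - l p = a * (l q - l p) + b * (l y - l p) := by
    simp only [map_add, map_smul, smul_eq_mul]
    linear_combination (l p) * hab
  refine ⟨⟨hW hq hyW ha hb hab, fun (h : a • q + b • y = p) => ?_⟩,
    (sub_nonneg.1 ?_ : l p ≤ l (a • q + b • y))⟩
  · rcases ha.eq_or_lt with rfl | ha
    · obtain rfl : b = 1 := by linarith
      exact hyp (by simpa using h)
    · rw [h, sub_self] at hl
      nlinarith [mul_pos ha (sub_pos.2 hpq), mul_nonneg hb (sub_nonneg.2 hly)]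
  · rw [hl]
    exact add_nonneg (mul_nonneg ha (sub_pos.2 hpq).le) (mul_nonneg hb (sub_nonneg.2 hly))

lemma starConvex_diff_singleton_inter_ge {W : Set E} (hW : Convex ℝ W) {p q : E}
    (l : E →ₗ[ℝ] ℝ) (hq : q ∈ W) (hqp : l q < l p) :
    StarConvex ℝ q ((W \ {p}) ∩ {x | l x ≤ l p}) := by
  simpa using starConvex_diff_singleton_inter_le hW (p := p) (-l) hq (by simpa using hqp)

variable [TopologicalSpace E] [IsTopologicalAddGroup E] [ContinuousSMul ℝ E]

lemma isPreconnected_diff_singleton_of_convex {W : Set E} (hW : Convex ℝ W) {p q q' r : E}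
    (l : E →ₗ[ℝ] ℝ) (hq : q ∈ W) (hpq : l p < l q) (hq' : q' ∈ W) (hqp' : l q' < l p)
    (hr : r ∈ W) (hrp : r ≠ p) (hlr : l r = l p) : IsPreconnected (W \ {p}) := by
  have hupper := (starConvex_diff_singleton_inter_le hW (p := p) l hq hpq).isPathConnected
    ⟨⟨hq, fun h => hpq.ne' (congrArg l h)⟩, hpq.le⟩
  have hlower := (starConvex_diff_singleton_inter_ge hW (p := p) l hq' hqp').isPathConnected
    ⟨⟨hq', fun h => hqp'.ne (congrArg l h)⟩, hqp'.le⟩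
  have hunion := IsPreconnected.union r (by exact ⟨⟨hr, hrp⟩, hlr.ge⟩)
    (by exact ⟨⟨hr, hrp⟩, hlr.le⟩) hupper.isConnected.isPreconnected
    hlower.isConnected.isPreconnected
  have hcover : W \ {p} ⊆ {x | l p ≤ l x} ∪ {x | l x ≤ l p} := fun x _ => le_total (l p) (l x)
  rwa [← Set.inter_union_distrib_left, Set.inter_eq_left.2 hcover] at hunion

variable {I J : Set ℝ} {p : ℝ × ℝ}

lemma isPreconnected_prod_diff_singleton (hI : Convex ℝ I) (hJ : Convex ℝ J) (hp : p.2 ∈ J)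
    (hI_lt : ∃ s ∈ I, s < p.1) (hI_gt : ∃ s ∈ I, p.1 < s) (hJ' : ∃ t ∈ J, t ≠ p.2) :
    IsPreconnected (I ×ˢ J \ {p}) := by
  obtain ⟨s, hs, hsp⟩ := hI_lt
  obtain ⟨s', hs', hsp'⟩ := hI_gt
  obtain ⟨t, ht, htp⟩ := hJ'
  exact isPreconnected_diff_singleton_of_convex (hI.prod hJ) (q := (s', p.2)) (q' := (s, p.2))
    (r := (p.1, t)) (LinearMap.fst ℝ ℝ ℝ) ⟨hs', hp⟩ hsp' ⟨hs, hp⟩ hsp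
    ⟨hI.ordConnected.out hs hs' ⟨hsp.le, hsp'.le⟩, ht⟩ (fun h => htp (congrArg Prod.snd h)) rfl

/-- Cut along the vertical line through `p`. -/
lemma logRankLEOne_prod_diff_singleton (hI : Convex ℝ I) (hJ : Convex ℝ J) (hp : p.2 ∈ J)
    (hI_lt : ∃ s ∈ I, s < p.1) (hI_gt : ∃ s ∈ I, p.1 < s) :
    LogRankLEOne (I ×ˢ J \ {p}) := by
  obtain ⟨s, hs, hsp⟩ := hI_lt
  obtain ⟨s', hs', hsp'⟩ := hI_gt
  have hpI : p.1 ∈ I := hI.ordConnected.out hs hs' ⟨hsp.le, hsp'.le⟩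
  have hW := hI.prod hJ
  have hright := LogAcyclic.of_starConvex
    (starConvex_diff_singleton_inter_le hW (p := p) (q := (s', p.2)) (LinearMap.fst ℝ ℝ ℝ)
      ⟨hs', hp⟩ hsp') ⟨⟨⟨hs', hp⟩, fun h => hsp'.ne' (congrArg Prod.fst h)⟩, hsp'.le⟩
  have hleft := LogAcyclic.of_starConvex
    (starConvex_diff_singleton_inter_ge hW (p := p) (q := (s, p.2)) (LinearMap.fst ℝ ℝ ℝ)
      ⟨hs, hp⟩ hsp) ⟨⟨⟨hs, hp⟩, fun h => hsp.ne (congrArg Prod.fst h)⟩, hsp.le⟩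
  have hcut : (I ×ˢ J \ {p}) ∩ {x | p.1 ≤ x.1} ∩ {x | x.1 ≤ p.1} =
      {p.1} ×ˢ (J ∩ Set.Ioi p.2) ∪ {p.1} ×ˢ (J ∩ Set.Iio p.2) := by
    ext ⟨x, y⟩
    obtain ⟨p₁, p₂⟩ := p
    rcases lt_trichotomy x p₁ with h | rfl | h
    · simp [h.not_ge, h.ne]
    · simp [hpI, ← and_or_left, or_comm, lt_or_lt_iff_ne]
    · simp [h.not_ge, h.ne']
  exact LogRankLEOne.closed_union (isClosed_le continuous_const continuous_fst)
    (isClosed_le continuous_fst continuous_const) (fun x _ => le_total p.1 x.1) hright hleft hcut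
    ((convex_singleton _).prod (hJ.inter (convex_Ioi _))).isPreconnected
    ((convex_singleton _).prod (hJ.inter (convex_Iio _))).isPreconnected

end PuncturedConvex

lemma not_puncturedLocally_logAcyclic_complex (p : ℂ) :
    ¬ PuncturedLocally LogAcyclic Set.univ p := fun h => by
  obtain ⟨W, hW, -, hlog⟩ := h _ Filter.univ_mem
  rw [nhdsWithin_univ] at hW
  obtain ⟨r, hr, hrW⟩ := Metric.nhds_basis_closedBall.mem_iff.1 hW
  refine not_hasLogOn_of_loop isPreconnected_univ (a := 0) (b := 2 * π) (γ := circleMap p r)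
    (S := W \ {p}) (ℓ := fun θ => Real.log r + θ * Complex.I) (by fun_prop)
    (fun θ _ => ⟨hrW (circleMap_mem_closedBall p hr.le θ), circleMap_ne_center hr.ne'⟩)
    (by fun_prop) (fun θ _ => ?_) trivial trivial (by simp [circleMap])
    (by simp [Real.pi_ne_zero])
    (hlog (fun z => z - p) ⟨by fun_prop, fun z hz => sub_ne_zero.2 hz.2⟩)
  rw [circleMap_sub_center, circleMap_zero, Complex.exp_add, ← Complex.ofReal_exp,
    Real.exp_log hr]

/-! ### The Möbius band -/

namespace MobiusBand

/-- The quotient map of the unit square, extended to the plane by clamping the coordinates. -/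
noncomputable def proj (x : ℝ × ℝ) : MobiusBand :=
  Quot.mk _ ⟨(Set.projIcc 0 1 zero_le_one x.1, Set.projIcc 0 1 zero_le_one x.2),
    Subtype.property _, Subtype.property _⟩

lemma isQuotientMap_mk :
    Topology.IsQuotientMap (Quot.mk _ : UnitSquare → MobiusBand) := isQuotientMap_quot_mk

lemma continuous_proj : Continuous proj :=
  isQuotientMap_mk.continuous.comp (by fun_prop)

lemma proj_of_mem {x : ℝ × ℝ} (hx : x ∈ UnitSquare) : proj x = Quot.mk _ ⟨x, hx⟩ := by
  simp only [proj, Set.projIcc_of_mem _ hx.1, Set.projIcc_of_mem _ hx.2]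
  rfl

lemma exists_proj_eq (p : MobiusBand) : ∃ x ∈ UnitSquare, proj x = p := by
  obtain ⟨x, rfl⟩ := isQuotientMap_mk.surjective p
  exact ⟨x, x.2, proj_of_mem x.2⟩

lemma proj_zero_eq {t : ℝ} (ht : t ∈ Set.Icc (0 : ℝ) 1) : proj (0, t) = proj (1, 1 - t) := by
  have ht' : 1 - t ∈ Set.Icc (0 : ℝ) 1 := by simpa [and_comm] using ht
  rw [proj_of_mem ⟨by simp, ht⟩, proj_of_mem ⟨by simp, ht'⟩]
  exact Quot.sound ⟨rfl, rfl, rfl⟩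

lemma exists_continuous_comp_proj {Z : Type*} [TopologicalSpace Z] {h : ℝ × ℝ → Z}
    (hc : ContinuousOn h UnitSquare) (hg : ∀ t ∈ Set.Icc (0 : ℝ) 1, h (0, t) = h (1, 1 - t)) :
    ∃ k : MobiusBand → Z, Continuous k ∧ ∀ x ∈ UnitSquare, k (proj x) = h x := by
  refine ⟨Quot.lift (fun x : UnitSquare => h x) ?_,
    isQuotientMap_mk.continuous_iff.2 (continuousOn_iff_continuous_domRestrict.1 hc),
    fun x hx => by rw [proj_of_mem hx]⟩
  rintro ⟨⟨s, t⟩, -, ht⟩ ⟨⟨s', t'⟩, -⟩ ⟨rfl : s = 0, rfl : s' = 1, rfl : t' = 1 - t⟩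
  exact hg t ht

lemma convex_unitSquare : Convex ℝ UnitSquare := (convex_Icc 0 1).prod (convex_Icc 0 1)

lemma isPreconnected_univ : IsPreconnected (Set.univ : Set MobiusBand) := by
  have himage : proj '' UnitSquare = Set.univ := Set.eq_univ_of_forall exists_proj_eq
  exact himage ▸ convex_unitSquare.isPreconnected.image _ continuous_proj.continuousOn

lemma not_logAcyclic_univ : ¬ LogAcyclic (Set.univ : Set MobiusBand) := fun h => by
  obtain ⟨f, hf, hf_proj⟩ := exists_continuous_comp_proj
    (h := fun x => Complex.exp (x.1 * (2 * π * Complex.I))) (by fun_prop)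
    (fun t _ => by simp [Complex.exp_two_pi_mul_I])
  have hf_ne : ∀ p, f p ≠ 0 := fun p => by
    obtain ⟨x, hx, rfl⟩ := exists_proj_eq p
    simp [hf_proj x hx]
  refine not_hasLogOn_of_loop isPreconnected_Icc (a := 0) (b := 1) (γ := fun t => proj (t, t))
    (ℓ := fun t => t * (2 * π * Complex.I)) (continuous_proj.comp (by fun_prop)).continuousOn
    (Set.mapsTo_univ _ _) (by fun_prop) (fun t ht => hf_proj (t, t) ⟨ht, ht⟩)
    (Set.left_mem_Icc.2 zero_le_one) (Set.right_mem_Icc.2 zero_le_one) ?_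
    (by simp [Real.pi_ne_zero]) (h f ⟨hf.continuousOn, fun p _ => hf_ne p⟩)
  simpa using proj_zero_eq (Set.left_mem_Icc.2 zero_le_one)

lemma exists_log_comp_proj {f : MobiusBand → ℂ} (hf : UnitOn f Set.univ) :
    ∃ h : ℝ × ℝ → ℂ, ContinuousOn h UnitSquare ∧
      (∀ x ∈ UnitSquare, f (proj x) = Complex.exp (h x)) ∧
      ∃ n : ℤ, ∀ t ∈ Set.Icc (0 : ℝ) 1, h (1, 1 - t) = h (0, t) + n * (2 * π * Complex.I) := by
  obtain ⟨h, hh, hfh⟩ := LogAcyclic.of_convex convex_unitSquare _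
    (hf.comp continuous_proj.continuousOn (Set.mapsTo_univ _ _))
  have hleft : Set.MapsTo (fun t : ℝ => ((0 : ℝ), t)) (Set.Icc 0 1) UnitSquare :=
    fun t ht => ⟨by simp, ht⟩
  have hright : Set.MapsTo (fun t : ℝ => ((1 : ℝ), 1 - t)) (Set.Icc 0 1) UnitSquare :=
    fun t ht => ⟨by simp, by simpa [and_comm] using ht⟩
  refine ⟨h, hh, hfh, exists_int_sub_eq_of_exp_eq isPreconnected_Icc
    (hh.comp (by fun_prop) hright) (hh.comp (by fun_prop) hleft) fun t ht => ?_⟩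
  simp only [Function.comp, ← hfh _ (hright ht), ← hfh _ (hleft ht), proj_zero_eq ht]

lemma logRankLEOne_univ : LogRankLEOne (Set.univ : Set MobiusBand) := by
  intro f g hf hg
  obtain ⟨h, hh, hfh, n, hn⟩ := exists_log_comp_proj hf
  obtain ⟨k, hk, hgk, m, hm⟩ := exists_log_comp_proj hg
  obtain ⟨a, b, hab, hrel⟩ := exists_int_relation n m
  have hrelC : (a : ℂ) * n + b * m = 0 := mod_cast hrel
  obtain ⟨w, hw, hw_proj⟩ := exists_continuous_comp_proj (h := fun x => a * h x + b * k x)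
    ((hh.const_mul _).add (hk.const_mul _)) fun t ht => by
      rw [hn t ht, hm t ht]
      linear_combination -(2 * π * Complex.I) * hrelC
  refine ⟨a, b, hab, w, hw.continuousOn, fun p _ => ?_⟩
  obtain ⟨x, hx, rfl⟩ := exists_proj_eq p
  simp only [hfh x hx, hgk x hx, hw_proj x hx, Complex.exp_add, Complex.exp_int_mul]

/-- The half turn along the core circle, in the coordinates of the square. -/
noncomputable def halfTurn (x : ℝ × ℝ) : MobiusBand :=
  if x.1 ≤ 1 / 2 then proj (x.1 + 1 / 2, x.2) else proj (x.1 - 1 / 2, 1 - x.2)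

lemma continuousOn_halfTurn : ContinuousOn halfTurn UnitSquare := by
  refine ContinuousOn.if ?_ (continuous_proj.comp (by fun_prop)).continuousOn
    (continuous_proj.comp (by fun_prop)).continuousOn
  rintro ⟨s, t⟩ ⟨⟨-, ht⟩, hs⟩
  obtain rfl : s = 1 / 2 := frontier_le_subset_eq continuous_fst continuous_const hs
  have ht' : 1 - t ∈ Set.Icc (0 : ℝ) 1 := by simpa [and_comm] using ht
  have hseam := proj_zero_eq ht'
  norm_num at hseam ⊢
  exact hseam.symm

lemma exists_homeomorph_proj_zero :
    ∃ ρ : MobiusBand ≃ₜ MobiusBand,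
      ∀ t ∈ Set.Icc (0 : ℝ) 1, ρ (proj (0, t)) = proj (1 / 2, t) := by
  obtain ⟨F, hF, hF_proj⟩ := exists_continuous_comp_proj continuousOn_halfTurn
    fun t _ => by norm_num [halfTurn]
  have twice : ∀ s t, (s, t) ∈ UnitSquare → F (F (proj (s, t))) = proj (s, 1 - t) := by
    rintro s t ⟨⟨hs₀ : 0 ≤ s, hs₁ : s ≤ 1⟩, ht : t ∈ Set.Icc 0 1⟩
    have ht' : 1 - t ∈ Set.Icc (0 : ℝ) 1 := by simpa [and_comm] using ht
    rw [hF_proj _ ⟨⟨hs₀, hs₁⟩, ht⟩]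
    simp only [halfTurn]
    split_ifs with hs
    · rw [hF_proj (s + 1 / 2, t) ⟨⟨by linarith, by linarith⟩, ht⟩]
      simp only [halfTurn]
      split_ifs with hs'
      · obtain rfl : s = 0 := by linarith
        norm_num [proj_zero_eq ht']
      · norm_num
    · rw [hF_proj (s - 1 / 2, 1 - t) ⟨⟨by linarith, by linarith⟩, ht'⟩, halfTurn,
        if_pos (by linarith)]
      norm_num
  have four : ∀ p, F (F (F (F p))) = p := fun p => by
    obtain ⟨⟨s, t⟩, hx, rfl⟩ := exists_proj_eq p
    rw [twice s t hx, twice s (1 - t) ⟨hx.1, by simpa [and_comm] using hx.2⟩, sub_sub_cancel]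
  refine ⟨⟨⟨F, F ∘ F ∘ F, four, four⟩, hF, hF.comp (hF.comp hF)⟩, fun t ht => ?_⟩
  change F _ = _
  norm_num [hF_proj (0, t) ⟨by simp, ht⟩, halfTurn]

/-- The part of the square away from the glued sides, on which `proj` is an open embedding. -/
def chart : Set (ℝ × ℝ) := Set.Ioo 0 1 ×ˢ Set.Icc 0 1

lemma chart_subset : chart ⊆ UnitSquare := Set.prod_mono Set.Ioo_subset_Icc_self subset_rfl

lemma eq_of_proj_eq {x y : ℝ × ℝ} (hx : x ∈ chart) (hy : y ∈ UnitSquare)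
    (h : proj x = proj y) : x = y := by
  let isX : MobiusBand → Prop := Quot.lift (fun a : UnitSquare => (a : ℝ × ℝ) = x) (by
    rintro a b ⟨ha, hb, -⟩
    refine propext ⟨fun h => ?_, fun h => ?_⟩
    · exact absurd (h ▸ ha) hx.1.1.ne'
    · exact absurd (h ▸ hb) hx.1.2.ne)
  have hxX : isX (proj x) := by rw [proj_of_mem (chart_subset hx)]
  rw [h, proj_of_mem hy] at hxX
  exact hxX.symm

lemma isOpenEmbedding_proj_chart : Topology.IsOpenEmbedding fun x : chart => proj x := by
  refine .of_continuous_injective_isOpenMap (continuous_proj.comp continuous_subtype_val)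
    (fun x y h => Subtype.ext (eq_of_proj_eq x.2 (chart_subset y.2) h)) ?_
  rintro _ ⟨U, hU, rfl⟩
  have hpre : (Quot.mk _ : UnitSquare → MobiusBand) ⁻¹'
      ((fun x : chart => proj x) '' (Subtype.val ⁻¹' U)) =
      {x : UnitSquare | x.1.1 ∈ Set.Ioo 0 1 ∧ x.1 ∈ U} := by
    ext ⟨x, hx⟩
    refine ⟨?_, fun ⟨hx₁, hxU⟩ => ⟨⟨x, hx₁, hx.2⟩, hxU, proj_of_mem hx⟩⟩
    rintro ⟨⟨y, hy⟩, hyU, hyx⟩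
    obtain rfl := eq_of_proj_eq hy hx (hyx.trans (proj_of_mem hx).symm)
    exact ⟨hy.1, hyU⟩
  refine isQuotientMap_mk.isOpen_preimage.1 (hpre ▸ ?_)
  exact (isOpen_Ioo.preimage (by fun_prop)).inter (hU.preimage continuous_subtype_val)

section LocalProperties

variable {P : ∀ ⦃X : Type⦄ [TopologicalSpace X], Set X → Prop}

lemma puncturedLocally_proj_iff (hP : EmbeddingInvariant P) {p : ℝ × ℝ} (hp : p ∈ chart) :
    PuncturedLocally (@P MobiusBand _) Set.univ (proj p) ↔
      PuncturedLocally (@P (ℝ × ℝ) _) chart p := by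
  have hplane := puncturedLocally_image_iff hP (.subtypeVal (p := (· ∈ chart)))
    (S := Set.univ) (y := ⟨p, hp⟩)
  have hband := puncturedLocally_image_iff hP isOpenEmbedding_proj_chart.isEmbedding
    (S := Set.univ) (y := ⟨p, hp⟩)
  rw [Set.image_univ, Subtype.range_coe] at hplane
  rw [Set.image_univ] at hband
  have hnhds := (isOpenEmbedding_proj_chart.isOpen_range.nhdsWithin_eq ⟨⟨p, hp⟩, rfl⟩).trans
    (nhdsWithin_univ _).symm
  exact ⟨fun h => hplane.2 (hband.1 (h.congr_nhdsWithin hnhds.symm)),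
    fun h => (hband.2 (hplane.1 h)).congr_nhdsWithin hnhds⟩

/-- The half turn moves the seam of the band into the chart. -/
lemma puncturedLocally_univ (hP : EmbeddingInvariant P)
    (h : ∀ p ∈ chart, PuncturedLocally (@P (ℝ × ℝ) _) chart p) (z : MobiusBand) :
    PuncturedLocally (@P MobiusBand _) Set.univ z := by
  obtain ⟨x, hx, rfl⟩ := exists_proj_eq z
  by_cases hc : x ∈ chart
  · exact (puncturedLocally_proj_iff hP hc).2 (h x hc)
  obtain ⟨t, ht, hseam⟩ : ∃ t ∈ Set.Icc (0 : ℝ) 1, proj x = proj (0, t) := by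
    obtain ⟨s, t⟩ := x
    rcases hx.1.1.eq_or_lt with h₀ | h₀
    · exact ⟨t, hx.2, by rw [← show (0 : ℝ) = s from h₀]⟩
    rcases hx.1.2.eq_or_lt with h₁ | h₁
    · have ht : 1 - t ∈ Set.Icc (0 : ℝ) 1 := by simpa [and_comm] using hx.2
      exact ⟨1 - t, ht, by rw [proj_zero_eq ht, sub_sub_cancel, show s = 1 from h₁]⟩
    · exact absurd ⟨⟨h₀, h₁⟩, hx.2⟩ hc
  obtain ⟨ρ, hρ⟩ := exists_homeomorph_proj_zero
  have hmem : ((1 / 2, t) : ℝ × ℝ) ∈ chart := ⟨⟨by norm_num, by norm_num⟩, ht⟩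
  rw [hseam, ← puncturedLocally_image_iff hP ρ.isEmbedding, Set.image_univ, ρ.range_coe, hρ t ht]
  exact (puncturedLocally_proj_iff hP hmem).2 (h _ hmem)

lemma exists_convex_prod_mem_nhdsWithin_chart {p : ℝ × ℝ} (hp : p ∈ chart) {U : Set (ℝ × ℝ)}
    (hU : U ∈ nhdsWithin p chart) :
    ∃ I J : Set ℝ, I ×ˢ J ∈ nhdsWithin p chart ∧ I ×ˢ J ⊆ U ∧ Convex ℝ I ∧ Convex ℝ J ∧ p.2 ∈ J ∧
      (∃ s ∈ I, s < p.1) ∧ (∃ s ∈ I, p.1 < s) ∧ ∃ t ∈ J, t ≠ p.2 := by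
  obtain ⟨r, hr, hrU⟩ := Metric.mem_nhdsWithin_iff.1 hU
  have hball : Metric.ball p r ∩ chart =
      (Metric.ball p.1 r ∩ Set.Ioo 0 1) ×ˢ (Metric.ball p.2 r ∩ Set.Icc 0 1) := by
    rw [chart, ← ball_prod_same, Set.prod_inter_prod]
  have hI : Metric.ball p.1 r ∩ Set.Ioo 0 1 ∈ nhds p.1 :=
    Filter.inter_mem (Metric.ball_mem_nhds _ hr) (isOpen_Ioo.mem_nhds hp.1)
  have hJ : ∃ t ∈ Metric.ball p.2 r ∩ Set.Icc 0 1, t ≠ p.2 :=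
    accPt_iff_nhds.1 ((isPreconnected_Icc.preperfect_of_nontrivial
      ⟨0, by simp, 1, by simp, zero_ne_one⟩) p.2 hp.2) _ (Metric.ball_mem_nhds _ hr)
  refine ⟨_, _, hball ▸ Filter.inter_mem (mem_nhdsWithin_of_mem_nhds (Metric.ball_mem_nhds _ hr))
    self_mem_nhdsWithin, hball ▸ hrU, (convex_ball _ _).inter (convex_Ioo 0 1),
    (convex_ball _ _).inter (convex_Icc 0 1), ⟨Metric.mem_ball_self hr, hp.2⟩, ?_, ?_, hJ⟩
  · exact Filter.nonempty_of_mem (Filter.inter_mem (mem_nhdsWithin_of_mem_nhds hI)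
      (self_mem_nhdsWithin (s := Set.Iio p.1)))
  · exact Filter.nonempty_of_mem (Filter.inter_mem (mem_nhdsWithin_of_mem_nhds hI)
      (self_mem_nhdsWithin (s := Set.Ioi p.1)))

lemma puncturedLocally_isPreconnected (z : MobiusBand) :
    PuncturedLocally IsPreconnected Set.univ z :=
  puncturedLocally_univ embeddingInvariant_isPreconnected (fun p hp U hU => by
    obtain ⟨I, J, hIJ, hIJU, hI, hJ, hpJ, hlt, hgt, hne⟩ :=
      exists_convex_prod_mem_nhdsWithin_chart hp hU
    exact ⟨_, hIJ, hIJU, isPreconnected_prod_diff_singleton hI hJ hpJ hlt hgt hne⟩) z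

lemma puncturedLocally_logRankLEOne (z : MobiusBand) :
    PuncturedLocally LogRankLEOne Set.univ z :=
  puncturedLocally_univ embeddingInvariant_logRankLEOne (fun p hp U hU => by
    obtain ⟨I, J, hIJ, hIJU, hI, hJ, hpJ, hlt, hgt, -⟩ :=
      exists_convex_prod_mem_nhdsWithin_chart hp hU
    exact ⟨_, hIJ, hIJU, logRankLEOne_prod_diff_singleton hI hJ hpJ hlt hgt⟩) z

end LocalProperties

lemma not_puncturedLocally_logAcyclic_proj {p : ℝ × ℝ} (hp : p ∈ Set.Ioo 0 1 ×ˢ Set.Ioo 0 1) :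
    ¬ PuncturedLocally LogAcyclic Set.univ (proj p) := by
  have hchart : p ∈ chart := ⟨hp.1, Set.Ioo_subset_Icc_self hp.2⟩
  have hnhds : nhdsWithin p chart = nhdsWithin p Set.univ := by
    rw [nhdsWithin_univ, nhdsWithin_eq_nhds]
    exact Filter.mem_of_superset ((isOpen_Ioo.prod isOpen_Ioo).mem_nhds hp)
      (Set.prod_mono subset_rfl Set.Ioo_subset_Icc_self)
  have hplane := puncturedLocally_image_iff embeddingInvariant_logAcyclic
    Complex.equivRealProdCLM.symm.toHomeomorph.isEmbedding (S := Set.univ) (y := p)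
  rw [Set.image_univ, Homeomorph.range_coe] at hplane
  rw [puncturedLocally_proj_iff embeddingInvariant_logAcyclic hchart]
  exact fun h => not_puncturedLocally_logAcyclic_complex _
    (hplane.2 (h.congr_nhdsWithin hnhds))

lemma exists_not_puncturedLocally_logAcyclic {O : Set MobiusBand} (hO : IsOpen O)
    (hne : O.Nonempty) : ∃ z ∈ O, ¬ PuncturedLocally LogAcyclic Set.univ z := by
  obtain ⟨z, hz⟩ := hne
  obtain ⟨x, hx, rfl⟩ := exists_proj_eq z
  have hclosure : UnitSquare = closure (Set.Ioo (0 : ℝ) 1 ×ˢ Set.Ioo (0 : ℝ) 1) := by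
    rw [closure_prod_eq, closure_Ioo zero_ne_one, UnitSquare]
  obtain ⟨y, hyO, hy⟩ := mem_closure_iff.1 (hclosure ▸ hx) _ (hO.preimage continuous_proj) hz
  exact ⟨proj y, hyO, not_puncturedLocally_logAcyclic_proj hy⟩

end MobiusBand

/-- The topological properties of the Möbius band from which the combinatorics of its
triangulations is derived. -/
structure MobiusLike {E : Type} [TopologicalSpace E] (S : Set E) : Prop where
  logRankLEOne : LogRankLEOne S
  not_logAcyclic : ¬ LogAcyclic S
  isPreconnected : IsPreconnected S
  puncturedLocally_isPreconnected : ∀ p ∈ S, PuncturedLocally IsPreconnected S p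
  puncturedLocally_logRankLEOne : ∀ p ∈ S, PuncturedLocally LogRankLEOne S p
  exists_not_puncturedLocally_logAcyclic : ∀ O : Set E, IsOpen O → (O ∩ S).Nonempty →
    ∃ z ∈ O ∩ S, ¬ PuncturedLocally LogAcyclic S z

lemma mobiusLike_range {E : Type} [TopologicalSpace E] {j : MobiusBand → E}
    (hj : Topology.IsEmbedding j) : MobiusLike (Set.range j) := by
  have : Nonempty MobiusBand := ⟨MobiusBand.proj 0⟩
  rw [← Set.image_univ]
  refine ⟨(embeddingInvariant_logRankLEOne hj _).2 MobiusBand.logRankLEOne_univ,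
    fun h => MobiusBand.not_logAcyclic_univ ((embeddingInvariant_logAcyclic hj _).1 h),
    MobiusBand.isPreconnected_univ.image _ hj.continuous.continuousOn, ?_, ?_, ?_⟩
  · rintro _ ⟨z, -, rfl⟩
    exact (puncturedLocally_image_iff embeddingInvariant_isPreconnected hj).2
      (MobiusBand.puncturedLocally_isPreconnected z)
  · rintro _ ⟨z, -, rfl⟩
    exact (puncturedLocally_image_iff embeddingInvariant_logRankLEOne hj).2
      (MobiusBand.puncturedLocally_logRankLEOne z)
  · rintro O hO ⟨_, hz, z, -, rfl⟩
    obtain ⟨w, hwO, hw⟩ := MobiusBand.exists_not_puncturedLocally_logAcyclic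
      (hO.preimage hj.continuous) ⟨z, hz⟩
    exact ⟨j w, ⟨hwO, w, trivial, rfl⟩,
      fun h => hw ((puncturedLocally_image_iff embeddingInvariant_logAcyclic hj).1 h)⟩

lemma SComplex.IsMobius.mobiusLike {V : Type} [DecidableEq V] [Fintype V] {K : SComplex V}
    (h : K.IsMobius) : MobiusLike K.realization := by
  obtain ⟨φ⟩ := h
  have hrange := mobiusLike_range (Topology.IsEmbedding.subtypeVal.comp φ.symm.isEmbedding)
  rwa [Set.range_comp, φ.symm.range_coe, Set.image_univ, Subtype.range_coe] at hrange

/-! ### Simplices and realizations -/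

namespace SComplex

section Simplices

variable {V : Type} [Fintype V]

/-- The closed simplex spanned by the vertices in `σ`, in barycentric coordinates. -/
def closedSimplex (σ : Finset V) : Set (V → ℝ) :=
  {p | (∀ v, v ∉ σ → p v = 0) ∧ p ∈ stdSimplex ℝ V}

/-- The relative interior of `closedSimplex σ`. -/
def openSimplex (σ : Finset V) : Set (V → ℝ) :=
  {p | ∀ v ∈ σ, 0 < p v} ∩ closedSimplex σ

lemma isClosed_closedSimplex (σ : Finset V) : IsClosed (closedSimplex σ) := by
  have hface : IsClosed {p : V → ℝ | ∀ v, v ∉ σ → p v = 0} := by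
    simp only [Set.ofPred_forall]
    exact isClosed_iInter fun v => isClosed_iInter fun _ =>
      isClosed_eq (continuous_apply v) continuous_const
  exact hface.inter (isClosed_stdSimplex ℝ V)

lemma convex_closedSimplex (σ : Finset V) : Convex ℝ (closedSimplex σ) := by
  refine Convex.inter (fun p hp q hq a b _ _ _ v hv => ?_) (convex_stdSimplex ℝ V)
  simp [hp v hv, hq v hv]

omit [Fintype V] in
lemma isOpen_setOf_forall_pos (σ : Finset V) : IsOpen {p : V → ℝ | ∀ v ∈ σ, 0 < p v} := by
  simp only [Set.ofPred_forall]
  exact isOpen_biInter_finset fun v _ => isOpen_lt continuous_const (continuous_apply v)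

lemma convex_openSimplex (σ : Finset V) : Convex ℝ (openSimplex σ) := by
  refine Convex.inter ?_ (convex_closedSimplex σ)
  simp only [Set.ofPred_forall]
  exact convex_iInter₂ fun v _ => convex_halfSpace_gt (LinearMap.proj v).isLinear 0

lemma nonempty_openSimplex {σ : Finset V} (hσ : σ.Nonempty) : (openSimplex σ).Nonempty := by
  have hcard : (0 : ℝ) < #σ := by exact_mod_cast hσ.card_pos
  classical
  refine ⟨fun v => if v ∈ σ then (#σ : ℝ)⁻¹ else 0, fun v hv => by simpa [hv],
    fun v hv => if_neg hv, fun v => ?_, ?_⟩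
  · dsimp only
    split_ifs <;> positivity
  · rw [sum_ite_mem, univ_inter, sum_const, nsmul_eq_mul, mul_inv_cancel₀ hcard.ne']

lemma exists_mem_openSimplex_shift {σ : Finset V} {z : V → ℝ} (hz : z ∈ openSimplex σ)
    {O : Set (V → ℝ)} (hO : O ∈ nhds z) {u w : V} (hu : u ∈ σ) (hw : w ∈ σ) (huw : u ≠ w) :
    ∃ q ∈ O ∩ openSimplex σ, z u < q u ∧ q w < z w ∧ ∀ t, t ≠ u → t ≠ w → q t = z t := by
  classical
  obtain ⟨hpos, hout, -, hsum⟩ := hz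
  let c (ε : ℝ) : V → ℝ := z + ε • (Pi.single u 1 - Pi.single w 1)
  have hcu (ε) : c ε u = z u + ε := by simp [c, huw]
  have hcw (ε) : c ε w = z w - ε := by simp [c, huw.symm, sub_eq_add_neg]
  have hct (ε t) (htu : t ≠ u) (htw : t ≠ w) : c ε t = z t := by simp [c, htu, htw]
  have hc : Continuous c := by fun_prop
  have hev : ∀ᶠ ε in nhds 0, c ε ∈ O ∩ {p | ∀ v ∈ σ, 0 < p v} :=
    hc.continuousAt.preimage_mem_nhds <| by
      simpa [c] using Filter.inter_mem hO ((isOpen_setOf_forall_pos σ).mem_nhds hpos)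
  obtain ⟨ε, ⟨hεO, hεpos⟩, hε : 0 < ε⟩ :=
    ((hev.filter_mono nhdsWithin_le_nhds).and (self_mem_nhdsWithin (s := Set.Ioi 0))).exists
  have hεout : ∀ v, v ∉ σ → c ε v = 0 := fun v hv => by
    rw [hct ε v (by rintro rfl; exact hv hu) (by rintro rfl; exact hv hw), hout v hv]
  refine ⟨c ε, ⟨hεO, hεpos, hεout, fun v => ?_, by simp [c, sum_add_distrib, ← mul_sum, hsum]⟩,
    by rw [hcu]; linarith, by rw [hcw]; linarith, hct ε⟩
  by_cases hv : v ∈ σ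
  · exact (hεpos v hv).le
  · exact (hεout v hv).ge

lemma logAcyclic_openSimplex_diff_singleton {σ : Finset V} (hσ : 4 ≤ #σ) {z : V → ℝ}
    (hz : z ∈ openSimplex σ) {B : Set (V → ℝ)} (hB : Convex ℝ B) (hBz : B ∈ nhds z) :
    LogAcyclic ((B ∩ openSimplex σ) \ {z}) := by
  classical
  obtain ⟨τ, hτσ, hτ⟩ := exists_subset_card_eq hσ
  obtain ⟨v, u, w, t, hvu, hvw, hvt, huw, hut, hwt, rfl⟩ := card_eq_four.1 hτ
  simp only [insert_subset_iff, singleton_subset_iff] at hτσ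
  obtain ⟨hv, hu, hw, ht⟩ := hτσ
  have hW := hB.inter (convex_openSimplex σ)
  have shift {a b : V} (ha : a ∈ σ) (hb : b ∈ σ) (hab : a ≠ b) :=
    exists_mem_openSimplex_shift hz hBz ha hb hab
  let l (a : V) : (V → ℝ) →ₗ[ℝ] ℝ := LinearMap.proj a
  have hl (a : V) : Continuous (l a) := continuous_apply a
  obtain ⟨q₁, hq₁, hvq₁, -, -⟩ := shift hv hw hvw
  obtain ⟨q₂, hq₂, -, hvq₂, -⟩ := shift hw hv hvw.symm
  refine LogAcyclic.closed_union (A := {x | l v z ≤ l v x}) (B := {x | l v x ≤ l v z})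
    (isClosed_le continuous_const (hl v)) (isClosed_le (hl v) continuous_const)
    (fun x _ => le_total (l v z) (l v x))
    (.of_starConvex (starConvex_diff_singleton_inter_le hW (l v) hq₁ hvq₁)
      ⟨⟨hq₁, by rintro rfl; exact lt_irrefl _ hvq₁⟩, hvq₁.le⟩)
    (.of_starConvex (starConvex_diff_singleton_inter_ge hW (l v) hq₂ hvq₂)
      ⟨⟨hq₂, by rintro rfl; exact lt_irrefl _ hvq₂⟩, hvq₂.le⟩) ?_
  have hslice : ((B ∩ openSimplex σ) \ {z}) ∩ {x | l v z ≤ l v x} ∩ {x | l v x ≤ l v z} =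
      ((B ∩ openSimplex σ) ∩ {x | l v x = l v z}) \ {z} := by
    ext x
    simp only [Set.mem_inter_iff, Set.mem_sdiff, Set.mem_ofPred_eq, le_antisymm_iff]
    tauto
  obtain ⟨q₃, hq₃, huq₃, -, hq₃'⟩ := shift hu hw huw
  obtain ⟨q₄, hq₄, -, huq₄, hq₄'⟩ := shift hw hu huw.symm
  obtain ⟨q₅, hq₅, hwq₅, -, hq₅'⟩ := shift hw ht hwt
  rw [hslice]
  exact isPreconnected_diff_singleton_of_convex
    (hW.inter (convex_hyperplane (l v).isLinear _)) (l u)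
    ⟨hq₃, hq₃' v hvu hvw⟩ huq₃ ⟨hq₄, hq₄' v hvw hvu⟩ huq₄ ⟨hq₅, hq₅' v hvw hvt⟩
    (by rintro rfl; exact lt_irrefl _ hwq₅) (hq₅' u huw hut)

/-- The vertices with nonzero barycentric coordinate. -/
noncomputable def supp (p : V → ℝ) : Finset V := {v | p v ≠ 0}

lemma mem_supp {p : V → ℝ} {v : V} : v ∈ supp p ↔ p v ≠ 0 := by
  simp [supp]

lemma mem_closedSimplex_iff {σ : Finset V} {p : V → ℝ} :
    p ∈ closedSimplex σ ↔ supp p ⊆ σ ∧ p ∈ stdSimplex ℝ V := by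
  refine and_congr_left fun _ => forall_congr' fun v => ?_
  rw [mem_supp, not_imp_comm]

lemma supp_nonempty {p : V → ℝ} (hp : p ∈ stdSimplex ℝ V) : (supp p).Nonempty := by
  obtain ⟨v, -, hv⟩ := exists_ne_zero_of_sum_ne_zero (hp.2.trans_ne one_ne_zero)
  exact ⟨v, mem_supp.2 hv⟩

lemma single_mem_closedSimplex [DecidableEq V] {v : V} {σ : Finset V} (hv : v ∈ σ) :
    Pi.single v 1 ∈ closedSimplex σ :=
  ⟨fun _ hw => Pi.single_eq_of_ne (by rintro rfl; exact hw hv) 1, single_mem_stdSimplex ℝ v⟩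

end Simplices

variable {V : Type} [DecidableEq V] [Fintype V] {K : SComplex V}

lemma mem_realization_iff {p : V → ℝ} :
    p ∈ K.realization ↔ supp p ∈ K.faces ∧ p ∈ stdSimplex ℝ V := by
  constructor
  · rintro ⟨σ, hσ, hp⟩
    obtain ⟨hsupp, hp⟩ := mem_closedSimplex_iff.1 hp
    exact ⟨K.down_closed σ hσ _ hsupp (supp_nonempty hp), hp⟩
  · rintro ⟨hsupp, hp⟩
    exact ⟨supp p, hsupp, mem_closedSimplex_iff.2 ⟨subset_rfl, hp⟩⟩

lemma closedSimplex_subset_realization {σ : Finset V} (hσ : σ ∈ K.faces) :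
    closedSimplex σ ⊆ K.realization :=
  fun _ hp => ⟨σ, hσ, hp⟩

lemma single_mem_realization {v : V} (hv : {v} ∈ K.faces) : Pi.single v 1 ∈ K.realization :=
  closedSimplex_subset_realization hv (single_mem_closedSimplex (mem_singleton_self v))

lemma isClosed_realization (K : SComplex V) : IsClosed K.realization := by
  have hunion : K.realization = ⋃ σ ∈ K.faces, closedSimplex σ := by
    ext p
    simp only [Set.mem_iUnion, exists_prop]
    rfl
  rw [hunion]
  exact isClosed_biUnion_finset fun σ _ => isClosed_closedSimplex σ

lemma mem_faces_of_forall_ne_zero {p : V → ℝ} (hp : p ∈ K.realization) {σ : Finset V}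
    (hσ : σ.Nonempty) (h : ∀ v ∈ σ, p v ≠ 0) : σ ∈ K.faces :=
  K.down_closed _ (mem_realization_iff.1 hp).1 _ (fun v hv => mem_supp.2 (h v hv)) hσ

lemma setOf_forall_pos_inter_realization_of_maximal {σ : Finset V}
    (hσ : Maximal (· ∈ K.faces) σ) :
    {p | ∀ v ∈ σ, 0 < p v} ∩ K.realization = openSimplex σ := by
  refine Set.Subset.antisymm (fun p ⟨hpos, hp⟩ => ⟨hpos, ?_⟩)
    (Set.inter_subset_inter_right _ (closedSimplex_subset_realization hσ.1))
  obtain ⟨hface, hp⟩ := mem_realization_iff.1 hp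
  have hle : σ ⊆ supp p := fun v hv => mem_supp.2 (hpos v hv).ne'
  exact mem_closedSimplex_iff.2 ⟨hσ.2 hface hle, hp⟩

lemma card_le_three_of_mobiusLike (h : MobiusLike K.realization) {σ : Finset V}
    (hσ : σ ∈ K.faces) : #σ ≤ 3 := by
  by_contra! hcard
  obtain ⟨τ, hle, hτ⟩ := K.faces.exists_le_maximal hσ
  have hO := isOpen_setOf_forall_pos τ
  have hOK := setOf_forall_pos_inter_realization_of_maximal hτ
  obtain ⟨z, hz, hnot⟩ := h.exists_not_puncturedLocally_logAcyclic _ hO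
    (hOK ▸ nonempty_openSimplex (K.nonempty_of_mem τ hτ.1))
  have hzτ : z ∈ openSimplex τ := hOK ▸ hz
  refine hnot fun U hU => ?_
  obtain ⟨r, hr, hrU⟩ := Metric.mem_nhdsWithin_iff.1 hU
  have hball := Metric.ball_mem_nhds z hr
  refine ⟨Metric.ball z r ∩ openSimplex τ, ?_, ?_, logAcyclic_openSimplex_diff_singleton
    (hcard.trans_le (card_le_card hle)) hzτ (convex_ball z r) hball⟩
  · rw [← hOK]
    exact Filter.inter_mem (mem_nhdsWithin_of_mem_nhds hball)
      (Filter.inter_mem (mem_nhdsWithin_of_mem_nhds (hO.mem_nhds hz.1)) self_mem_nhdsWithin)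
  · rw [← hOK]
    exact fun x hx => hrU ⟨hx.1, hx.2.2⟩

/-- A set of vertices that no face meets only partially has mass `0` or `1` at each point of the
realization, so it cannot separate a connected complex. -/
lemma mem_of_isPreconnected_realization (hK : IsPreconnected K.realization) {A : Finset V}
    (hA : ∀ u ∈ A, ∀ v, {u, v} ∈ K.faces → v ∈ A) {u v : V} (hu : u ∈ A) (huK : {u} ∈ K.faces)
    (hvK : {v} ∈ K.faces) : v ∈ A := by
  by_contra hv
  have hmass : Continuous fun p : V → ℝ => ∑ x ∈ A, p x := by fun_prop
  obtain ⟨p, hp, hpA : ∑ x ∈ A, p x = 1 / 2⟩ :=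
    hK.intermediate_value (single_mem_realization hvK) (single_mem_realization huK)
      hmass.continuousOn (show (1 / 2 : ℝ) ∈ _ by
        simp only [sum_pi_single', hv, hu, if_false, if_true]
        norm_num)
  obtain ⟨hface, -, hsum⟩ := mem_realization_iff.1 hp
  obtain ⟨a, haA, ha⟩ := exists_ne_zero_of_sum_ne_zero (hpA.trans_ne (by norm_num))
  have houtside : ∀ x, x ∉ A → p x = 0 := fun x hx => by
    by_contra hpx
    refine hx (hA a haA x (K.down_closed _ hface _ ?_ (insert_nonempty a _)))
    simp [insert_subset_iff, mem_supp, ha, hpx]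
  rw [sum_subset (subset_univ A) fun x _ hx => houtside x hx, hsum] at hpA
  norm_num at hpA

end SComplex

namespace SComplex

variable {V : Type} [DecidableEq V] {K : SComplex V}

/-- `abc` is a nondegenerate triangle of `K`. -/
structure IsTriangle (K : SComplex V) (a b c : V) : Prop where
  ne₁₂ : a ≠ b
  ne₁₃ : a ≠ c
  ne₂₃ : b ≠ c
  mem : {a, b, c} ∈ K.faces

variable [Fintype V]

/-! ### Links of vertices are connected -/

omit [DecidableEq V] in
lemma eq_zero_of_sum_eq_one {p : V → ℝ} (hp : p ∈ stdSimplex ℝ V) {s : Finset V}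
    (hs : ∑ v ∈ s, p v = 1) {v : V} (hv : v ∉ s) : p v = 0 := by
  by_contra hpv
  exact (sum_lt_sum_of_subset (subset_univ s) (mem_univ v) hv ((hp.1 v).lt_of_ne' hpv)
    fun w _ _ => hp.1 w).ne (hs.trans hp.2.symm)

lemma eq_single_of_one_le {p : V → ℝ} (hp : p ∈ stdSimplex ℝ V) {v : V} (hv : 1 ≤ p v) :
    p = Pi.single v 1 := by
  have hpv : p v = 1 := hv.antisymm' (hp.2 ▸ single_le_sum (fun w _ => hp.1 w) (mem_univ v))
  ext w
  obtain rfl | hw := eq_or_ne w v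
  · simpa
  · rw [Pi.single_eq_of_ne hw,
      eq_zero_of_sum_eq_one hp (s := {v}) (by simpa) (by simpa)]

lemma exists_mem_diff_single_pos {v x : V} (hxv : x ≠ v) (hx : {v, x} ∈ K.faces)
    {W : Set (V → ℝ)} (hW : W ∈ nhdsWithin (Pi.single v 1) K.realization) :
    ∃ p ∈ W \ {Pi.single v 1}, 0 < p x := by
  let c : ℝ → V → ℝ := AffineMap.lineMap (Pi.single v 1 : V → ℝ) (Pi.single x 1 : V → ℝ)
  have hcx (ε : ℝ) : c ε x = ε := by simp [c, AffineMap.lineMap_apply, hxv]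
  have hcK : Set.MapsTo c (Set.Icc 0 1) K.realization := fun ε hε =>
    closedSimplex_subset_realization hx <| (convex_closedSimplex _).lineMap_mem
      (single_mem_closedSimplex (by simp)) (single_mem_closedSimplex (by simp)) hε
  have hc : Filter.Tendsto c (nhdsWithin 0 (Set.Icc 0 1))
      (nhdsWithin (Pi.single v 1) K.realization) := by
    have h0 : c 0 = Pi.single v 1 := AffineMap.lineMap_apply_zero _ _
    exact h0 ▸ AffineMap.lineMap_continuous.continuousWithinAt.tendsto_nhdsWithin hcK
  have hle : nhdsWithin (0 : ℝ) (Set.Ioc 0 1) ≤ nhdsWithin 0 (Set.Icc 0 1) :=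
    nhdsWithin_mono _ Set.Ioc_subset_Icc_self
  have : (nhdsWithin (0 : ℝ) (Set.Ioc 0 1)).NeBot :=
    left_nhdsWithin_Ioc_neBot one_pos
  obtain ⟨ε, hεW, hε⟩ := Filter.nonempty_of_mem
    (Filter.inter_mem (Filter.mem_map.1 (hc.mono_left hle hW)) self_mem_nhdsWithin)
  refine ⟨c ε, ⟨hεW, fun h => hε.1.ne' ?_⟩, (hcx ε).symm ▸ hε.1⟩
  rw [← hcx ε, h, Pi.single_eq_of_ne hxv]

lemma exists_isTriangle_of_puncturedLocally_isPreconnected {v : V}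
    (h : PuncturedLocally IsPreconnected K.realization (Pi.single v 1)) {A : Finset V}
    (hvA : v ∉ A) {p q : V} (hp : p ∈ A) (hvp : {v, p} ∈ K.faces) (hq : q ∉ A) (hqv : q ≠ v)
    (hvq : {v, q} ∈ K.faces) : ∃ a ∈ A, ∃ b, b ∉ A ∧ K.IsTriangle v a b := by
  have hU : {f : V → ℝ | 0 < f v} ∩ K.realization ∈
      nhdsWithin (Pi.single v 1) K.realization :=
    Filter.inter_mem (mem_nhdsWithin_of_mem_nhds ((isOpen_lt continuous_const
      (continuous_apply v)).mem_nhds (by simp))) self_mem_nhdsWithin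
  obtain ⟨W, hW, hWU, hconn⟩ := h _ hU
  have hstd {f : V → ℝ} (hf : f ∈ W) : f ∈ stdSimplex ℝ V := (mem_realization_iff.1 (hWU hf).2).2
  have hcover : W \ {Pi.single v 1} ⊆ {f | 0 < ∑ x ∈ A, f x} ∪ {f | ∑ x ∈ insert v A, f x < 1} := by
    rintro f ⟨hfW, hf⟩
    by_contra hfAB
    simp only [Set.mem_union, Set.mem_ofPred_eq, not_or, not_lt, sum_insert hvA] at hfAB
    exact hf (eq_single_of_one_le (hstd hfW) (by linarith))
  have hmeetA : (W \ {Pi.single v 1} ∩ {f | 0 < ∑ x ∈ A, f x}).Nonempty := by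
    obtain ⟨f, hf, hfp⟩ := exists_mem_diff_single_pos (ne_of_mem_of_not_mem hp hvA) hvp hW
    exact ⟨f, hf, sum_pos' (fun x _ => (hstd hf.1).1 x) ⟨p, hp, hfp⟩⟩
  have hmeetB : (W \ {Pi.single v 1} ∩ {f | ∑ x ∈ insert v A, f x < 1}).Nonempty := by
    obtain ⟨f, hf, hfq⟩ := exists_mem_diff_single_pos hqv hvq hW
    exact ⟨f, hf, (hstd hf.1).2 ▸ sum_lt_sum_of_subset (subset_univ _) (mem_univ q)
      (by simp [hq, hqv]) hfq fun x _ _ => (hstd hf.1).1 x⟩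
  obtain ⟨f, ⟨hfW, -⟩, hfA : 0 < ∑ x ∈ A, f x, hfB : ∑ x ∈ insert v A, f x < 1⟩ :=
    hconn _ _ (isOpen_lt continuous_const (by fun_prop)) (isOpen_lt (by fun_prop) continuous_const)
      hcover hmeetA hmeetB
  obtain ⟨a, ha, hfa⟩ := exists_ne_zero_of_sum_ne_zero hfA.ne'
  have hb : ∃ b ∉ insert v A, f b ≠ 0 := by
    by_contra! hzero
    rw [sum_subset (subset_univ _) fun x _ => hzero x, (hstd hfW).2] at hfB
    exact hfB.false
  obtain ⟨b, hbA, hfb⟩ := hb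
  rw [mem_insert, not_or] at hbA
  have hfv : 0 < f v := (hWU hfW).1
  exact ⟨a, ha, b, hbA.2, (ne_of_mem_of_not_mem ha hvA).symm, hbA.1 ∘ Eq.symm,
    ne_of_mem_of_not_mem ha hbA.2, mem_faces_of_forall_ne_zero (hWU hfW).2 (by simp)
      (by simp [hfv.ne', hfa, hfb])⟩

lemma reflTransGen_isTriangle_of_puncturedLocally_isPreconnected {v : V}
    (h : PuncturedLocally IsPreconnected K.realization (Pi.single v 1)) {p q : V} (hpv : p ≠ v)
    (hvp : {v, p} ∈ K.faces) (hqv : q ≠ v) (hvq : {v, q} ∈ K.faces) :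
    Relation.ReflTransGen (K.IsTriangle v) p q := by
  classical
  by_contra hpq
  let A : Finset V := {x | Relation.ReflTransGen (K.IsTriangle v) p x}
  have hvA : v ∉ A := fun hv => by
    obtain h | ⟨c, -, hc⟩ := (mem_filter_univ v).1 hv |>.cases_tail
    exacts [hpv h.symm, hc.ne₁₃ rfl]
  obtain ⟨a, ha, b, hb, hab⟩ := exists_isTriangle_of_puncturedLocally_isPreconnected h hvA
    (by simp [A, Relation.ReflTransGen.refl]) hvp (by simpa [A]) hqv hvq
  exact hb ((mem_filter_univ b).2 (((mem_filter_univ a).1 ha).tail hab))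

end SComplex

namespace SComplex

variable {V : Type}

/-! ### Edges lie in at most two triangles -/

/-- Unfolds the triangle `uvw` into the plane, the midpoint of `uv` going to the origin and `uv`
to the real axis. -/
noncomputable def pageCoord (u v w : V) (p : V → ℝ) : ℂ :=
  ⟨p u - p v, 2 * p w + p u + p v - 1⟩

lemma continuous_pageCoord (u v w : V) : Continuous (pageCoord u v w) :=
  Complex.equivRealProdCLM.symm.continuous.comp
    (f := fun p : V → ℝ => (p u - p v, 2 * p w + p u + p v - 1)) (by fun_prop)

variable [DecidableEq V]

/-- The midpoint of the edge `uv`. -/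
noncomputable def edgeMidpoint (u v : V) : V → ℝ := Pi.single u (1 / 2) + Pi.single v (1 / 2)

/-- Parametrizes, near the midpoint of `uv`, the union of the triangles `uvw` and `uvw'` by the
upper and the lower half-plane. -/
noncomputable def bookPoint (u v w w' : V) (c : ℂ) : V → ℝ :=
  Pi.single u ((1 + c.re - |c.im|) / 2) + Pi.single v ((1 - c.re - |c.im|) / 2) +
    (Pi.single w c.im⁺ + Pi.single w' c.im⁻)

variable {u v w w' t : V} {K : SComplex V}

lemma bookPoint_zero : bookPoint u v w w' 0 = edgeMidpoint u v := by
  simp [bookPoint, edgeMidpoint]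

lemma bookPoint_conj (c : ℂ) :
    bookPoint u v w w' (starRingEnd ℂ c) = bookPoint u v w' w c := by
  simp [bookPoint, add_comm (Pi.single w _)]

lemma continuous_bookPoint : Continuous (bookPoint u v w w') := by
  refine Continuous.add (Continuous.add ?_ ?_) (Continuous.add ?_ ?_) <;>
    refine (continuous_single (A := fun _ => ℝ) _).comp ?_
  · fun_prop
  · fun_prop
  · exact Complex.continuous_im.sup continuous_const
  · exact Complex.continuous_im.neg.sup continuous_const

lemma pageCoord_bookPoint (h : K.IsTriangle u v w) (h' : K.IsTriangle u v w') (hw : w ≠ w')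
    (c : ℂ) : pageCoord u v w (bookPoint u v w w' c) = c := by
  have him : 2 * c.im⁺ - |c.im| = c.im := by
    linarith [posPart_add_negPart c.im, posPart_sub_negPart c.im]
  apply Complex.ext
  · simp [pageCoord, bookPoint, h.ne₁₂, h.ne₁₂.symm, h.ne₁₃, h.ne₂₃, h'.ne₁₃, h'.ne₂₃]
    ring
  · simp [pageCoord, bookPoint, h.ne₁₂, h.ne₁₂.symm, h.ne₁₃, h.ne₁₃.symm, h.ne₂₃, h.ne₂₃.symm,
      h'.ne₁₃, h'.ne₂₃, hw]
    linear_combination him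

lemma pageCoord_bookPoint_of_ne (h : K.IsTriangle u v w) (h' : K.IsTriangle u v w')
    (ht : K.IsTriangle u v t) (htw : t ≠ w) (htw' : t ≠ w') (c : ℂ) :
    pageCoord u v t (bookPoint u v w w' c) = ⟨c.re, -|c.im|⟩ := by
  apply Complex.ext
  · simp [pageCoord, bookPoint, h.ne₁₂, h.ne₁₂.symm, h.ne₁₃, h.ne₂₃, h'.ne₁₃, h'.ne₂₃]
    ring
  · simp [pageCoord, bookPoint, h.ne₁₂, h.ne₁₂.symm, h.ne₁₃, h.ne₂₃, h'.ne₁₃, h'.ne₂₃,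
      ht.ne₁₃.symm, ht.ne₂₃.symm, htw, htw']
    ring

lemma exp_log_add_neg_abs_mul_I {r θ : ℝ} (hθ : |θ| ≤ Real.pi) :
    Complex.exp (Real.log r + (-|θ| : ℝ) * Complex.I) =
      ⟨(Complex.exp (Real.log r + θ * Complex.I)).re,
        -|(Complex.exp (Real.log r + θ * Complex.I)).im|⟩ := by
  apply Complex.ext
  · simp [Complex.exp_re]
  · simp [Complex.exp_im, abs_mul, Real.abs_sin_eq_sin_abs_of_abs_le_pi hθ]

/-- Around the midpoint of `uv`, inside the triangles `uvw` and `uvw'`, the unit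
`pageCoord u v w` winds once and `pageCoord u v t` does not wind. -/
lemma not_hasLogOn_pageCoord_zpow_mul {W : Set (V → ℝ)} {r : ℝ} (hr : 0 < r)
    (hW : ∀ c : ℂ, ‖c‖ = r → bookPoint u v w w' c ∈ W) (h : K.IsTriangle u v w)
    (h' : K.IsTriangle u v w') (ht : K.IsTriangle u v t) (hw : w ≠ w') (htw : t ≠ w)
    (htw' : t ≠ w') {a : ℤ} (ha : a ≠ 0) (b : ℤ) :
    ¬ HasLogOn (fun p => pageCoord u v w p ^ a * pageCoord u v t p ^ b) W := by
  let circle (θ : ℝ) : ℂ := Complex.exp (Real.log r + θ * Complex.I)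
  have hcircle (θ : ℝ) : ‖circle θ‖ = r := by simp [circle, Complex.norm_exp, Real.exp_log hr]
  have hclosed : circle Real.pi = circle (-Real.pi) := by
    refine Complex.exp_eq_exp_iff_exists_int.2 ⟨1, ?_⟩
    push_cast
    ring
  refine not_hasLogOn_of_loop (T := Set.Icc (-Real.pi) Real.pi) isPreconnected_Icc
    (γ := fun θ => bookPoint u v w w' (circle θ))
    (ℓ := fun θ => a * (Real.log r + θ * Complex.I) +
      b * (Real.log r + (-|θ| : ℝ) * Complex.I))
    (a := Real.pi) (b := -Real.pi) ?_ (fun θ _ => hW _ (hcircle θ)) (by fun_prop) ?_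
    (by simp [Real.pi_nonneg]) (by simp [Real.pi_nonneg]) (congrArg _ hclosed) ?_
  · exact (continuous_bookPoint.comp (by fun_prop)).continuousOn
  · intro θ hθ
    rw [pageCoord_bookPoint h h' hw, pageCoord_bookPoint_of_ne h h' ht htw htw',
      ← exp_log_add_neg_abs_mul_I (abs_le.2 hθ)]
    simp only [circle, ← Complex.exp_int_mul, ← Complex.exp_add]
  · intro heq
    have : (a : ℂ) * (2 * Real.pi * Complex.I) = 0 := by
      simp only [abs_neg] at heq
      push_cast at heq
      linear_combination heq
    simp [Real.pi_ne_zero, ha] at this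

variable [Fintype V]

lemma edgeMidpoint_mem_realization (h : {u, v} ∈ K.faces) : edgeMidpoint u v ∈ K.realization := by
  refine closedSimplex_subset_realization h ?_
  convert (convex_closedSimplex {u, v}).midpoint_mem (single_mem_closedSimplex (v := u) (by simp))
    (single_mem_closedSimplex (v := v) (by simp))
  simp [edgeMidpoint, midpoint_eq_smul_add, ← Pi.single_smul]

lemma bookPoint_mem_realization {c : ℂ} (hc : ‖c‖ ≤ 1 / 2) (h : K.IsTriangle u v w)
    (h' : K.IsTriangle u v w') : bookPoint u v w w' c ∈ K.realization := by
  wlog him : 0 ≤ c.im generalizing c w w'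
  · rw [← bookPoint_conj]
    exact this ((Complex.norm_conj c).trans_le hc) h' h (by simp; linarith)
  have hre := abs_le.1 (c.abs_re_le_norm.trans hc)
  have him' := abs_le.1 (c.abs_im_le_norm.trans hc)
  refine closedSimplex_subset_realization h.mem ⟨fun x hx => ?_, ?_, ?_⟩
  · simp only [mem_insert, mem_singleton, not_or] at hx
    simp [bookPoint, hx.1, hx.2.1, hx.2.2, negPart_eq_zero.2 him]
  · suffices 0 ≤ bookPoint u v w w' c from this
    refine add_nonneg (add_nonneg ?_ ?_) (add_nonneg ?_ ?_) <;> rw [Pi.single_nonneg]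
    · rw [abs_of_nonneg him]; linarith
    · rw [abs_of_nonneg him]; linarith
    · exact posPart_nonneg _
    · exact negPart_nonneg _
  · simp [bookPoint, sum_add_distrib, posPart_add_negPart]
    ring

lemma exists_forall_norm_eq_bookPoint_mem (h : K.IsTriangle u v w) (h' : K.IsTriangle u v w')
    (hw : w ≠ w') {W : Set (V → ℝ)} (hW : W ∈ nhdsWithin (edgeMidpoint u v) K.realization) :
    ∃ r > 0, ∀ c : ℂ, ‖c‖ = r → bookPoint u v w w' c ∈ W \ {edgeMidpoint u v} := by
  obtain ⟨O, hO, hOW⟩ := mem_nhdsWithin_iff_exists_mem_nhds_inter.1 hW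
  rw [← bookPoint_zero (w := w) (w' := w')] at hO
  obtain ⟨ρ, hρ, hball⟩ := Metric.mem_nhds_iff.1 (continuous_bookPoint.continuousAt hO)
  have hr : 0 < min (ρ / 2) (1 / 2) := by positivity
  refine ⟨_, hr, fun c hc => ⟨hOW ⟨hball ?_, ?_⟩, fun heq => ?_⟩⟩
  · rw [mem_ball_zero_iff, hc]
    exact (min_le_left _ _).trans_lt (half_lt_self hρ)
  · exact bookPoint_mem_realization (hc.trans_le (min_le_right _ _)) h h'
  · rw [Set.mem_singleton_iff, ← bookPoint_zero (w := w) (w' := w')] at heq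
    have hc0 := congrArg (pageCoord u v w) heq
    rw [pageCoord_bookPoint h h' hw, pageCoord_bookPoint h h' hw] at hc0
    exact hr.ne' (hc.symm.trans (norm_eq_zero.2 hc0))

lemma eq_edgeMidpoint {p : V → ℝ} (hp : p ∈ stdSimplex ℝ V) (huv : u ≠ v) (hu : p u = 1 / 2)
    (hv : p v = 1 / 2) : p = edgeMidpoint u v := by
  ext x
  obtain rfl | hxu := eq_or_ne x u
  · simp [edgeMidpoint, huv, hu]
  obtain rfl | hxv := eq_or_ne x v
  · simp [edgeMidpoint, huv.symm, hv]
  · rw [eq_zero_of_sum_eq_one hp (s := {u, v}) (by rw [sum_pair huv]; linarith)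
      (by simp [hxu, hxv])]
    simp [edgeMidpoint, hxu, hxv]

lemma pageCoord_ne_zero (hdim : ∀ σ ∈ K.faces, #σ ≤ 3) {p : V → ℝ} (hp : p ∈ K.realization)
    (hu : 0 < p u) (hv : 0 < p v) (h : K.IsTriangle u v t) (hne : p ≠ edgeMidpoint u v) :
    pageCoord u v t p ≠ 0 := by
  intro hzero
  obtain ⟨hface, hstd⟩ := mem_realization_iff.1 hp
  have hre : p u - p v = 0 := congrArg Complex.re hzero
  have him : 2 * p t + p u + p v - 1 = 0 := congrArg Complex.im hzero
  have ht : p t = 0 := by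
    by_contra ht
    have hsub : {u, v, t} ⊆ supp p := by
      simp [insert_subset_iff, mem_supp, hu.ne', hv.ne', ht]
    have heq := eq_of_subset_of_card_le hsub ((hdim _ hface).trans_eq
      (card_eq_three.2 ⟨u, v, t, h.ne₁₂, h.ne₁₃, h.ne₂₃, rfl⟩).symm)
    have hsum := hstd.2
    rw [← sum_subset (subset_univ {u, v, t}) fun x _ hx => by simpa [heq, mem_supp] using hx,
      sum_insert (by simp [h.ne₁₂, h.ne₁₃]), sum_pair h.ne₂₃] at hsum
    exact ht (by linarith)
  exact hne (eq_edgeMidpoint hstd h.ne₁₂ (by linarith) (by linarith))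

lemma eq_or_eq_of_puncturedLocally_logRankLEOne (hdim : ∀ σ ∈ K.faces, #σ ≤ 3)
    (h : PuncturedLocally LogRankLEOne K.realization (edgeMidpoint u v)) {w₁ w₂ w₃ : V}
    (h₁ : K.IsTriangle u v w₁) (h₂ : K.IsTriangle u v w₂) (h₃ : K.IsTriangle u v w₃)
    (h₁₂ : w₁ ≠ w₂) : w₃ = w₁ ∨ w₃ = w₂ := by
  by_contra! h₃₁₂
  obtain ⟨h₃₁, h₃₂⟩ := h₃₁₂
  have hU : {p : V → ℝ | 0 < p u ∧ 0 < p v} ∩ K.realization ∈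
      nhdsWithin (edgeMidpoint u v) K.realization := by
    refine Filter.inter_mem (mem_nhdsWithin_of_mem_nhds (IsOpen.mem_nhds ?_ ?_))
      self_mem_nhdsWithin
    · exact (isOpen_lt continuous_const (continuous_apply u)).inter
        (isOpen_lt continuous_const (continuous_apply v))
    · simp [edgeMidpoint, h₁.ne₁₂, h₁.ne₁₂.symm]
  obtain ⟨W, hW, hWU, hrank⟩ := h _ hU
  have hunit {t : V} (ht : K.IsTriangle u v t) :
      UnitOn (pageCoord u v t) (W \ {edgeMidpoint u v}) :=
    ⟨(continuous_pageCoord u v t).continuousOn, fun p hp =>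
      pageCoord_ne_zero hdim (hWU hp.1).2 (hWU hp.1).1.1 (hWU hp.1).1.2 ht hp.2⟩
  obtain ⟨a, b, hab, hlog⟩ := hrank _ _ (hunit h₁) (hunit h₂)
  obtain ha | hb := hab
  · obtain ⟨r, hr, hrW⟩ := exists_forall_norm_eq_bookPoint_mem h₁ h₃ h₃₁.symm hW
    exact not_hasLogOn_pageCoord_zpow_mul hr hrW h₁ h₃ h₂ h₃₁.symm h₁₂.symm h₃₂.symm ha b hlog
  · obtain ⟨r, hr, hrW⟩ := exists_forall_norm_eq_bookPoint_mem h₂ h₃ h₃₂.symm hW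
    simp only [mul_comm (_ ^ a)] at hlog
    exact not_hasLogOn_pageCoord_zpow_mul hr hrW h₂ h₃ h₁ h₃₂.symm h₁₂ h₃₁.symm hb a hlog

end SComplex

/-! ### Unions along a retract -/

section Retract

variable {X : Type*} [TopologicalSpace X] {A B : Set X} {r : X → X}

lemma exists_retraction_of_closed_union (hA : IsClosed A) (hB : IsClosed B)
    (hr : ContinuousOn r B) (hrB : Set.MapsTo r B (A ∩ B)) (hfix : Set.EqOn r id (A ∩ B)) :
    ∃ ρ : X → X, ContinuousOn ρ (A ∪ B) ∧ Set.MapsTo ρ (A ∪ B) A ∧ Set.EqOn ρ id A ∧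
      Set.EqOn ρ r B := by
  obtain ⟨ρ, hρ, hρA, hρB⟩ := exists_continuousOn_eqOn_eqOn hA hB subset_rfl
    (u := id) (v := r) continuousOn_id (hr.mono Set.inter_subset_right)
    (fun p hp => (hfix ⟨hp.1.2, hp.2⟩).symm)
  rw [Set.union_inter_cancel_left] at hρA
  rw [Set.union_inter_cancel_right] at hρB
  refine ⟨ρ, hρ, ?_, hρA, hρB⟩
  rintro p (hp | hp)
  · rw [hρA hp]
    exact hp
  · rw [hρB hp]
    exact (hrB hp).1

lemma isPreconnected_of_isPreconnected_union (hA : IsClosed A) (hB : IsClosed B)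
    (hr : ContinuousOn r B) (hrB : Set.MapsTo r B (A ∩ B)) (hfix : Set.EqOn r id (A ∩ B))
    (hAB : IsPreconnected (A ∪ B)) : IsPreconnected A := by
  obtain ⟨ρ, hρ, hρA, hid, -⟩ := exists_retraction_of_closed_union hA hB hr hrB hfix
  convert hAB.image ρ hρ
  exact (Set.Subset.antisymm hρA.image_subset fun p hp => ⟨p, .inl hp, hid hp⟩).symm

lemma HasLogOn.of_zpow_mul_comp (hA : IsPreconnected A) {f g : X → ℂ} (hf : ContinuousOn f A)
    (hg : HasLogOn g B) (hr : ContinuousOn r A) (hrA : Set.MapsTo r A B) {a b : ℤ} (ha : a ≠ 0)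
    (h : HasLogOn (fun p => f p ^ a * g (r p) ^ b) A) : HasLogOn f A := by
  refine .of_zpow hA hf ha ((h.mul ((hg.comp hr hrA).zpow (-b))).congr fun p hp => ?_)
  obtain ⟨k, -, hk⟩ := hg
  have hgp : g (r p) ≠ 0 := by
    rw [hk _ (hrA hp)]
    exact Complex.exp_ne_zero _
  simp [mul_assoc, mul_inv_cancel₀ (zpow_ne_zero b hgp)]

/-- A Mayer–Vietoris argument: units on the two parts extend to the union through the retraction
onto the intersection, where they have logarithms. -/
lemma LogRankLEOne.logAcyclic_or_logAcyclic (hA : IsClosed A) (hB : IsClosed B)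
    (hr : ContinuousOn r (A ∪ B)) (hrAB : Set.MapsTo r (A ∪ B) (A ∩ B))
    (hfix : Set.EqOn r id (A ∩ B)) (hI : LogAcyclic (A ∩ B)) (hconn : IsPreconnected (A ∪ B))
    (hrank : LogRankLEOne (A ∪ B)) : LogAcyclic A ∨ LogAcyclic B := by
  have hrA := hr.mono Set.subset_union_left
  have hrB := hr.mono Set.subset_union_right
  have hmA : Set.MapsTo r A (A ∩ B) := fun p hp => hrAB (.inl hp)
  have hmB : Set.MapsTo r B (A ∩ B) := fun p hp => hrAB (.inr hp)
  have hAc := isPreconnected_of_isPreconnected_union hA hB hrB hmB hfix hconn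
  obtain ⟨ρ, hρ, hρA, hρid, hρr⟩ := exists_retraction_of_closed_union hA hB hrB hmB hfix
  rw [Set.inter_comm] at hmA hfix
  rw [Set.union_comm] at hconn
  have hBc := isPreconnected_of_isPreconnected_union hB hA hrA hmA hfix hconn
  obtain ⟨ρ', hρ', hρB, hρid', hρr'⟩ := exists_retraction_of_closed_union hB hA hrA hmA hfix
  rw [Set.union_comm] at hρ' hρB
  by_contra! hnot
  simp only [LogAcyclic, not_forall, exists_prop] at hnot
  obtain ⟨⟨f, hf, hflog⟩, g, hg, hglog⟩ := hnot
  obtain ⟨a, b, hab, hlog⟩ := hrank _ _ (hf.comp hρ hρA) (hg.comp hρ' hρB)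
  obtain ha | hb := hab
  · refine hflog (.of_zpow_mul_comp hAc hf.1 (hI g (hg.mono Set.inter_subset_right)) hrA
      (fun p hp => hrAB (.inl hp)) (b := b) ha
      ((hlog.mono Set.subset_union_left).congr fun p hp => ?_))
    simp only [Function.comp_apply, hρid hp, hρr' hp, id]
  · refine hglog (.of_zpow_mul_comp hBc hg.1 (hI f (hf.mono Set.inter_subset_left)) hrB
      (fun p hp => hrAB (.inr hp)) (b := a) hb
      ((hlog.mono Set.subset_union_right).congr fun p hp => ?_))
    simp only [Function.comp_apply, hρid' hp, hρr hp, id, mul_comm]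

end Retract

namespace SComplex

/-! ### Cutting along an edge -/

variable {V : Type} [DecidableEq V]

/-- The linear map `p ↦ (p x - p y)` carried to the edge `xy`: a retraction of every complex onto
its edge `xy`. -/
noncomputable def edgeRetraction (x y : V) (p : V → ℝ) : V → ℝ :=
  Pi.single x ((1 + p x - p y) / 2) + Pi.single y ((1 - p x + p y) / 2)

lemma continuous_edgeRetraction (x y : V) : Continuous (edgeRetraction x y) := by
  refine Continuous.add ?_ ?_ <;> exact (continuous_single (A := fun _ => ℝ) _).comp (by fun_prop)

section Fintype

variable [Fintype V] {x y : V} {p : V → ℝ}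

lemma edgeRetraction_mem_closedSimplex (hp : p ∈ stdSimplex ℝ V) :
    edgeRetraction x y p ∈ closedSimplex {x, y} := by
  have hle (v : V) : p v ≤ 1 := hp.2 ▸ single_le_sum (fun w _ => hp.1 w) (mem_univ v)
  refine ⟨fun v hv => ?_, ?_, ?_⟩
  · simp only [mem_insert, mem_singleton, not_or] at hv
    simp [edgeRetraction, hv.1, hv.2]
  · suffices 0 ≤ edgeRetraction x y p from this
    refine add_nonneg ?_ ?_ <;> rw [Pi.single_nonneg]
    · linarith [hp.1 x, hle y]
    · linarith [hp.1 y, hle x]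
  · simp [edgeRetraction, sum_add_distrib]
    ring

lemma edgeRetraction_eq_self (hxy : x ≠ y) (hp : p ∈ closedSimplex {x, y}) :
    edgeRetraction x y p = p := by
  obtain ⟨hout, -, hsum⟩ := hp
  rw [← sum_subset (subset_univ {x, y}) fun v _ hv => hout v hv, sum_pair hxy] at hsum
  ext v
  obtain rfl | hvx := eq_or_ne v x
  · simp [edgeRetraction, hxy]
    linarith
  obtain rfl | hvy := eq_or_ne v y
  · simp [edgeRetraction, hvx]
    linarith
  · simp [edgeRetraction, hvx, hvy, hout v (by simp [hvx, hvy])]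

end Fintype

/-- `SeparationAlong M M₁ M₂ {x, y}`, spelled out for faces. -/
structure EdgeCut (M M₁ M₂ : SComplex V) (x y : V) : Prop where
  ne : x ≠ y
  mem_iff : ∀ {σ}, σ ∈ M.faces ↔ σ ∈ M₁.faces ∨ σ ∈ M₂.faces
  subset_pair : ∀ {σ}, σ ∈ M₁.faces → σ ∈ M₂.faces → σ ⊆ {x, y}
  pair_mem_left : {x, y} ∈ M₁.faces
  pair_mem_right : {x, y} ∈ M₂.faces
  exists_card_left : ∃ τ ∈ M₁.faces, #τ = 3
  exists_card_right : ∃ τ ∈ M₂.faces, #τ = 3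

namespace EdgeCut

variable {M M₁ M₂ : SComplex V} {x y : V}

lemma symm (h : EdgeCut M M₁ M₂ x y) : EdgeCut M M₂ M₁ x y where
  ne := h.ne
  mem_iff := h.mem_iff.trans or_comm
  subset_pair h₂ h₁ := h.subset_pair h₁ h₂
  pair_mem_left := h.pair_mem_right
  pair_mem_right := h.pair_mem_left
  exists_card_left := h.exists_card_right
  exists_card_right := h.exists_card_left

lemma swap (h : EdgeCut M M₁ M₂ x y) : EdgeCut M M₁ M₂ y x where
  ne := h.ne.symm
  mem_iff := h.mem_iff
  subset_pair := pair_comm x y ▸ h.subset_pair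
  pair_mem_left := pair_comm x y ▸ h.pair_mem_left
  pair_mem_right := pair_comm x y ▸ h.pair_mem_right
  exists_card_left := h.exists_card_left
  exists_card_right := h.exists_card_right

lemma mem_of_mem_left (h : EdgeCut M M₁ M₂ x y) {σ : Finset V} (hσ : σ ∈ M₁.faces) :
    σ ∈ M.faces :=
  h.mem_iff.2 (.inl hσ)

variable [Fintype V]

lemma realization_union (h : EdgeCut M M₁ M₂ x y) :
    M₁.realization ∪ M₂.realization = M.realization := by
  ext p
  rw [Set.mem_union, mem_realization_iff, mem_realization_iff, mem_realization_iff, h.mem_iff,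
    or_and_right]

lemma realization_inter (h : EdgeCut M M₁ M₂ x y) :
    M₁.realization ∩ M₂.realization = closedSimplex {x, y} := by
  refine Set.Subset.antisymm (fun p ⟨h₁, h₂⟩ => ?_) fun p hp =>
    ⟨closedSimplex_subset_realization h.pair_mem_left hp,
      closedSimplex_subset_realization h.pair_mem_right hp⟩
  rw [mem_realization_iff] at h₁ h₂
  exact mem_closedSimplex_iff.2 ⟨h.subset_pair h₁.1 h₂.1, h₁.2⟩

lemma edgeRetraction_mapsTo (h : EdgeCut M M₁ M₂ x y) :
    Set.MapsTo (edgeRetraction x y) (M₁.realization ∪ M₂.realization)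
      (M₁.realization ∩ M₂.realization) := by
  intro p hp
  rw [h.realization_union] at hp
  rw [h.realization_inter]
  exact edgeRetraction_mem_closedSimplex (mem_realization_iff.1 hp).2

lemma edgeRetraction_eqOn (h : EdgeCut M M₁ M₂ x y) :
    Set.EqOn (edgeRetraction x y) id (M₁.realization ∩ M₂.realization) := fun _ hp =>
  edgeRetraction_eq_self h.ne (h.realization_inter ▸ hp)

lemma isPreconnected_left (h : EdgeCut M M₁ M₂ x y) (hM : IsPreconnected M.realization) :
    IsPreconnected M₁.realization :=
  isPreconnected_of_isPreconnected_union (isClosed_realization M₁) (isClosed_realization M₂)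
    (continuous_edgeRetraction x y).continuousOn
    (h.edgeRetraction_mapsTo.mono_left Set.subset_union_right) h.edgeRetraction_eqOn
    (h.realization_union ▸ hM)

lemma logAcyclic_or_logAcyclic (h : EdgeCut M M₁ M₂ x y) (hM : IsPreconnected M.realization)
    (hrank : LogRankLEOne M.realization) :
    LogAcyclic M₁.realization ∨ LogAcyclic M₂.realization :=
  LogRankLEOne.logAcyclic_or_logAcyclic (isClosed_realization M₁) (isClosed_realization M₂)
    (continuous_edgeRetraction x y).continuousOn h.edgeRetraction_mapsTo h.edgeRetraction_eqOn
    (h.realization_inter ▸ .of_convex (convex_closedSimplex _)) (h.realization_union ▸ hM)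
    (h.realization_union ▸ hrank)

end EdgeCut

end SComplex
/-! ### Triangulated surfaces whose vertices all lie on the boundary -/

namespace SComplex

section Triangles

variable {V : Type} [DecidableEq V] {K : SComplex V} {σ : Finset V} {a b c d v w : V}

lemma mem_faces_of_subset (hσ : σ ∈ K.faces) {τ : Finset V} (h : τ ⊆ σ) (hv : v ∈ τ) :
    τ ∈ K.faces :=
  K.down_closed σ hσ τ h ⟨v, hv⟩

lemma singleton_mem_of_mem (hσ : σ ∈ K.faces) (ha : a ∈ σ) : {a} ∈ K.faces :=
  mem_faces_of_subset hσ (singleton_subset_iff.2 ha) (mem_singleton_self a)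

lemma pair_mem_of_mem (hσ : σ ∈ K.faces) (ha : a ∈ σ) (hb : b ∈ σ) : {a, b} ∈ K.faces :=
  mem_faces_of_subset hσ (insert_subset ha (singleton_subset_iff.2 hb)) (mem_insert_self a _)

namespace IsTriangle

lemma rotate (h : K.IsTriangle a b c) : K.IsTriangle b c a where
  ne₁₂ := h.ne₂₃
  ne₁₃ := h.ne₁₂.symm
  ne₂₃ := h.ne₁₃.symm
  mem := by
    have h' := h.mem
    rwa [insert_comm, pair_comm] at h'

lemma swap₁₂ (h : K.IsTriangle a b c) : K.IsTriangle b a c where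
  ne₁₂ := h.ne₁₂.symm
  ne₁₃ := h.ne₂₃
  ne₂₃ := h.ne₁₃
  mem := insert_comm a b _ ▸ h.mem

lemma swap₂₃ (h : K.IsTriangle a b c) : K.IsTriangle a c b :=
  h.swap₁₂.rotate

lemma pair_mem (h : K.IsTriangle a b c) : {a, b} ∈ K.faces :=
  pair_mem_of_mem h.mem (by simp) (by simp)

lemma singleton_mem (h : K.IsTriangle a b c) : {a} ∈ K.faces :=
  singleton_mem_of_mem h.mem (by simp)

lemma card_eq_three (h : K.IsTriangle a b c) : #{a, b, c} = 3 :=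
  Finset.card_eq_three.2 ⟨a, b, c, h.ne₁₂, h.ne₁₃, h.ne₂₃, rfl⟩

lemma inter_eq (h : K.IsTriangle a b c) (hcd : c ≠ d) :
    ({a, b, c} ∩ {a, b, d} : Finset V) = {a, b} := by
  ext v
  simp only [mem_inter, mem_insert, mem_singleton]
  grind [h.ne₁₃, h.ne₂₃]

end IsTriangle

lemma exists_isTriangle_of_mem (hσ : σ ∈ K.faces) (h₃ : #σ = 3) (hv : v ∈ σ) :
    ∃ a b, σ = {v, a, b} ∧ K.IsTriangle v a b := by
  have h₂ : #(σ.erase v) = 2 := by rw [card_erase_of_mem hv, h₃]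
  obtain ⟨a, b, hab, he⟩ := card_eq_two.1 h₂
  obtain rfl : σ = {v, a, b} := by rw [← insert_erase hv, he]
  have hne : ∀ u ∈ ({a, b} : Finset V), v ≠ u := fun u hu => (ne_of_mem_erase (he ▸ hu)).symm
  exact ⟨a, b, rfl, hne a (by simp), hne b (by simp), hab, hσ⟩

lemma exists_isTriangle_of_mem_of_mem (hσ : σ ∈ K.faces) (h₃ : #σ = 3) (hv : v ∈ σ) (hw : w ∈ σ)
    (hvw : v ≠ w) : ∃ a, σ = {v, w, a} ∧ K.IsTriangle v w a := by
  obtain ⟨a, b, rfl, h⟩ := exists_isTriangle_of_mem hσ h₃ hv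
  simp only [mem_insert, mem_singleton] at hw
  obtain rfl | rfl | rfl := hw
  · exact absurd rfl hvw
  · exact ⟨b, rfl, h⟩
  · exact ⟨a, by rw [pair_comm], h.swap₂₃⟩

/-- The type of triangles (two-dimensional faces) of `K`. -/
abbrev Triangle (K : SComplex V) : Type := {t : Finset V // t ∈ K.faces ∧ #t = 3}

/-- The triangle of `K` on three given vertices, as a term of the type of triangles. -/
abbrev IsTriangle.triangle (h : K.IsTriangle a b c) : K.Triangle :=
  ⟨{a, b, c}, h.mem, h.card_eq_three⟩

/-- The dual graph of `K`: its vertices are the triangles of `K`, and two of them are adjacent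
when they share an edge. -/
def dualGraph (K : SComplex V) : SimpleGraph K.Triangle where
  Adj s t := #(s.1 ∩ t.1) = 2
  symm := ⟨fun s t h => by rwa [inter_comm]⟩
  loopless := ⟨fun s h => by
    rw [inter_self, s.2.2] at h
    omega⟩

lemma IsTriangle.dualGraph_adj (h₁ : K.IsTriangle a b c) (h₂ : K.IsTriangle a b d) (hcd : c ≠ d) :
    K.dualGraph.Adj h₁.triangle h₂.triangle := by
  change #({a, b, c} ∩ {a, b, d}) = 2
  rw [h₁.inter_eq hcd, card_pair h₁.ne₁₂]

lemma exists_isTriangle_of_dualGraph_adj {s t : K.Triangle} (h : K.dualGraph.Adj s t) :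
    ∃ a b c d, c ≠ d ∧ ∃ (h₁ : K.IsTriangle a b c) (h₂ : K.IsTriangle a b d),
      s = h₁.triangle ∧ t = h₂.triangle := by
  obtain ⟨a, b, hab, he⟩ := card_eq_two.1 (h : #(s.1 ∩ t.1) = 2)
  obtain ⟨has, hat⟩ := mem_inter.1 (he ▸ mem_insert_self a {b})
  obtain ⟨hbs, hbt⟩ := mem_inter.1 (he ▸ mem_insert_of_mem (mem_singleton_self b))
  obtain ⟨c, hs, hc⟩ := exists_isTriangle_of_mem_of_mem s.2.1 s.2.2 has hbs hab
  obtain ⟨d, ht, hd⟩ := exists_isTriangle_of_mem_of_mem t.2.1 t.2.2 hat hbt hab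
  refine ⟨a, b, c, d, ?_, hc, hd, Subtype.ext hs, Subtype.ext ht⟩
  rintro rfl
  exact h.ne (Subtype.ext (hs.trans ht.symm))

lemma IsTriangle.dualGraph_reachable (h₁ : K.IsTriangle a b c) (h₂ : K.IsTriangle a b d) :
    K.dualGraph.Reachable h₁.triangle h₂.triangle := by
  obtain rfl | hcd := eq_or_ne c d
  · rfl
  · exact (h₁.dualGraph_adj h₂ hcd).reachable

namespace EdgeCut

variable {M M₁ M₂ : SComplex V} {x y p : V}

lemma mem_left_of_mem (h : EdgeCut M M₁ M₂ x y) (hx : v ≠ x) (hy : v ≠ y) (hv : {v} ∈ M₁.faces)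
    (hσ : σ ∈ M.faces) (hvσ : v ∈ σ) : σ ∈ M₁.faces := by
  refine (h.mem_iff.1 hσ).resolve_right fun hσ₂ => ?_
  have := h.subset_pair hv (singleton_mem_of_mem hσ₂ hvσ)
  simp [hx, hy] at this

lemma isTriangle_of_left (h : EdgeCut M M₁ M₂ x y) (hT : M₁.IsTriangle a b c) :
    M.IsTriangle a b c :=
  ⟨hT.ne₁₂, hT.ne₁₃, hT.ne₂₃, h.mem_of_mem_left hT.mem⟩

lemma isTriangle_left (h : EdgeCut M M₁ M₂ x y) (hx : v ≠ x) (hy : v ≠ y) (hv : {v} ∈ M₁.faces)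
    (hT : M.IsTriangle v a b) : M₁.IsTriangle v a b :=
  ⟨hT.ne₁₂, hT.ne₁₃, hT.ne₂₃, h.mem_left_of_mem hx hy hv hT.mem (mem_insert_self v _)⟩

lemma reflTransGen_left_of_eq (h : EdgeCut M M₁ M₂ x y)
    (hM : Relation.ReflTransGen (M.IsTriangle x) p y) (hp : p ≠ x) (hxp : {x, p} ∈ M₁.faces) :
    Relation.ReflTransGen (M₁.IsTriangle x) p y := by
  induction hM using Relation.ReflTransGen.head_induction_on with
  | refl => rfl
  | @head a c hac _ ih =>
    obtain h₁ | h₂ := h.mem_iff.1 hac.mem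
    · exact .head ⟨hac.ne₁₂, hac.ne₁₃, hac.ne₂₃, h₁⟩
        (ih hac.ne₁₃.symm (pair_mem_of_mem h₁ (by simp) (by simp)))
    · have ha := h.subset_pair hxp (pair_mem_of_mem h₂ (by simp) (by simp)) (by simp : a ∈ _)
      obtain rfl : a = y := by simpa [hp] using ha
      rfl

lemma ne_of_isTriangle (h : EdgeCut M M₁ M₂ x y) (hc : M₁.IsTriangle x y c)
    (hd : M₂.IsTriangle x y d) : c ≠ d := by
  rintro rfl
  have := h.subset_pair hc.mem hd.mem (by simp : c ∈ _)
  simp [hc.ne₁₃.symm, hc.ne₂₃.symm] at this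

end EdgeCut

end Triangles

variable {V : Type} [DecidableEq V] [Fintype V] {K : SComplex V} {σ : Finset V} {a b v : V}

/-- `K` is a connected triangulated surface all of whose vertices lie on the boundary: an edge lies
in at most two triangles, links of vertices are connected, and every vertex lies on an edge
contained in exactly one triangle. -/
structure IsBorderedSurface (K : SComplex V) : Prop where
  isPreconnected : IsPreconnected K.realization
  card_le_three : ∀ {σ}, σ ∈ K.faces → #σ ≤ 3
  eq_or_eq : ∀ {u v a b c}, K.IsTriangle u v a → K.IsTriangle u v b → K.IsTriangle u v c → a ≠ b →
    c = a ∨ c = b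
  reflTransGen : ∀ {v p q}, p ≠ v → q ≠ v → {v, p} ∈ K.faces → {v, q} ∈ K.faces →
    Relation.ReflTransGen (K.IsTriangle v) p q
  exists_existsUnique : ∀ {v}, {v} ∈ K.faces → ∃ d, ∃! t, K.IsTriangle v d t

namespace IsBorderedSurface

lemma exists_isTriangle (h : K.IsBorderedSurface) (hab : a ≠ b) (he : {a, b} ∈ K.faces) :
    ∃ c, K.IsTriangle a b c := by
  obtain ⟨d, t, hdt, -⟩ := h.exists_existsUnique (singleton_mem_of_mem he (mem_insert_self a _))
  obtain rfl | ⟨c, hc, -⟩ :=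
    (h.reflTransGen hab.symm hdt.ne₁₂.symm he hdt.pair_mem).cases_head
  · exact ⟨t, hdt⟩
  · exact ⟨c, hc⟩

lemma exists_subset_triangle (h : K.IsBorderedSurface) (hσ : σ ∈ K.faces) :
    ∃ t : K.Triangle, σ ⊆ t.1 := by
  have hpos := (K.nonempty_of_mem σ hσ).card_pos
  obtain h₁ | h₂ | h₃ : #σ = 1 ∨ #σ = 2 ∨ #σ = 3 := by
    have := h.card_le_three hσ
    omega
  · obtain ⟨v, rfl⟩ := card_eq_one.1 h₁
    obtain ⟨d, t, hdt, -⟩ := h.exists_existsUnique hσ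
    exact ⟨hdt.triangle, by simp⟩
  · obtain ⟨a, b, hab, rfl⟩ := card_eq_two.1 h₂
    obtain ⟨c, hc⟩ := h.exists_isTriangle hab hσ
    exact ⟨hc.triangle, by simp [insert_subset_iff]⟩
  · exact ⟨⟨σ, hσ, h₃⟩, Subset.rfl⟩

lemma dualGraph_reachable_of_mem (h : K.IsBorderedSurface) {s t : K.Triangle} (hs : v ∈ s.1)
    (ht : v ∈ t.1) : K.dualGraph.Reachable s t := by
  obtain ⟨p, q, hpq, h₁⟩ := exists_isTriangle_of_mem s.2.1 s.2.2 hs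
  obtain ⟨p', q', hpq', h₂⟩ := exists_isTriangle_of_mem t.2.1 t.2.2 ht
  obtain rfl : s = h₁.triangle := Subtype.ext hpq
  obtain rfl : t = h₂.triangle := Subtype.ext hpq'
  have hchain := h.reflTransGen h₁.ne₁₂.symm h₂.ne₁₂.symm h₁.pair_mem h₂.pair_mem
  clear hs ht hpq hpq'
  induction hchain generalizing q' with
  | refl => exact h₁.dualGraph_reachable h₂
  | @tail a b _ hab ih =>
    have heq : hab.triangle = hab.swap₂₃.triangle :=
      Subtype.ext (congrArg (insert v) (pair_comm a b))
    exact (ih b hab).trans (heq ▸ hab.swap₂₃.dualGraph_reachable h₂)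

lemma dualGraph_preconnected (h : K.IsBorderedSurface) : K.dualGraph.Preconnected := by
  classical
  intro s t
  let A : Finset V := univ.filter fun v => ∃ r : K.Triangle, v ∈ r.1 ∧ K.dualGraph.Reachable s r
  have hA : ∀ u ∈ A, ∀ v, {u, v} ∈ K.faces → v ∈ A := by
    intro u hu v huv
    obtain ⟨r, hur, hsr⟩ := (mem_filter.1 hu).2
    obtain ⟨r', hr'⟩ := h.exists_subset_triangle huv
    rw [insert_subset_iff, singleton_subset_iff] at hr'
    exact mem_filter.2 ⟨mem_univ v, r', hr'.2,
      hsr.trans (h.dualGraph_reachable_of_mem hur hr'.1)⟩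
  obtain ⟨v, hv⟩ := K.nonempty_of_mem s.1 s.2.1
  obtain ⟨w, hw⟩ := K.nonempty_of_mem t.1 t.2.1
  have hwA : w ∈ A := mem_of_isPreconnected_realization h.isPreconnected hA
    (mem_filter.2 ⟨mem_univ v, s, hv, .rfl⟩) (singleton_mem_of_mem s.2.1 hv)
    (singleton_mem_of_mem t.2.1 hw)
  obtain ⟨r, hwr, hsr⟩ := (mem_filter.1 hwA).2
  exact hsr.trans (h.dualGraph_reachable_of_mem hwr hw)

end IsBorderedSurface

namespace EdgeCut

variable {M M₁ M₂ : SComplex V} {x y : V}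

lemma reflTransGen_left (h : EdgeCut M M₁ M₂ x y) (hM : M.IsBorderedSurface) {v p q : V}
    (hp : p ≠ v) (hq : q ≠ v) (hvp : {v, p} ∈ M₁.faces) (hvq : {v, q} ∈ M₁.faces) :
    Relation.ReflTransGen (M₁.IsTriangle v) p q := by
  have hsymm (v : V) : Std.Symm (M₁.IsTriangle v) := ⟨fun _ _ h => h.swap₂₃⟩
  have through_edge {x y p q : V} (h : EdgeCut M M₁ M₂ x y) (hp : p ≠ x) (hq : q ≠ x)
      (hxp : {x, p} ∈ M₁.faces) (hxq : {x, q} ∈ M₁.faces) :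
      Relation.ReflTransGen (M₁.IsTriangle x) p q := by
    have to_end {r : V} (hr : r ≠ x) (hxr : {x, r} ∈ M₁.faces) :
        Relation.ReflTransGen (M₁.IsTriangle x) r y :=
      h.reflTransGen_left_of_eq (hM.reflTransGen hr h.ne.symm (h.mem_of_mem_left hxr)
        (h.mem_of_mem_left h.pair_mem_left)) hr hxr
    exact (to_end hp hxp).trans
      (Relation.ReflTransGen.stdSymm.symm _ _ (to_end hq hxq))
  obtain rfl | hx := eq_or_ne v x
  · exact through_edge h hp hq hvp hvq
  obtain rfl | hy := eq_or_ne v y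
  · exact through_edge h.swap hp hq hvp hvq
  · exact (hM.reflTransGen hp hq (h.mem_of_mem_left hvp) (h.mem_of_mem_left hvq)).lift id
      fun _ _ => h.isTriangle_left hx hy (singleton_mem_of_mem hvp (by simp))

lemma exists_isTriangle_left (h : EdgeCut M M₁ M₂ x y) (hM : M.IsBorderedSurface) :
    ∃ c, M₁.IsTriangle x y c := by
  by_contra! hno
  have hend {v w : V} (hvw : w ≠ v) (hw : ∀ c, ¬ M₁.IsTriangle v w c) (hvw' : {v, w} ∈ M₁.faces)
      {p : V} (hp : {v, p} ∈ M₁.faces) : p = v ∨ p = w := by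
    by_contra! hne
    obtain rfl | ⟨c, hc, -⟩ := (h.reflTransGen_left hM hvw hne.1 hvw' hp).cases_head
    · exact hne.2 rfl
    · exact hw c hc
  obtain ⟨τ, hτ, h₃⟩ := h.exists_card_left
  have hsub : τ ⊆ {x, y} := fun w hw => by
    refine mem_of_isPreconnected_realization (h.isPreconnected_left hM.isPreconnected) ?_
      (mem_insert_self x {y}) (singleton_mem_of_mem h.pair_mem_left (by simp))
      (singleton_mem_of_mem hτ hw)
    simp only [mem_insert, mem_singleton]
    rintro u (rfl | rfl) v huv
    · exact hend h.ne.symm hno h.pair_mem_left huv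
    · exact (hend h.ne (fun c hc => hno c hc.swap₁₂) h.swap.pair_mem_left huv).symm
  have := card_le_card hsub
  rw [card_pair h.ne] at this
  omega

lemma existsUnique_isTriangle_left (h : EdgeCut M M₁ M₂ x y) (hM : M.IsBorderedSurface) :
    ∃! c, M₁.IsTriangle x y c := by
  obtain ⟨c, hc⟩ := h.exists_isTriangle_left hM
  obtain ⟨d, hd⟩ := h.symm.exists_isTriangle_left hM
  exact ⟨c, hc, fun c' hc' => (hM.eq_or_eq (h.isTriangle_of_left hc)
    (h.symm.isTriangle_of_left hd) (h.isTriangle_of_left hc')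
    (h.ne_of_isTriangle hc hd)).resolve_right (h.ne_of_isTriangle hc' hd)⟩

lemma isBorderedSurface_left (h : EdgeCut M M₁ M₂ x y) (hM : M.IsBorderedSurface) :
    M₁.IsBorderedSurface where
  isPreconnected := h.isPreconnected_left hM.isPreconnected
  card_le_three hσ := hM.card_le_three (h.mem_of_mem_left hσ)
  eq_or_eq ha hb hc := hM.eq_or_eq (h.isTriangle_of_left ha) (h.isTriangle_of_left hb)
    (h.isTriangle_of_left hc)
  reflTransGen := h.reflTransGen_left hM
  exists_existsUnique {v} hv := by
    obtain rfl | hx := eq_or_ne v x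
    · exact ⟨y, h.existsUnique_isTriangle_left hM⟩
    obtain rfl | hy := eq_or_ne v y
    · exact ⟨x, h.swap.existsUnique_isTriangle_left hM⟩
    obtain ⟨d, t, ht, huniq⟩ := hM.exists_existsUnique (h.mem_of_mem_left hv)
    exact ⟨d, t, h.isTriangle_left hx hy hv ht, fun t' ht' =>
      huniq t' (h.isTriangle_of_left ht')⟩

end EdgeCut

lemma IsMobius.isBorderedSurface {M : SComplex V} (hM : M.IsMobius)
    (hN : ∀ {v}, {v} ∈ M.faces → ∃ d, ∃! t, M.IsTriangle v d t) : M.IsBorderedSurface where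
  isPreconnected := hM.mobiusLike.isPreconnected
  card_le_three := card_le_three_of_mobiusLike hM.mobiusLike
  eq_or_eq ha hb hc := eq_or_eq_of_puncturedLocally_logRankLEOne
    (fun _ => card_le_three_of_mobiusLike hM.mobiusLike)
    (hM.mobiusLike.puncturedLocally_logRankLEOne _ (edgeMidpoint_mem_realization ha.pair_mem))
    ha hb hc
  reflTransGen hp hq hvp hvq := reflTransGen_isTriangle_of_puncturedLocally_isPreconnected
    (hM.mobiusLike.puncturedLocally_isPreconnected _
      (single_mem_realization (singleton_mem_of_mem hvp (by simp)))) hp hvp hq hvq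
  exists_existsUnique := hN

end SComplex

/-! ### Log-acyclicity makes the dual graph a tree -/

lemma isBridge_of_adj_of_existsUnique_adj {V : Type*} {G : SimpleGraph V}
    (hdeg : ∀ {v a b c}, G.Adj v a → G.Adj v b → G.Adj v c → a ≠ b → c = a ∨ c = b)
    {b c d : V} (hd : ∃! t, G.Adj d t) (hbd : G.Reachable b d) (hbc : G.Adj b c) :
    G.IsBridge s(b, c) := by
  rw [SimpleGraph.isBridge_iff_forall_cycle_notMem (show s(b, c) ∈ G.edgeSet from hbc)]
  intro u p hp hmem
  have two_neighbours : ∀ v ∈ p.support, ∃ w₁ ∈ p.support, ∃ w₂ ∈ p.support,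
      w₁ ≠ w₂ ∧ G.Adj v w₁ ∧ G.Adj v w₂ := fun v hv => by
    obtain ⟨w₁, w₂, hne, he⟩ := Set.ncard_eq_two.1 (hp.ncard_neighborSet_toSubgraph_eq_two hv)
    have h₁ : p.toSubgraph.Adj v w₁ := he.superset (Set.mem_insert w₁ {w₂})
    have h₂ : p.toSubgraph.Adj v w₂ := he.superset (Set.mem_insert_of_mem w₁ rfl)
    exact ⟨w₁, p.mem_verts_toSubgraph.1 h₁.snd_mem, w₂, p.mem_verts_toSubgraph.1 h₂.snd_mem, hne,
      h₁.adj_sub, h₂.adj_sub⟩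
  have hdp : d ∈ p.support := by
    rw [SimpleGraph.reachable_iff_reflTransGen] at hbd
    clear hd
    induction hbd with
    | refl => exact p.fst_mem_support_of_mem_edges hmem
    | tail _ hvw ih =>
      obtain ⟨w₁, hw₁, w₂, hw₂, hne, h₁, h₂⟩ := two_neighbours _ ih
      obtain rfl | rfl := hdeg h₁ h₂ hvw hne <;> assumption
  obtain ⟨w₁, -, w₂, -, hne, h₁, h₂⟩ := two_neighbours d hdp
  exact hne (hd.unique h₁ h₂)

lemma exists_continuousOn_iUnion_eqOn {ι X Y : Type*} [Finite ι] [TopologicalSpace X]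
    [TopologicalSpace Y] [Nonempty Y] {S : ι → Set X} (hS : ∀ i, IsClosed (S i)) {g : ι → X → Y}
    (hg : ∀ i, ContinuousOn (g i) (S i)) (hgg : ∀ i j, Set.EqOn (g i) (g j) (S i ∩ S j)) :
    ∃ f : X → Y, ContinuousOn f (⋃ i, S i) ∧ ∀ i, Set.EqOn f (g i) (S i) := by
  classical
  let f : X → Y := fun x => if h : ∃ i, x ∈ S i then g h.choose x else Classical.arbitrary Y
  have hf (i : ι) : Set.EqOn f (g i) (S i) := fun x hx => by
    have h : ∃ i, x ∈ S i := ⟨i, hx⟩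
    exact (dif_pos h).trans (hgg _ _ ⟨h.choose_spec, hx⟩)
  exact ⟨f, (locallyFinite_of_finite S).continuousOn_iUnion hS fun i => (hg i).congr (hf i), hf⟩

namespace SComplex

section Cocycle

variable {V : Type} [DecidableEq V] [Fintype V] {K : SComplex V} {ι : Type*} {T : ι → Finset V}
  {θ : ι → V → ℤ}

omit [DecidableEq V] in
lemma exists_int_sum_sub_sum_eq {s t : Finset V} {θ θ' : V → ℤ}
    (hθ : ∀ v ∈ s, v ∈ t → ∀ w ∈ s, w ∈ t → θ v - θ' v = θ w - θ' w) {p : V → ℝ}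
    (hs : p ∈ closedSimplex s) (ht : p ∈ closedSimplex t) :
    ∃ m : ℤ, ∑ v, p v * θ v = ∑ v, p v * θ' v + m := by
  obtain ⟨w, hw⟩ : ∃ w, p w ≠ 0 := by
    by_contra! h0
    simpa [h0] using hs.2.2
  have mem_both {v : V} (hv : p v ≠ 0) : v ∈ s ∧ v ∈ t :=
    ⟨not_imp_comm.1 (hs.1 v) hv, not_imp_comm.1 (ht.1 v) hv⟩
  refine ⟨θ w - θ' w, sub_eq_iff_eq_add'.1 ?_⟩
  calc ∑ v, p v * θ v - ∑ v, p v * θ' v = ∑ v, p v * ((θ w - θ' w : ℤ) : ℝ) := by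
        rw [← sum_sub_distrib]
        refine sum_congr rfl fun v _ => ?_
        obtain hv | hv := eq_or_ne (p v) 0
        · simp [hv]
        · rw [← hθ v (mem_both hv).1 (mem_both hv).2 w (mem_both hw).1 (mem_both hw).2]
          push_cast
          ring
    _ = _ := by rw [← sum_mul, hs.2.2, one_mul]

/-- The functions `p ↦ exp (2πi ∑ v, p v * θ i v)` on the simplices `T i` glue to one function; a
logarithm of it differs from the obvious local logarithms by the integers `n i`. -/
lemma exists_int_add_eq_of_logAcyclic [Finite ι] (hK : LogAcyclic K.realization)
    (hT : ∀ i, T i ∈ K.faces) (hcover : ∀ σ ∈ K.faces, ∃ i, σ ⊆ T i)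
    (hθ : ∀ i j, ∀ v ∈ T i, v ∈ T j → ∀ w ∈ T i, w ∈ T j → θ i v - θ j v = θ i w - θ j w) :
    ∃ n : ι → ℤ, ∀ i j, ∀ v ∈ T i, v ∈ T j → θ i v + n i = θ j v + n j := by
  let g (i : ι) (p : V → ℝ) : ℂ := (∑ v, p v * θ i v : ℝ) * (2 * Real.pi * Complex.I)
  have hg (i : ι) : Continuous (g i) := by fun_prop
  obtain ⟨f, hf, hfg⟩ := exists_continuousOn_iUnion_eqOn (g := fun i p => Complex.exp (g i p))
    (fun i => isClosed_closedSimplex (T i)) (fun i => (hg i).cexp.continuousOn)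
    fun i j p ⟨hi, hj⟩ => by
      obtain ⟨m, hm⟩ := exists_int_sum_sub_sum_eq (hθ i j) hi hj
      simp only [g]
      rw [hm, Complex.ofReal_add, Complex.ofReal_intCast, add_mul, Complex.exp_add,
        Complex.exp_int_mul_two_pi_mul_I, mul_one]
  have hsub : K.realization ⊆ ⋃ i, closedSimplex (T i) := fun p hp => by
    obtain ⟨hσ, hp⟩ := mem_realization_iff.1 hp
    obtain ⟨i, hi⟩ := hcover _ hσ
    exact Set.mem_iUnion.2 ⟨i, mem_closedSimplex_iff.2 ⟨hi, hp⟩⟩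
  obtain ⟨h, hh, hfh⟩ := hK f ⟨hf.mono hsub, fun p hp => by
    obtain ⟨i, hi⟩ := Set.mem_iUnion.1 (hsub hp)
    exact hfg i hi ▸ Complex.exp_ne_zero _⟩
  choose n hn using fun i => exists_int_sub_eq_of_exp_eq (convex_closedSimplex (T i)).isPreconnected
    (hh.mono (closedSimplex_subset_realization (hT i))) (hg i).continuousOn fun p hp =>
      (hfh p (closedSimplex_subset_realization (hT i) hp)).symm.trans (hfg i hp)
  have at_vertex (i : ι) {v : V} (hv : v ∈ T i) :
      h (Pi.single v 1) = ((θ i v + n i : ℤ) : ℂ) * (2 * Real.pi * Complex.I) := by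
    have hθv : ∑ w, (Pi.single v 1 : V → ℝ) w * (θ i w : ℝ) = θ i v := by simp [Pi.single_apply]
    rw [hn i _ (single_mem_closedSimplex hv)]
    simp only [g]
    rw [hθv]
    push_cast
    ring
  refine ⟨n, fun i j v hi hj => ?_⟩
  have := (at_vertex i hi).symm.trans (at_vertex j hj)
  exact_mod_cast mul_right_cancel₀ Complex.two_pi_I_ne_zero this

end Cocycle

section LinkSide

variable {V : Type} [DecidableEq V] {K : SComplex V} {a b c p u v w z : V} {s t : K.Triangle}

/-- The link of the vertex `v` in a two-dimensional complex, as a graph. -/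
def linkGraph (K : SComplex V) (v : V) : SimpleGraph V where
  Adj := K.IsTriangle v
  symm := ⟨fun _ _ h => h.swap₂₃⟩
  loopless := ⟨fun _ h => h.ne₂₃ rfl⟩

/-- The part of the link of `v` on the side of `c` after removing the edge `bc` from the link. -/
def linkSide (K : SComplex V) (v b c : V) : Set V :=
  {u | ((K.linkGraph v).deleteEdges {s(b, c)}).Reachable c u}

lemma self_mem_linkSide (K : SComplex V) (v b c : V) : c ∈ K.linkSide v b c :=
  SimpleGraph.Reachable.rfl

lemma notMem_linkSide_self (h : c ≠ v) : v ∉ K.linkSide v b c := fun hv => by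
  obtain rfl | ⟨u, -, hu⟩ :=
    (SimpleGraph.reachable_iff_reflTransGen _ _).1 hv |>.cases_tail
  · exact h rfl
  · exact (SimpleGraph.deleteEdges_le _ hu : K.IsTriangle v u v).ne₁₃ rfl

lemma mem_linkSide_of_isTriangle (hu : u ∈ K.linkSide v b c) (h : K.IsTriangle v u w)
    (huw : s(u, w) ≠ s(b, c)) : w ∈ K.linkSide v b c :=
  SimpleGraph.Reachable.trans hu
    (SimpleGraph.Adj.reachable (SimpleGraph.deleteEdges_adj.2 ⟨h, huw⟩))

lemma exists_mem_linkSide_iff (hcv : c ≠ v) (h : K.IsTriangle v w p) (hwb : w ≠ b) :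
    (∃ u ∈ ({v, w, p} : Finset V), u ∈ K.linkSide v b c) ↔ w ∈ K.linkSide v b c := by
  refine ⟨fun ⟨u, hu, huS⟩ => ?_, fun hw => ⟨w, by simp, hw⟩⟩
  simp only [mem_insert, mem_singleton] at hu
  obtain rfl | rfl | rfl := hu
  · exact absurd huS (notMem_linkSide_self hcv)
  · exact huS
  · obtain rfl | hwc := eq_or_ne w c
    · exact self_mem_linkSide K v b w
    · refine mem_linkSide_of_isTriangle huS h.swap₂₃ fun he => ?_
      simp [hwb, hwc] at he

open Classical in
/-- The indicator of the simplices `t` lying, near the end `v` of the edge `ab`, on the same side of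
this edge as the triangle `abc`. -/
noncomputable def sideIndicator (K : SComplex V) (a b c : V) (t : Finset V) (v : V) : ℤ :=
  if (v = a ∧ ∃ u ∈ t, u ∈ K.linkSide a b c) ∨ (v = b ∧ ∃ u ∈ t, u ∈ K.linkSide b a c)
  then 1 else 0

lemma sideIndicator_comm (K : SComplex V) (a b c : V) (t : Finset V) (v : V) :
    K.sideIndicator a b c t v = K.sideIndicator b a c t v :=
  by classical exact if_congr or_comm rfl rfl

lemma sideIndicator_eq_of_pair_ne (hc : K.IsTriangle a b c) (hvw : v ≠ w)
    (he : ({v, w} : Finset V) ≠ {a, b}) (hvs : v ∈ s.1) (hws : w ∈ s.1) (hvt : v ∈ t.1)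
    (hwt : w ∈ t.1) : K.sideIndicator a b c s.1 v = K.sideIndicator a b c t.1 v := by
  have key {r : K.Triangle} (hv : v ∈ r.1) (hw : w ∈ r.1) :
      (v = a ∧ ∃ u ∈ r.1, u ∈ K.linkSide a b c) ∨ (v = b ∧ ∃ u ∈ r.1, u ∈ K.linkSide b a c) ↔
        (v = a ∧ w ∈ K.linkSide a b c) ∨ (v = b ∧ w ∈ K.linkSide b a c) := by
    obtain ⟨p, hp, h⟩ := exists_isTriangle_of_mem_of_mem r.2.1 r.2.2 hv hw hvw
    rw [hp]
    refine or_congr (and_congr_right ?_) (and_congr_right ?_)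
    · rintro rfl
      exact exists_mem_linkSide_iff hc.ne₁₃.symm h fun hw => he (hw ▸ rfl)
    · rintro rfl
      exact exists_mem_linkSide_iff hc.ne₂₃.symm h fun hw => he (hw ▸ pair_comm v w)
  classical exact if_congr ((key hvs hws).trans (key hvt hwt).symm) rfl rfl

variable [Fintype V]

lemma IsBorderedSurface.notMem_linkSide (hK : K.IsBorderedSurface) (h : K.IsTriangle v b c) :
    b ∉ K.linkSide v b c := by
  obtain ⟨d, hd⟩ := hK.exists_existsUnique h.singleton_mem
  have hbd : (K.linkGraph v).Reachable b d :=
    (SimpleGraph.reachable_iff_reflTransGen _ _).2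
      (hK.reflTransGen h.ne₁₂.symm hd.exists.choose_spec.ne₁₂.symm h.pair_mem
        hd.exists.choose_spec.pair_mem)
  exact fun hb => isBridge_of_adj_of_existsUnique_adj (G := K.linkGraph v) hK.eq_or_eq hd hbd h
    (SimpleGraph.Reachable.symm hb)

lemma IsBorderedSurface.exists_mem_linkSide_iff_eq (hK : K.IsBorderedSurface)
    (hc : K.IsTriangle v b c) (hp : K.IsTriangle v b p) :
    (∃ u ∈ ({v, b, p} : Finset V), u ∈ K.linkSide v b c) ↔ p = c := by
  refine ⟨fun ⟨u, hu, huS⟩ => ?_, fun h => ⟨p, by simp, h ▸ self_mem_linkSide K v b c⟩⟩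
  simp only [mem_insert, mem_singleton] at hu
  obtain rfl | rfl | rfl := hu
  · exact absurd huS (notMem_linkSide_self hc.ne₁₃.symm)
  · exact absurd huS (hK.notMem_linkSide hc)
  · by_contra huc
    refine hK.notMem_linkSide hc (mem_linkSide_of_isTriangle huS hp.swap₂₃ fun he => ?_)
    simp [huc, hp.ne₂₃.symm] at he

lemma IsBorderedSurface.sideIndicator_left (hK : K.IsBorderedSurface) (hc : K.IsTriangle a b c)
    (ha : a ∈ t.1) (hb : b ∈ t.1) :
    K.sideIndicator a b c t.1 a = if c ∈ t.1 then 1 else 0 := by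
  obtain ⟨p, hp, h⟩ := exists_isTriangle_of_mem_of_mem t.2.1 t.2.2 ha hb hc.ne₁₂
  have hcp : c ∈ ({a, b, p} : Finset V) ↔ p = c := by
    simp [hc.ne₁₃.symm, hc.ne₂₃.symm, eq_comm]
  simp only [sideIndicator, hp, hcp, hK.exists_mem_linkSide_iff_eq hc h, hc.ne₁₂, true_and,
    false_and, or_false]

lemma IsBorderedSurface.sideIndicator_eq_ite (hK : K.IsBorderedSurface) (hc : K.IsTriangle a b c)
    (ha : a ∈ t.1) (hb : b ∈ t.1) (hv : v ∈ ({a, b} : Finset V)) :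
    K.sideIndicator a b c t.1 v = if c ∈ t.1 then 1 else 0 := by
  obtain rfl | hv := mem_insert.1 hv
  · exact hK.sideIndicator_left hc ha hb
  · obtain rfl := mem_singleton.1 hv
    rw [sideIndicator_comm, hK.sideIndicator_left hc.swap₁₂ hb ha]

lemma IsBorderedSurface.sideIndicator_sub_eq (hK : K.IsBorderedSurface) (hc : K.IsTriangle a b c)
    (hvs : v ∈ s.1) (hvt : v ∈ t.1) (hws : w ∈ s.1) (hwt : w ∈ t.1) :
    K.sideIndicator a b c s.1 v - K.sideIndicator a b c t.1 v =
      K.sideIndicator a b c s.1 w - K.sideIndicator a b c t.1 w := by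
  obtain rfl | hvw := eq_or_ne v w
  · rfl
  by_cases he : ({v, w} : Finset V) = {a, b}
  · have hv : v ∈ ({a, b} : Finset V) := he ▸ mem_insert_self v _
    have hw : w ∈ ({a, b} : Finset V) := he ▸ mem_insert_of_mem (mem_singleton_self w)
    have hsub {r : K.Triangle} (hv : v ∈ r.1) (hw : w ∈ r.1) : a ∈ r.1 ∧ b ∈ r.1 := by
      rw [← singleton_subset_iff (a := b), ← insert_subset_iff, ← he, insert_subset_iff,
        singleton_subset_iff]
      exact ⟨hv, hw⟩
    obtain ⟨has, hbs⟩ := hsub hvs hws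
    obtain ⟨hat, hbt⟩ := hsub hvt hwt
    simp only [hK.sideIndicator_eq_ite hc has hbs, hK.sideIndicator_eq_ite hc hat hbt, hv, hw]
  · rw [sideIndicator_eq_of_pair_ne hc hvw he hvs hws hvt hwt, sub_self,
      sideIndicator_eq_of_pair_ne hc hvw.symm (pair_comm v w ▸ he) hws hvs hwt hvt, sub_self]

lemma IsBorderedSurface.exists_sideIndicator_eq_of_adj (hK : K.IsBorderedSurface)
    (hc : K.IsTriangle a b c) (hz : K.IsTriangle a b z) (hcz : c ≠ z)
    (hst : K.dualGraph.Adj s t) (hne : s(s, t) ≠ s(hc.triangle, hz.triangle)) :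
    ∃ v ∈ s.1, v ∈ t.1 ∧ K.sideIndicator a b c s.1 v = K.sideIndicator a b c t.1 v := by
  obtain ⟨v, w, hvw, hinter⟩ := card_eq_two.1 (hst : #(s.1 ∩ t.1) = 2)
  obtain ⟨hvs, hvt⟩ := mem_inter.1 (hinter ▸ mem_insert_self v {w})
  obtain ⟨hws, hwt⟩ := mem_inter.1 (hinter ▸ mem_insert_of_mem (mem_singleton_self w))
  refine ⟨v, hvs, hvt, sideIndicator_eq_of_pair_ne hc hvw (fun he => ?_) hvs hws hvt hwt⟩
  rw [he] at hinter
  obtain ⟨has, hat⟩ := mem_inter.1 (hinter ▸ mem_insert_self a {b})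
  obtain ⟨hbs, hbt⟩ := mem_inter.1 (hinter ▸ mem_insert_of_mem (mem_singleton_self b))
  have eq_or_eq {r : K.Triangle} (ha : a ∈ r.1) (hb : b ∈ r.1) :
      r = hc.triangle ∨ r = hz.triangle := by
    obtain ⟨p, hp, h⟩ := exists_isTriangle_of_mem_of_mem r.2.1 r.2.2 ha hb hc.ne₁₂
    obtain rfl | rfl := hK.eq_or_eq hc hz h hcz
    · exact .inl (Subtype.ext hp)
    · exact .inr (Subtype.ext hp)
  obtain rfl | rfl := eq_or_eq has hbs <;> obtain rfl | rfl := eq_or_eq hat hbt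
  · exact hst.ne rfl
  · exact hne rfl
  · exact hne Sym2.eq_swap
  · exact hst.ne rfl

theorem IsBorderedSurface.isAcyclic_dualGraph (hK : K.IsBorderedSurface)
    (hlog : LogAcyclic K.realization) : K.dualGraph.IsAcyclic := by
  refine SimpleGraph.isAcyclic_iff_forall_adj_isBridge.2 fun s₀ t₀ h₀ hreach => ?_
  obtain ⟨a, b, c, z, hcz, hc, hz, rfl, rfl⟩ := exists_isTriangle_of_dualGraph_adj h₀
  obtain ⟨n, hn⟩ := exists_int_add_eq_of_logAcyclic (ι := K.Triangle) (T := Subtype.val)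
    (θ := fun t => K.sideIndicator a b c t.1) hlog (fun t => t.2.1)
    (fun σ hσ => hK.exists_subset_triangle hσ)
    fun s t v hvs hvt w hws hwt => hK.sideIndicator_sub_eq hc hvs hvt hws hwt
  have hn_const : n hc.triangle = n hz.triangle := by
    rw [SimpleGraph.reachable_iff_reflTransGen] at hreach
    refine hreach.trans_induction_on (motive := fun {s t} _ => n s = n t) (fun _ => rfl)
      (fun {s t} hst => ?_) fun _ _ => Eq.trans
    obtain ⟨hst, hne⟩ := SimpleGraph.deleteEdges_adj.1 hst
    obtain ⟨v, hvs, hvt, hθ⟩ := hK.exists_sideIndicator_eq_of_adj hc hz hcz hst hne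
    exact add_left_cancel (hθ ▸ hn s t v hvs hvt)
  have hjump := hn hc.triangle hz.triangle a (by simp) (by simp)
  simp only [hn_const, add_left_inj] at hjump
  rw [hK.sideIndicator_left (t := hc.triangle) hc (by simp) (by simp), if_pos (by simp),
    hK.sideIndicator_left (t := hz.triangle) hc (by simp) (by simp),
    if_neg (by simp [hc.ne₁₃.symm, hc.ne₂₃.symm, hcz])] at hjump
  exact one_ne_zero hjump

end LinkSide

end SComplex

/-! ### Ears -/

namespace SComplex

variable {V : Type} [DecidableEq V] {K : SComplex V} {a b c d : V}

/-- The triangle `abc` is an ear of `K`: its vertex `c` lies in no other triangle, and the opposite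
edge `ab` lies in exactly one other triangle `abd`. -/
structure IsEar (K : SComplex V) (a b c d : V) : Prop where
  isTriangle_left : K.IsTriangle a b c
  isTriangle_right : K.IsTriangle a b d
  ne : c ≠ d
  subset_of_mem : ∀ {σ}, σ ∈ K.faces → c ∈ σ → σ ⊆ {a, b, c}
  subset_or_subset : ∀ {σ}, σ ∈ K.faces → a ∈ σ → b ∈ σ → σ ⊆ {a, b, c} ∨ σ ⊆ {a, b, d}

/-- The subcomplex of the faces avoiding the vertex `c`. -/
def deleteVertex (K : SComplex V) (c : V) : SComplex V where
  faces := {σ ∈ K.faces | c ∉ σ}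
  nonempty_of_mem σ hσ := K.nonempty_of_mem σ (mem_filter.1 hσ).1
  down_closed σ hσ τ hτ hne :=
    mem_filter.2 ⟨K.down_closed σ (mem_filter.1 hσ).1 τ hτ hne,
      fun hc => (mem_filter.1 hσ).2 (hτ hc)⟩

lemma mem_deleteVertex {σ : Finset V} : σ ∈ (K.deleteVertex c).faces ↔ σ ∈ K.faces ∧ c ∉ σ :=
  mem_filter

lemma isTriangle_deleteVertex_iff {e : V} :
    (K.deleteVertex e).IsTriangle a b c ↔ K.IsTriangle a b c ∧ e ≠ a ∧ e ≠ b ∧ e ≠ c := by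
  refine ⟨fun h => ?_, fun ⟨h, ha, hb, hc⟩ =>
    ⟨h.ne₁₂, h.ne₁₃, h.ne₂₃, mem_deleteVertex.2 ⟨h.mem, by simp [ha, hb, hc]⟩⟩⟩
  obtain ⟨hmem, he⟩ := mem_deleteVertex.1 h.mem
  exact ⟨⟨h.ne₁₂, h.ne₁₃, h.ne₂₃, hmem⟩, by simpa using he⟩

lemma card_faces_deleteVertex_lt (hc : {c} ∈ K.faces) : #(K.deleteVertex c).faces < #K.faces :=
  card_lt_card (filter_ssubset.2 ⟨{c}, hc, by simp⟩)

namespace IsEar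

lemma swap (h : K.IsEar a b c d) : K.IsEar b a c d where
  isTriangle_left := h.isTriangle_left.swap₁₂
  isTriangle_right := h.isTriangle_right.swap₁₂
  ne := h.ne
  subset_of_mem hσ hc := insert_comm a b {c} ▸ h.subset_of_mem hσ hc
  subset_or_subset hσ hb ha := by
    rw [insert_comm b a, insert_comm b a]
    exact h.subset_or_subset hσ ha hb

lemma isTriangle_deleteVertex (h : K.IsEar a b c d) : (K.deleteVertex c).IsTriangle a b d :=
  isTriangle_deleteVertex_iff.2
    ⟨h.isTriangle_right, h.isTriangle_left.ne₁₃.symm, h.isTriangle_left.ne₂₃.symm, h.ne⟩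

lemma eq_of_isTriangle_deleteVertex (h : K.IsEar a b c d) {w : V}
    (hw : (K.deleteVertex c).IsTriangle a b w) : w = d := by
  obtain ⟨hK, -, -, hwc⟩ := isTriangle_deleteVertex_iff.1 hw
  have hw : w ∈ ({a, b, c} : Finset V) ∨ w ∈ ({a, b, d} : Finset V) :=
    (h.subset_or_subset hK.mem (by simp) (by simp)).imp (fun hs => hs (by simp))
      fun hs => hs (by simp)
  simpa [hK.ne₁₃.symm, hK.ne₂₃.symm, hwc.symm] using hw

lemma eq_or_eq_of_isTriangle (h : K.IsEar a b c d) {v w : V} (hv : K.IsTriangle v w c) :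
    v = a ∧ w = b ∨ v = b ∧ w = a := by
  have hs := h.subset_of_mem hv.mem (by simp)
  have hva := hs (by simp : v ∈ _)
  have hwa := hs (by simp : w ∈ _)
  simp only [mem_insert, mem_singleton, hv.ne₁₃, hv.ne₂₃, or_false] at hva hwa
  have := hv.ne₁₂
  grind

/-- A path in the link of `v` can only reach the ear vertex `c` and leave it again through the same
neighbour, so such detours can be cut off. -/
lemma reflTransGen_deleteVertex (h : K.IsEar a b c d) {v p q : V} (hv : v ≠ c) (hp : p ≠ c)
    (hpq : Relation.ReflTransGen (K.IsTriangle v) p q) :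
    (q ≠ c → Relation.ReflTransGen ((K.deleteVertex c).IsTriangle v) p q) ∧
    (q = c → ∀ u, K.IsTriangle v u c →
      Relation.ReflTransGen ((K.deleteVertex c).IsTriangle v) p u) := by
  have unique {u w : V} (hu : K.IsTriangle v u c) (hw : K.IsTriangle v w c) : u = w := by
    have := h.isTriangle_left.ne₁₂
    grind [h.eq_or_eq_of_isTriangle hu, h.eq_or_eq_of_isTriangle hw]
  induction hpq with
  | refl => exact ⟨fun _ => .refl, fun hpc => absurd hpc hp⟩
  | @tail r q _ hrq ih =>
    refine ⟨fun hq => ?_, ?_⟩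
    · obtain rfl | hr := eq_or_ne r c
      · exact ih.2 rfl q hrq.swap₂₃
      · exact (ih.1 hr).tail (isTriangle_deleteVertex_iff.2 ⟨hrq, hv.symm, hr.symm, hq.symm⟩)
    · rintro rfl u hu
      exact unique hu hrq ▸ ih.1 hrq.ne₂₃

end IsEar

section Leaf

variable [Fintype V]

lemma IsBorderedSurface.subset_of_forall_isTriangle (hK : K.IsBorderedSurface)
    (h : K.IsTriangle a b c) (ha : ∀ {w}, K.IsTriangle a c w → w = b)
    (hb : ∀ {w}, K.IsTriangle b c w → w = a) {σ : Finset V} (hσ : σ ∈ K.faces) (hc : c ∈ σ) :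
    σ ⊆ {a, b, c} := by
  intro u hu
  obtain rfl | huc := eq_or_ne u c
  · simp
  have hpath := hK.reflTransGen h.ne₁₃ huc h.swap₂₃.swap₁₂.pair_mem (pair_mem_of_mem hσ hc hu)
  have hu : u = a ∨ u = b := by
    clear hu huc
    induction hpath with
    | refl => exact .inl rfl
    | tail _ hstep ih =>
      obtain rfl | rfl := ih
      · exact .inr (ha hstep.swap₁₂)
      · exact .inl (hb hstep.swap₁₂)
  simp only [mem_insert, mem_singleton]
  tauto

lemma IsBorderedSurface.isEar (hK : K.IsBorderedSurface) (hc : K.IsTriangle a b c)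
    (hd : K.IsTriangle a b d) (hcd : c ≠ d)
    (hsub : ∀ {σ}, σ ∈ K.faces → c ∈ σ → σ ⊆ {a, b, c}) : K.IsEar a b c d where
  isTriangle_left := hc
  isTriangle_right := hd
  ne := hcd
  subset_of_mem := hsub
  subset_or_subset {σ} hσ ha hb := by
    obtain ⟨t, hσt⟩ := hK.exists_subset_triangle hσ
    obtain ⟨w, ht, hw⟩ :=
      exists_isTriangle_of_mem_of_mem t.2.1 t.2.2 (hσt ha) (hσt hb) hc.ne₁₂
    rw [ht] at hσt
    obtain rfl | rfl := hK.eq_or_eq hc hd hw hcd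
    · exact .inl hσt
    · exact .inr hσt

lemma IsBorderedSurface.exists_isEar_of_existsUnique_adj (hK : K.IsBorderedSurface) {t : K.Triangle}
    (ht : ∃! s, K.dualGraph.Adj t s) : ∃ a b c d, t.1 = {a, b, c} ∧ K.IsEar a b c d := by
  obtain ⟨s, hts, huniq⟩ := ht
  obtain ⟨a, b, c, d, hcd, hc, hd, rfl, rfl⟩ := exists_isTriangle_of_dualGraph_adj hts
  have eq_of_isTriangle {u v w : V} (h : K.IsTriangle u v c) (huv : h.triangle = hc.triangle)
      (hw : K.IsTriangle u c w) : w = v := by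
    by_contra hwv
    have hadj := h.swap₂₃.dualGraph_adj hw (Ne.symm hwv)
    rw [show h.swap₂₃.triangle = hc.triangle from
      huv ▸ Subtype.ext (congrArg (insert u) (pair_comm c v))] at hadj
    have hcd_mem : c ∈ ({a, b, d} : Finset V) :=
      (congrArg Subtype.val (huniq _ hadj)).subset (by simp : c ∈ ({u, c, w} : Finset V))
    simp [hc.ne₁₃.symm, hc.ne₂₃.symm, hcd] at hcd_mem
  refine ⟨a, b, c, d, rfl, hK.isEar hc hd hcd ?_⟩
  exact hK.subset_of_forall_isTriangle hc (eq_of_isTriangle hc rfl)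
    (eq_of_isTriangle hc.swap₁₂ (Subtype.ext (insert_comm b a _)))

lemma IsBorderedSurface.exists_isEar (hK : K.IsBorderedSurface) (hlog : LogAcyclic K.realization)
    {s t : K.Triangle} (hst : s ≠ t) :
    ∃ a b c d, ({a, b, c} : Finset V) ≠ s.1 ∧ K.IsEar a b c d := by
  classical
  have : Nontrivial K.Triangle := ⟨s, t, hst⟩
  have htree : K.dualGraph.IsTree :=
    ⟨⟨hK.dualGraph_preconnected⟩, hK.isAcyclic_dualGraph hlog⟩
  obtain ⟨u, v, huv, hu, hv⟩ := htree.exists_ne_and_degree_eq_one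
  obtain ⟨r, hrs, hr⟩ : ∃ r ≠ s, K.dualGraph.degree r = 1 := by
    obtain rfl | hus := eq_or_ne u s
    · exact ⟨v, huv.symm, hv⟩
    · exact ⟨u, hus, hu⟩
  obtain ⟨a, b, c, d, hrc, hear⟩ :=
    hK.exists_isEar_of_existsUnique_adj (SimpleGraph.degree_eq_one_iff_existsUnique_adj.1 hr)
  exact ⟨a, b, c, d, hrc ▸ fun h => hrs (Subtype.ext h), hear⟩

end Leaf

end SComplex

namespace SComplex

section Transfer

variable {V : Type} [DecidableEq V] {K : SComplex V} {a b c d v : V} {γ δ : ℝ} {p : V → ℝ}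

/-- The barycentric coordinates obtained from `p` by moving the masses `γ` to `c` and `δ` to `d`,
in each case taking one half from `a` and one half from `b`. -/
noncomputable def transfer (a b c d : V) (γ δ : ℝ) (p : V → ℝ) : V → ℝ :=
  p + γ • (Pi.single c 1 - (2⁻¹ : ℝ) • (Pi.single a 1 + Pi.single b 1)) +
    δ • (Pi.single d 1 - (2⁻¹ : ℝ) • (Pi.single a 1 + Pi.single b 1))

lemma transfer_zero : transfer a b c d 0 0 p = p := by
  simp [transfer]

lemma transfer_neg_transfer : transfer a b c d (-γ) (-δ) (transfer a b c d γ δ p) = p := by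
  unfold transfer
  module

lemma sum_transfer [Fintype V] : ∑ v, transfer a b c d γ δ p v = ∑ v, p v := by
  simp [transfer, sum_add_distrib, ← mul_sum]
  norm_num

lemma transfer_apply_of_notMem (ha : v ≠ a) (hb : v ≠ b) (hc : v ≠ c) (hd : v ≠ d) :
    transfer a b c d γ δ p v = p v := by
  simp [transfer, ha, hb, hc, hd]

namespace IsEar

lemma transfer_apply₁ (h : K.IsEar a b c d) :
    transfer a b c d γ δ p a = p a - (γ + δ) / 2 := by
  simp [transfer, h.isTriangle_left.ne₁₂, h.isTriangle_left.ne₁₃, h.isTriangle_right.ne₁₃]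
  ring

lemma transfer_apply₂ (h : K.IsEar a b c d) :
    transfer a b c d γ δ p b = p b - (γ + δ) / 2 := by
  simp [transfer, h.isTriangle_left.ne₁₂.symm, h.isTriangle_left.ne₂₃, h.isTriangle_right.ne₂₃]
  ring

lemma transfer_apply₃ (h : K.IsEar a b c d) : transfer a b c d γ δ p c = p c + γ := by
  simp [transfer, h.isTriangle_left.ne₁₃.symm, h.isTriangle_left.ne₂₃.symm, h.ne]

lemma transfer_apply₄ (h : K.IsEar a b c d) : transfer a b c d γ δ p d = p d + δ := by
  simp [transfer, h.isTriangle_right.ne₁₃.symm, h.isTriangle_right.ne₂₃.symm, h.ne.symm]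

lemma transfer_mem_stdSimplex [Fintype V] (h : K.IsEar a b c d) (hp : p ∈ stdSimplex ℝ V)
    (ha : γ + δ ≤ 2 * p a) (hb : γ + δ ≤ 2 * p b) (hc : 0 ≤ p c + γ) (hd : 0 ≤ p d + δ) :
    transfer a b c d γ δ p ∈ stdSimplex ℝ V := by
  refine ⟨fun v => ?_, sum_transfer.trans hp.2⟩
  obtain rfl | hva := eq_or_ne v a
  · rw [h.transfer_apply₁]
    linarith
  obtain rfl | hvb := eq_or_ne v b
  · rw [h.transfer_apply₂]
    linarith
  obtain rfl | hvc := eq_or_ne v c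
  · exact hc.trans_eq h.transfer_apply₃.symm
  obtain rfl | hvd := eq_or_ne v d
  · exact hd.trans_eq h.transfer_apply₄.symm
  · exact (hp.1 v).trans_eq (transfer_apply_of_notMem hva hvb hvc hvd).symm

end IsEar

/-- The map squeezing the two triangles `abc` and `abd` into the triangle `abd`. -/
noncomputable def squeeze (a b c d : V) (p : V → ℝ) : V → ℝ :=
  transfer a b c d (-p c) (min (p a) (p b)) p

/-- The inverse of `squeeze`, stretching the triangle `abd` over the two triangles `abc` and
`abd`. -/
noncomputable def stretch (a b c d : V) (q : V → ℝ) : V → ℝ :=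
  transfer a b c d (2 * min (q a) (q b) - min (q d) (2 * min (q a) (q b)))
    (-min (q d) (2 * min (q a) (q b))) q

lemma continuous_squeeze : Continuous (squeeze a b c d) := by
  unfold squeeze transfer
  fun_prop

lemma continuous_stretch : Continuous (stretch a b c d) := by
  unfold stretch transfer
  fun_prop

end Transfer

variable {V : Type} [DecidableEq V] [Fintype V] {K : SComplex V} {a b c d : V} {p q : V → ℝ}

lemma mem_realization_deleteVertex_iff :
    p ∈ (K.deleteVertex c).realization ↔ p ∈ K.realization ∧ p c = 0 := by
  rw [mem_realization_iff, mem_realization_iff, mem_deleteVertex, mem_supp, not_not]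
  tauto

namespace IsEar

lemma mem_closedSimplex_or (h : K.IsEar a b c d) (hp : p ∈ K.realization) :
    p ∈ closedSimplex {a, b, c} ∨ p ∈ closedSimplex {a, b, d} ∨
      p c = 0 ∧ min (p a) (p b) = 0 := by
  obtain ⟨hface, hp⟩ := mem_realization_iff.1 hp
  simp only [mem_closedSimplex_iff, hp, and_true]
  by_cases hc : p c = 0
  · by_cases ha : p a = 0
    · exact .inr (.inr ⟨hc, by rw [ha, min_eq_left (hp.1 b)]⟩)
    by_cases hb : p b = 0
    · exact .inr (.inr ⟨hc, by rw [hb, min_eq_right (hp.1 a)]⟩)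
    · exact (h.subset_or_subset hface (mem_supp.2 ha) (mem_supp.2 hb)).imp_right .inl
  · exact .inl (h.subset_of_mem hface (mem_supp.2 hc))

lemma mem_closedSimplex_or_of_deleteVertex (h : K.IsEar a b c d)
    (hp : p ∈ (K.deleteVertex c).realization) :
    p ∈ closedSimplex {a, b, d} ∨ min (p a) (p b) = 0 := by
  obtain ⟨hpK, hpc⟩ := mem_realization_deleteVertex_iff.1 hp
  obtain hp | hp | hp := h.mem_closedSimplex_or hpK
  · refine .inl ⟨fun v hv => ?_, hp.2⟩
    obtain rfl | hvc := eq_or_ne v c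
    · exact hpc
    · exact hp.1 v (by simp_all)
  · exact .inl hp
  · exact .inr hp.2

lemma squeeze_mem_closedSimplex (h : K.IsEar a b c d) (hp : p ∈ stdSimplex ℝ V)
    (hout : ∀ v, v ≠ a → v ≠ b → v ≠ c → v ≠ d → p v = 0) :
    squeeze a b c d p ∈ closedSimplex {a, b, d} := by
  have ha := min_le_left (p a) (p b)
  have hb := min_le_right (p a) (p b)
  have hab := le_min (hp.1 a) (hp.1 b)
  have hc := hp.1 c
  refine ⟨fun v hv => ?_, h.transfer_mem_stdSimplex hp (by linarith [hp.1 a]) (by linarith [hp.1 b])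
    (by linarith) (by linarith [hp.1 d])⟩
  simp only [mem_insert, mem_singleton, not_or] at hv
  obtain ⟨hva, hvb, hvd⟩ := hv
  obtain rfl | hvc := eq_or_ne v c
  · exact h.transfer_apply₃.trans (add_neg_cancel _)
  · exact (transfer_apply_of_notMem hva hvb hvc hvd).trans (hout v hva hvb hvc hvd)

lemma squeeze_mapsTo (h : K.IsEar a b c d) :
    Set.MapsTo (squeeze a b c d) K.realization (K.deleteVertex c).realization := by
  intro p hp
  have hstd := (mem_realization_iff.1 hp).2
  have of_out (hout : ∀ v, v ≠ a → v ≠ b → v ≠ c → v ≠ d → p v = 0) :=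
    closedSimplex_subset_realization h.isTriangle_deleteVertex.mem
      (h.squeeze_mem_closedSimplex hstd hout)
  obtain hp' | hp' | ⟨hpc, hmin⟩ := h.mem_closedSimplex_or hp
  · exact of_out fun v ha hb hc _ => hp'.1 v (by simp [ha, hb, hc])
  · exact of_out fun v ha hb _ hd => hp'.1 v (by simp [ha, hb, hd])
  · rw [squeeze, hpc, hmin, neg_zero, transfer_zero]
    exact mem_realization_deleteVertex_iff.2 ⟨hp, hpc⟩

lemma stretch_mem_stdSimplex (h : K.IsEar a b c d) (hq : q ∈ stdSimplex ℝ V) :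
    stretch a b c d q ∈ stdSimplex ℝ V := by
  have ha := min_le_left (q a) (q b)
  have hb := min_le_right (q a) (q b)
  have hab := le_min (hq.1 a) (hq.1 b)
  have hd := min_le_left (q d) (2 * min (q a) (q b))
  have hm := min_le_right (q d) (2 * min (q a) (q b))
  have hn : 0 ≤ min (q d) (2 * min (q a) (q b)) := le_min (hq.1 d) (by linarith)
  exact h.transfer_mem_stdSimplex hq (by linarith) (by linarith) (by linarith [hq.1 c])
    (by linarith)

lemma stretch_mapsTo (h : K.IsEar a b c d) :
    Set.MapsTo (stretch a b c d) (K.deleteVertex c).realization K.realization := by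
  intro q hq
  obtain ⟨hqK, hqc⟩ := mem_realization_deleteVertex_iff.1 hq
  have hstd := (mem_realization_iff.1 hqK).2
  obtain hq' | hmin := h.mem_closedSimplex_or_of_deleteVertex hq
  · obtain hle | hle := le_total (q d) (2 * min (q a) (q b))
    · refine closedSimplex_subset_realization h.isTriangle_left.mem
        ⟨fun v hv => ?_, h.stretch_mem_stdSimplex hstd⟩
      simp only [mem_insert, mem_singleton, not_or] at hv
      obtain rfl | hvd := eq_or_ne v d
      · rw [stretch, h.transfer_apply₄, min_eq_left hle, add_neg_cancel]
      · exact (transfer_apply_of_notMem hv.1 hv.2.1 hv.2.2 hvd).trans (hq'.1 v (by simp [hv, hvd]))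
    · refine closedSimplex_subset_realization h.isTriangle_right.mem
        ⟨fun v hv => ?_, h.stretch_mem_stdSimplex hstd⟩
      simp only [mem_insert, mem_singleton, not_or] at hv
      obtain rfl | hvc := eq_or_ne v c
      · rw [stretch, h.transfer_apply₃, min_eq_right hle, hqc, sub_self, add_zero]
      · exact (transfer_apply_of_notMem hv.1 hv.2.1 hvc hv.2.2).trans (hq'.1 v (by simp [hv]))
  · rwa [stretch, hmin, mul_zero, min_eq_right (hstd.1 d), sub_zero, neg_zero, transfer_zero]

lemma stretch_squeeze (h : K.IsEar a b c d) :
    Set.LeftInvOn (stretch a b c d) (squeeze a b c d) K.realization := by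
  intro p hp
  have hstd := (mem_realization_iff.1 hp).2
  have hcd : p c = 0 ∨ p d = 0 := by
    obtain hp | hp | hp := h.mem_closedSimplex_or hp
    · exact .inr (hp.1 d (by simp [h.isTriangle_right.ne₁₃.symm, h.isTriangle_right.ne₂₃.symm,
        h.ne.symm]))
    · exact .inl (hp.1 c (by simp [h.isTriangle_left.ne₁₃.symm, h.isTriangle_left.ne₂₃.symm, h.ne]))
    · exact .inl hp.1
  have hmin : 2 * min (squeeze a b c d p a) (squeeze a b c d p b) = p c + min (p a) (p b) := by
    rw [squeeze, h.transfer_apply₁, h.transfer_apply₂, min_sub_sub_right]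
    ring
  have hmin' : min (squeeze a b c d p d) (p c + min (p a) (p b)) = min (p a) (p b) := by
    rw [squeeze, h.transfer_apply₄]
    obtain hc | hd := hcd
    · rw [hc, zero_add, min_eq_right (le_add_of_nonneg_left (hstd.1 d))]
    · rw [hd, zero_add, min_eq_left (le_add_of_nonneg_left (hstd.1 c))]
  rw [stretch, hmin, hmin', squeeze, add_sub_cancel_right]
  nth_rw 1 [← neg_neg (p c)]
  exact transfer_neg_transfer

lemma squeeze_stretch (h : K.IsEar a b c d) :
    Set.LeftInvOn (squeeze a b c d) (stretch a b c d) (K.deleteVertex c).realization := by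
  intro q hq
  have hqc := (mem_realization_deleteVertex_iff.1 hq).2
  have hmin : min (stretch a b c d q a) (stretch a b c d q b) =
      min (q d) (2 * min (q a) (q b)) := by
    rw [stretch, h.transfer_apply₁, h.transfer_apply₂, min_sub_sub_right]
    ring
  have hc : stretch a b c d q c = 2 * min (q a) (q b) - min (q d) (2 * min (q a) (q b)) := by
    rw [stretch, h.transfer_apply₃, hqc, zero_add]
  rw [squeeze, hmin, hc, stretch]
  nth_rw 2 [← neg_neg (min (q d) _)]
  exact transfer_neg_transfer

/-- Removing an ear does not change the homeomorphism type. -/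
noncomputable def homeomorph (h : K.IsEar a b c d) :
    K.realization ≃ₜ (K.deleteVertex c).realization where
  toFun := h.squeeze_mapsTo.restrict
  invFun := h.stretch_mapsTo.restrict
  left_inv p := Subtype.ext (h.stretch_squeeze p.2)
  right_inv q := Subtype.ext (h.squeeze_stretch q.2)
  continuous_toFun := continuous_squeeze.restrict h.squeeze_mapsTo
  continuous_invFun := continuous_stretch.restrict h.stretch_mapsTo

end IsEar

end SComplex

/-! ### Discs -/

lemma nonempty_homeomorph_closedBall_of_convex {E F : Type*} [NormedAddCommGroup E]
    [NormedSpace ℝ E] [TopologicalSpace F] [AddCommGroup F] [Module ℝ F] {S : Set F}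
    (hS : IsCompact S) (hconv : Convex ℝ S) (l : F →ₗ[ℝ] E) (hl : ContinuousOn l S)
    (hinj : Set.InjOn l S) (hne : (interior (l '' S)).Nonempty) :
    Nonempty (S ≃ₜ Metric.closedBall (0 : E) 1) := by
  have : CompactSpace S := isCompact_iff_compactSpace.1 hS
  have hcompact := hS.image_of_continuousOn hl
  obtain ⟨h, -, hball, -⟩ := exists_homeomorph_image_interior_closure_frontier_eq_unitBall
    (hconv.linear_image l) hne hcompact.isBounded
  rw [hcompact.isClosed.closure_eq] at hball
  let e : S ≃ₜ l '' S := Continuous.homeoOfEquivCompactToT2 (f := Equiv.Set.imageOfInjOn l S hinj)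
    (hl.domRestrict.subtype_mk _)
  exact ⟨e.trans ((h.image _).trans (.setCongr hball))⟩

namespace SComplex

variable {V : Type} [DecidableEq V] [Fintype V] {a b c : V}

lemma eq_of_mem_closedSimplex_triple (hab : a ≠ b) (hac : a ≠ c) (hbc : b ≠ c) {p : V → ℝ}
    (hp : p ∈ closedSimplex {a, b, c}) :
    p = Pi.single a (p a) + Pi.single b (p b) + Pi.single c (1 - p a - p b) := by
  obtain ⟨hout, -, hsum⟩ := hp
  rw [← sum_subset (subset_univ {a, b, c}) fun v _ hv => hout v hv, sum_insert (by simp [hab, hac]),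
    sum_pair hbc] at hsum
  ext v
  obtain rfl | hva := eq_or_ne v a
  · simp [hab, hac]
  obtain rfl | hvb := eq_or_ne v b
  · simp [hva, hbc]
  obtain rfl | hvc := eq_or_ne v c
  · simp [hva, hvb]
    linarith
  · simp [hva, hvb, hvc, hout v (by simp [hva, hvb, hvc])]

lemma single_add_single_add_single_mem_closedSimplex {r s t : ℝ} (hr : 0 ≤ r) (hs : 0 ≤ s)
    (ht : 0 ≤ t) (h : r + s + t = 1) :
    Pi.single a r + Pi.single b s + Pi.single c t ∈ closedSimplex {a, b, c} := by
  refine ⟨fun v hv => ?_, ?_, by simp [sum_add_distrib, h]⟩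
  · simp only [mem_insert, mem_singleton, not_or] at hv
    simp [hv]
  · exact add_nonneg (α := V → ℝ) (add_nonneg (Pi.single_nonneg.2 hr) (Pi.single_nonneg.2 hs))
      (Pi.single_nonneg.2 ht)

lemma nonempty_closedSimplex_homeomorph_closedDisc (hab : a ≠ b) (hac : a ≠ c) (hbc : b ≠ c) :
    Nonempty (closedSimplex {a, b, c} ≃ₜ ClosedDisc) := by
  let l : (V → ℝ) →ₗ[ℝ] ℝ × ℝ := (LinearMap.proj a).prod (LinearMap.proj b)
  have hcompact : IsCompact (closedSimplex {a, b, c}) :=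
    (isCompact_stdSimplex ℝ V).of_isClosed_subset (isClosed_closedSimplex _) fun _ hp => hp.2
  refine nonempty_homeomorph_closedBall_of_convex hcompact (convex_closedSimplex _) l
    (by fun_prop) (fun p hp q hq hpq => ?_) ?_
  · obtain ⟨ha : p a = q a, hb : p b = q b⟩ := Prod.ext_iff.1 hpq
    rw [eq_of_mem_closedSimplex_triple hab hac hbc hp,
      eq_of_mem_closedSimplex_triple hab hac hbc hq, ha, hb]
  · have hopen : IsOpen {x : ℝ × ℝ | 0 < x.1 ∧ 0 < x.2 ∧ x.1 + x.2 < 1} := by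
      simp only [Set.ofPred_and]
      exact (isOpen_lt continuous_const continuous_fst).inter
        ((isOpen_lt continuous_const continuous_snd).inter
          (isOpen_lt (continuous_fst.add continuous_snd) continuous_const))
    refine ⟨(1 / 3, 1 / 3), interior_maximal ?_ hopen (by norm_num)⟩
    rintro ⟨r, s⟩ ⟨hr : 0 < r, hs : 0 < s, hrs : r + s < 1⟩
    exact ⟨_, single_add_single_add_single_mem_closedSimplex hr.le hs.le (by linarith)
      (by ring : r + s + (1 - r - s) = 1), by simp [l, hab, hac, hbc, hab.symm]⟩

lemma IsDisc.logAcyclic {K : SComplex V} (h : K.IsDisc) : LogAcyclic K.realization := by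
  obtain ⟨e⟩ := h
  have : Nonempty ClosedDisc := ⟨0, Metric.mem_closedBall_self zero_le_one⟩
  exact embeddingInvariant_logAcyclic.of_homeomorph e.symm (.of_convex (convex_closedBall 0 1))

end SComplex

/-! ### Collapsing a logarithmically acyclic piece -/

namespace SComplex

variable {V : Type} [DecidableEq V]

lemma NoInteriorVertices.exists_existsUnique {M : SComplex V} (h : M.NoInteriorVertices) {v : V}
    (hv : {v} ∈ M.faces) : ∃ d, ∃! t, M.IsTriangle v d t := by
  obtain ⟨e, -, hve, he₂, he₁⟩ := h v (le_sup (f := id) hv (mem_singleton_self v))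
  obtain ⟨d, hvd, rfl⟩ : ∃ d, v ≠ d ∧ e = {v, d} := by
    obtain ⟨d, hd⟩ := card_eq_one.1 ((card_erase_of_mem hve).trans (by rw [he₂]))
    have hde : d ∈ e.erase v := hd ▸ mem_singleton_self d
    exact ⟨d, (ne_of_mem_erase hde).symm, by rw [← insert_erase hve, hd]⟩
  obtain ⟨τ, hτ, huniq⟩ := card_eq_one_iff_existsUnique.1 he₁
  simp only [mem_filter, insert_subset_iff, singleton_subset_iff] at hτ huniq
  obtain ⟨hτM, hτ₃, hvτ, hdτ⟩ := hτ
  obtain ⟨t, rfl, ht⟩ := exists_isTriangle_of_mem_of_mem hτM hτ₃ hvτ hdτ hvd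
  refine ⟨d, t, ht, fun t' ht' => ?_⟩
  have htt' := (huniq _ ⟨ht'.mem, ht'.card_eq_three, by simp, by simp⟩).subset
    (by simp : t' ∈ _)
  simpa [ht'.ne₁₃.symm, ht'.ne₂₃.symm] using htt'

lemma SeparationAlong.exists_edgeCut {M M₁ M₂ : SComplex V} {e : Finset V}
    (h : M.SeparationAlong M₁ M₂ e) (he : #e = 2) : ∃ x y, EdgeCut M M₁ M₂ x y := by
  obtain ⟨hunion, hinter, h₁, h₂⟩ := h
  obtain ⟨x, y, hxy, rfl⟩ := card_eq_two.1 he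
  have mem_inter_iff {σ : Finset V} : σ ∈ M₁.faces ∧ σ ∈ M₂.faces ↔ σ ⊆ {x, y} ∧ σ ≠ ∅ := by
    rw [← mem_inter, hinter, mem_filter, mem_powerset]
  have hpair := mem_inter_iff.2 ⟨Subset.rfl, insert_ne_empty x {y}⟩
  exact ⟨x, y, hxy, by simp [← hunion], fun hσ₁ hσ₂ => (mem_inter_iff.1 ⟨hσ₁, hσ₂⟩).1, hpair.1,
    hpair.2, h₁, h₂⟩

namespace EdgeCut

variable {M M₁ M₂ : SComplex V} {x y z c : V}

lemma notMem_right (h : EdgeCut M M₁ M₂ x y) (hx : c ≠ x) (hy : c ≠ y) (hc : {c} ∈ M₁.faces)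
    {σ : Finset V} (hσ : σ ∈ M₂.faces) : c ∉ σ := fun hcσ => by
  have := h.subset_pair hc (singleton_mem_of_mem hσ hcσ)
  simp [hx, hy] at this

lemma deleteVertex (h : EdgeCut M M₁ M₂ x y) (hz : M₁.IsTriangle x y z)
    (hc : {c} ∈ M₁.faces) (hcz : c ∉ ({x, y, z} : Finset V)) :
    EdgeCut (M.deleteVertex c) (M₁.deleteVertex c) M₂ x y := by
  simp only [mem_insert, mem_singleton, not_or] at hcz
  obtain ⟨hcx, hcy, hcz⟩ := hcz
  exact {
    ne := h.ne
    mem_iff := fun {σ} => by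
      have := fun hσ : σ ∈ M₂.faces => h.notMem_right hcx hcy hc hσ
      rw [mem_deleteVertex, mem_deleteVertex, h.mem_iff]
      tauto
    subset_pair := fun hσ => h.subset_pair (mem_deleteVertex.1 hσ).1
    pair_mem_left := mem_deleteVertex.2 ⟨h.pair_mem_left, by simp [hcx, hcy]⟩
    pair_mem_right := h.pair_mem_right
    exists_card_left := ⟨_, mem_deleteVertex.2 ⟨hz.mem, by simp [hcx, hcy, hcz]⟩,
      hz.card_eq_three⟩
    exists_card_right := h.exists_card_right }

lemma faces_deleteVertex (h : EdgeCut M M₁ M₂ x y) (hz : M₁.IsTriangle x y z)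
    (hsub : ∀ {σ}, σ ∈ M₁.faces → σ ⊆ {x, y, z}) : (M.deleteVertex z).faces = M₂.faces := by
  ext σ
  rw [mem_deleteVertex, h.mem_iff]
  refine ⟨fun ⟨hσ, hzσ⟩ => hσ.elim (fun hσ₁ => ?_) id, fun hσ =>
    ⟨.inr hσ, h.notMem_right hz.ne₁₃.symm hz.ne₂₃.symm (singleton_mem_of_mem hz.mem (by simp)) hσ⟩⟩
  refine M₂.down_closed _ h.pair_mem_right σ (fun v hv => ?_) (M₁.nonempty_of_mem σ hσ₁)
  have hvz : v ≠ z := fun hvz => hzσ (hvz ▸ hv)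
  simpa [hvz] using hsub hσ₁ hv

end EdgeCut

variable [Fintype V]

namespace IsEar

variable {K : SComplex V} {a b c d : V}

lemma nonempty_realization (h : K.IsEar a b c d) : Nonempty K.realization :=
  ⟨⟨_, single_mem_realization h.isTriangle_left.singleton_mem⟩⟩

lemma isBorderedSurface_deleteVertex (h : K.IsEar a b c d) (hK : K.IsBorderedSurface) :
    (K.deleteVertex c).IsBorderedSurface where
  isPreconnected :=
    have := h.nonempty_realization
    embeddingInvariant_isPreconnected.of_homeomorph h.homeomorph hK.isPreconnected
  card_le_three hσ := hK.card_le_three (mem_deleteVertex.1 hσ).1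
  eq_or_eq hu hv hw := hK.eq_or_eq (isTriangle_deleteVertex_iff.1 hu).1
    (isTriangle_deleteVertex_iff.1 hv).1 (isTriangle_deleteVertex_iff.1 hw).1
  reflTransGen {v p q} hp hq hvp hvq := by
    obtain ⟨hvp, hcp⟩ := mem_deleteVertex.1 hvp
    obtain ⟨hvq, hcq⟩ := mem_deleteVertex.1 hvq
    simp only [mem_insert, mem_singleton, not_or] at hcp hcq
    exact (h.reflTransGen_deleteVertex (Ne.symm hcp.1) (Ne.symm hcp.2)
      (hK.reflTransGen hp hq hvp hvq)).1 (Ne.symm hcq.2)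
  exists_existsUnique {v} hv := by
    obtain ⟨hv, hcv⟩ := mem_deleteVertex.1 hv
    obtain rfl | hva := eq_or_ne v a
    · exact ⟨b, d, h.isTriangle_deleteVertex, fun _ => h.eq_of_isTriangle_deleteVertex⟩
    obtain rfl | hvb := eq_or_ne v b
    · exact ⟨a, d, h.swap.isTriangle_deleteVertex, fun _ => h.swap.eq_of_isTriangle_deleteVertex⟩
    obtain ⟨e, t, ht, huniq⟩ := hK.exists_existsUnique hv
    have hc : c ∉ ({v, e, t} : Finset V) := fun hc => by
      have hvabc := h.subset_of_mem ht.mem hc (mem_insert_self v _)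
      simp only [mem_insert, mem_singleton, hva, hvb, false_or] at hvabc
      exact hcv (mem_singleton.2 hvabc.symm)
    exact ⟨e, t, ⟨ht.ne₁₂, ht.ne₁₃, ht.ne₂₃, mem_deleteVertex.2 ⟨ht.mem, hc⟩⟩,
      fun t' ht' => huniq t' (isTriangle_deleteVertex_iff.1 ht').1⟩

end IsEar

namespace EdgeCut

variable {M M₁ M₂ : SComplex V} {x y z a b c d : V}

lemma isEar_of_left (h : EdgeCut M M₁ M₂ x y) (hM : M.IsBorderedSurface)
    (hear : M₁.IsEar a b c d) (hx : c ≠ x) (hy : c ≠ y) : M.IsEar a b c d :=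
  hM.isEar (h.isTriangle_of_left hear.isTriangle_left)
    (h.isTriangle_of_left hear.isTriangle_right) hear.ne fun hσ hc => hear.subset_of_mem
      (h.mem_left_of_mem hx hy (singleton_mem_of_mem hear.isTriangle_left.mem (by simp)) hσ hc) hc

/-- If the piece is a single triangle then it is an ear of `M`. -/
lemma isDisc_and_homeomorph_of_subset (h : EdgeCut M M₁ M₂ x y) (hM : M.IsBorderedSurface)
    (hz : M₁.IsTriangle x y z) (hsub : ∀ {σ}, σ ∈ M₁.faces → σ ⊆ {x, y, z}) :
    M₁.IsDisc ∧ Nonempty (M.realization ≃ₜ M₂.realization) := by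
  obtain ⟨z', hz'⟩ := h.symm.exists_isTriangle_left hM
  have hear : M.IsEar x y z z' := hM.isEar (h.isTriangle_of_left hz)
    (h.symm.isTriangle_of_left hz') (h.ne_of_isTriangle hz hz') fun hσ hzσ =>
      hsub (h.mem_left_of_mem hz.ne₁₃.symm hz.ne₂₃.symm (singleton_mem_of_mem hz.mem (by simp))
        hσ hzσ)
  have hM₁ : M₁.realization = closedSimplex {x, y, z} := by
    refine Set.Subset.antisymm (fun p hp => ?_) (closedSimplex_subset_realization hz.mem)
    obtain ⟨hface, hstd⟩ := mem_realization_iff.1 hp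
    exact mem_closedSimplex_iff.2 ⟨hsub hface, hstd⟩
  have hM₂ : (M.deleteVertex z).realization = M₂.realization := by
    simp only [realization, h.faces_deleteVertex hz hsub]
  obtain ⟨e⟩ := nonempty_closedSimplex_homeomorph_closedDisc hz.ne₁₂ hz.ne₁₃ hz.ne₂₃
  exact ⟨⟨(Homeomorph.setCongr hM₁).trans e⟩, ⟨hear.homeomorph.trans (.setCongr hM₂)⟩⟩

/-- Remove the triangles of the piece one at a time, each being an ear of both the piece and `M`. -/
theorem isDisc_and_homeomorph (h : EdgeCut M M₁ M₂ x y) (hM : M.IsBorderedSurface)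
    (hlog : LogAcyclic M₁.realization) :
    M₁.IsDisc ∧ Nonempty (M.realization ≃ₜ M₂.realization) := by
  induction hn : #M₁.faces using Nat.strong_induction_on generalizing M M₁ with
  | _ n ih =>
  subst hn
  have hM₁ := h.isBorderedSurface_left hM
  obtain ⟨z, hz⟩ := h.exists_isTriangle_left hM
  by_cases hall : ∀ t : M₁.Triangle, hz.triangle = t
  · refine h.isDisc_and_homeomorph_of_subset hM hz fun hσ => ?_
    obtain ⟨t, ht⟩ := hM₁.exists_subset_triangle hσ
    rwa [← hall t] at ht
  push Not at hall
  obtain ⟨t, ht⟩ := hall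
  obtain ⟨a, b, c, d, hne, hear₁⟩ := hM₁.exists_isEar hlog ht
  have hc : {c} ∈ M₁.faces := singleton_mem_of_mem hear₁.isTriangle_left.mem (by simp)
  have hcz : c ∉ ({x, y, z} : Finset V) := fun hc => hne <| .symm <|
    eq_of_subset_of_card_le (hear₁.subset_of_mem hz.mem hc)
      (by rw [hear₁.isTriangle_left.card_eq_three, hz.card_eq_three])
  have hear : M.IsEar a b c d := h.isEar_of_left hM hear₁ (by rintro rfl; simp at hcz)
    (by rintro rfl; simp at hcz)
  have := hear₁.nonempty_realization
  obtain ⟨⟨e₁⟩, ⟨e⟩⟩ := ih _ (card_faces_deleteVertex_lt hc) (h.deleteVertex hz hc hcz)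
    (hear.isBorderedSurface_deleteVertex hM)
    (embeddingInvariant_logAcyclic.of_homeomorph hear₁.homeomorph hlog) rfl
  exact ⟨⟨hear₁.homeomorph.trans e₁⟩, ⟨hear.homeomorph.trans e⟩⟩

theorem isDisc_and_isMobius (h : EdgeCut M M₁ M₂ x y) (hM : M.IsMobius)
    (hsurf : M.IsBorderedSurface) (hlog : LogAcyclic M₁.realization) :
    M₁.IsDisc ∧ M₂.IsMobius ∧ ¬ M₁.IsMobius ∧ ¬ M₂.IsDisc := by
  obtain ⟨hdisc, ⟨e⟩⟩ := h.isDisc_and_homeomorph hsurf hlog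
  have hmob : M₂.IsMobius := hM.map e.symm.trans
  exact ⟨hdisc, hmob, fun h₁ => h₁.mobiusLike.not_logAcyclic hlog,
    fun h₂ => hmob.mobiusLike.not_logAcyclic h₂.logAcyclic⟩

end EdgeCut

end SComplex

/-- if a triangulated Möbius strip `M` with no interior vertices is
separated by an interior edge `e = xy` into two pieces `M₁, M₂`, then exactly one
of the pieces is a disc and the other is again a Möbius strip. -/
theorem cut_edge_of_mobius {V : Type} [DecidableEq V] [Fintype V]
    (M M₁ M₂ : SComplex V) (e : Finset V)
    (hM : M.IsMobius) (hniv : M.NoInteriorVertices)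
    (he : M.InteriorEdge e) (hsep : M.SeparationAlong M₁ M₂ e) :
    (M₁.IsDisc ∧ M₂.IsMobius ∧ ¬ M₁.IsMobius ∧ ¬ M₂.IsDisc) ∨
    (M₁.IsMobius ∧ M₂.IsDisc ∧ ¬ M₁.IsDisc ∧ ¬ M₂.IsMobius) := by
  obtain ⟨x, y, hcut⟩ := hsep.exists_edgeCut he.2.1
  have hsurf := hM.isBorderedSurface hniv.exists_existsUnique
  obtain hlog | hlog :=
    hcut.logAcyclic_or_logAcyclic hsurf.isPreconnected hM.mobiusLike.logRankLEOne
  · exact .inl (hcut.isDisc_and_isMobius hM hsurf hlog)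
  · obtain ⟨hdisc, hmob, hnot_mob, hnot_disc⟩ := hcut.symm.isDisc_and_isMobius hM hsurf hlog
    exact .inr ⟨hmob, hdisc, hnot_disc, hnot_mob⟩
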